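/- arXiv:math/0103178 — 4 statements merged into one kernel-verified Lean document; each statement's English description precedes it below -/
import Mathlib

section
/- The set Ω₂ = {v ∈ [1,∞) : v = v(G) for some group G with respect to some generating set of two elements} has the cardinality of the continuum, i.e. #Ω₂ = 2^{ℵ₀}. -/
/-- The ball of radius `n` in a group `G` with respect to a generating set `S`
(products of at most `n` elements of `S ∪ S⁻¹`). -/
def ball {G : Type*} [Group G] (S : Set G) (n : ℕ) : Set G :=
  {g | ∃ w : List G, (∀ x ∈ w, x ∈ S ∨ x⁻¹ ∈ S) ∧ w.length ≤ n ∧ w.prod = g}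

/-- The exponential growth rate `v(G) = lim (#B_G(n))^(1/n)` of a group with
respect to a generating set `S` (the limit exists by submultiplicativity, so we
may express it as a `limsup`). -/
noncomputable def growthRate {G : Type*} [Group G] (S : Set G) : ℝ :=
  Filter.limsup (fun n : ℕ => (Nat.card (ball S n) : ℝ) ^ ((1 : ℝ) / n)) Filter.atTop

/-!
Since `Ω₂ ⊆ ℝ`, only a lower bound is needed, and it comes from a strictly monotone map
`ℝ → Ω₂`. Let `F` be a free group and for a normal subgroup `R` let `R²` (`squareClosure R`) be the
normal subgroup generated by the squares of elements of `R`.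

*Strict monotonicity.* Let `R < R'` be normal in `F`, let `a` be a free generator with `a² ∈ R` and
`a ∉ R'`, and let `F ⧸ R'²` be infinite. Then `F ⧸ R²` grows strictly faster than `F ⧸ R'²`. Indeed,
a geodesic word of length `l` modulo `R'²` never leaves a point of `F ⧸ R'` twice through the same
letter, because such a word could be shortened by reversing the loop in between. So there are
`l / D` positions along it, with `D` independent of the word, whose values in `F ⧸ R'` lie in
distinct cosets of `⟨a⟩`. For `r ∈ R' \ R`, the commutator `⁅r, a²⁆` of elements of `R'` is trivial
modulo `R'²`. Inserting it at any `m` of these positions does not change the value modulo `R'²`,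
while modulo `R²` different choices of positions give different values, as seen in the lamps of the
wreath product `C₂ ≀ (F ⧸ R)`. Hence every element of the sphere of radius `l` in `F ⧸ R'²` has at
least `(l / D).choose m` preimages in the ball of radius `l + L m` in `F ⧸ R²`, where `L` is the
length of the inserted word, and summing over `m` with suitable weights gives an exponential gain.

*A chain of order type `ℝ`.* Let `a` act on `ℤ/n` as the transposition `(0 1)` and `b` as the
translation by `1`, with `ℤ/0 = ℤ`. For a prime `p`, the commutator of `a` and its conjugate by
`b ^ (3 p + 1)` acts trivially on `ℤ` and on `ℤ/3q` for every prime `q ≠ p`, because the two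
transpositions have disjoint supports, but nontrivially on `ℤ/3p`. So the subgroup acting trivially
on `ℤ` and on `ℤ/3p` for all `p` in a set `A` of primes decreases strictly as `A` increases.
Indexing the primes by the rationals and letting `A` run through the lower cuts gives a chain
indexed by `ℝ`.
-/

namespace GroupGrowth

open FreeGroup (closure_range_of inv_mk invRev invRev_length lift lift_mk mk mul_mk of)
open Filter hiding mk
open Asymptotics Topology
open Finset hiding mk
open scoped Pointwise commutatorElement

/-! ### Exponential rates of sequences -/

/-- The exponential growth rate `limsup (u n) ^ (1 / n)` of a sequence of natural numbers. -/
noncomputable def expRate (u : ℕ → ℕ) : ℝ :=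
  limsup (fun n : ℕ => (u n : ℝ) ^ ((1 : ℝ) / n)) atTop

section ExpRate

variable {u : ℕ → ℕ} {C : ℕ}

lemma natCast_rpow_one_div_le_iff {n : ℕ} (hn : n ≠ 0) (m : ℕ) {x : ℝ} (hx : 0 ≤ x) :
    (m : ℝ) ^ ((1 : ℝ) / n) ≤ x ↔ (m : ℝ) ≤ x ^ n := by
  rw [one_div, Real.rpow_inv_le_iff_of_pos m.cast_nonneg hx (by positivity), Real.rpow_natCast]

lemma isBoundedUnder_rpow_one_div (hu : ∀ n, u n ≤ C ^ n) :
    IsBoundedUnder (· ≤ ·) atTop fun n : ℕ => (u n : ℝ) ^ ((1 : ℝ) / n) := by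
  refine isBoundedUnder_of_eventually_le (a := (C : ℝ)) ?_
  filter_upwards [eventually_ne_atTop 0] with n hn
  rw [natCast_rpow_one_div_le_iff hn _ C.cast_nonneg]
  exact_mod_cast hu n

lemma isCoboundedUnder_rpow_one_div (u : ℕ → ℕ) :
    IsCoboundedUnder (· ≤ ·) atTop fun n : ℕ => (u n : ℝ) ^ ((1 : ℝ) / n) :=
  isCoboundedUnder_le_of_le atTop (x := 0) fun _ => by positivity

lemma one_le_expRate (hpos : ∀ n, 0 < u n) (hu : ∀ n, u n ≤ C ^ n) : 1 ≤ expRate u :=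
  le_limsup_of_frequently_le
    (Frequently.of_forall fun n =>
      Real.one_le_rpow (by exact_mod_cast hpos n) (by positivity))
    (isBoundedUnder_rpow_one_div hu)

lemma exists_le_mul_pow_of_expRate_lt (hu : ∀ n, u n ≤ C ^ n) {ν : ℝ} (hν : 0 < ν)
    (h : expRate u < ν) : ∃ K : ℝ, ∀ n, (u n : ℝ) ≤ K * ν ^ n := by
  have hO : (fun n => (u n : ℝ)) =O[atTop] fun n => ν ^ n := by
    refine IsBigO.of_bound 1 ?_
    filter_upwards [eventually_lt_of_limsup_lt h (isBoundedUnder_rpow_one_div hu),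
      eventually_ne_atTop 0] with n hlt hn
    rw [Real.norm_natCast, Real.norm_of_nonneg (by positivity), one_mul]
    exact (natCast_rpow_one_div_le_iff hn _ hν.le).1 hlt.le
  obtain ⟨K, -, hbound⟩ := bound_of_isBigO_nat_atTop hO
  refine ⟨K, fun n => ?_⟩
  simpa [abs_of_pos hν] using hbound (x := n) (by positivity)

lemma expRate_le_of_isBigO {θ : ℝ} (hθ : 0 ≤ θ) (k : ℕ)
    (h : (fun n => (u n : ℝ)) =O[atTop] fun n => (n : ℝ) ^ k * θ ^ n) : expRate u ≤ θ := by
  refine le_of_forall_gt_imp_ge_of_dense fun θ' hθ' => ?_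
  have hlittle : (fun n => (u n : ℝ)) =o[atTop] fun n => θ' ^ n :=
    h.trans_isLittleO <|
      isLittleO_pow_const_mul_const_pow_const_pow_of_norm_lt k (by rwa [Real.norm_of_nonneg hθ])
  apply limsup_le_of_le (isCoboundedUnder_rpow_one_div u)
  filter_upwards [hlittle.bound one_pos, eventually_ne_atTop 0] with n hle hn
  have hθ'0 : 0 ≤ θ' := hθ.trans hθ'.le
  rw [natCast_rpow_one_div_le_iff hn _ hθ'0]
  simpa [abs_of_nonneg hθ'0] using hle

lemma expRate_sum_le {s : ℕ → ℕ} {K θ : ℝ} (hθ : 0 ≤ θ)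
    (hs : ∀ l, (s l : ℝ) ≤ K * (l + 1) * θ ^ l)
    (hunbdd : ¬ BddAbove (Set.range fun n => ∑ l ∈ range (n + 1), s l)) :
    expRate (fun n => ∑ l ∈ range (n + 1), s l) ≤ θ := by
  have hK : 0 ≤ K := by simpa using (Nat.cast_nonneg (s 0)).trans (hs 0)
  rcases lt_or_ge θ 1 with hθ1 | hθ1
  · have hsum : Summable fun l : ℕ => (s l : ℝ) := by
      refine Summable.of_nonneg_of_le (fun _ => Nat.cast_nonneg _) hs ?_
      have hnorm : ‖θ‖ < 1 := by rwa [Real.norm_of_nonneg hθ]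
      refine (((summable_pow_mul_geometric_of_norm_lt_one 1 hnorm).add
        (summable_geometric_of_norm_lt_one hnorm)).mul_left K).congr fun l => ?_
      ring
    refine absurd ⟨⌊∑' l, (s l : ℝ)⌋₊, ?_⟩ hunbdd
    rintro _ ⟨n, rfl⟩
    refine Nat.le_floor ?_
    push_cast
    exact hsum.sum_le_tsum _ fun _ _ => Nat.cast_nonneg _
  · refine expRate_le_of_isBigO hθ 2 (IsBigO.of_bound (4 * K) ?_)
    filter_upwards [eventually_ge_atTop 1] with n hn
    have hn1 : (1 : ℝ) ≤ n := by exact_mod_cast hn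
    rw [Real.norm_natCast, Real.norm_of_nonneg (by positivity)]
    push_cast
    calc ∑ l ∈ range (n + 1), (s l : ℝ)
        ≤ ∑ _l ∈ range (n + 1), K * (n + 1) * θ ^ n := by
          refine sum_le_sum fun l hl => (hs l).trans ?_
          have hln : l ≤ n := Nat.lt_succ_iff.1 (mem_range.1 hl)
          gcongr
      _ = K * (n + 1) ^ 2 * θ ^ n := by
          rw [sum_const, card_range, nsmul_eq_mul]
          push_cast
          ring
      _ ≤ K * (n + n) ^ 2 * θ ^ n := by gcongr
      _ = 4 * K * (n ^ 2 * θ ^ n) := by ring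

lemma mul_one_add_inv_pow_le {s K x : ℝ} {j : ℕ} (hx : 0 < x)
    (h : ∀ m, s * j.choose m ≤ K * x ^ m) : s * (1 + x⁻¹) ^ j ≤ (j + 1) * K := by
  calc s * (1 + x⁻¹) ^ j = ∑ m ∈ range (j + 1), s * j.choose m * (x⁻¹) ^ m := by
        rw [add_comm, add_pow, mul_sum]
        exact sum_congr rfl fun m _ => by ring
    _ ≤ ∑ _m ∈ range (j + 1), K := by
        refine sum_le_sum fun m _ => ?_
        rw [inv_pow, ← div_eq_mul_inv, div_le_iff₀ (by positivity)]
        exact h m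
    _ = (j + 1) * K := by
        rw [sum_const, card_range, nsmul_eq_mul]
        push_cast
        ring

/-- The binomial gain is turned into an exponential one by weighting the `m`-th inequality with
`ν ^ (-L m)` and summing over `m`. -/
lemma le_mul_div_pow_of_mul_choose_le {s : ℕ → ℕ} {D L : ℕ} (hD : 0 < D)
    (h : ∀ l m, s l * (l / D).choose m ≤ u (l + L * m)) {K ν η : ℝ} (hν : 0 < ν) (hη : 1 ≤ η)
    (hηD : η ^ D = 1 + (ν ^ L)⁻¹) (hu : ∀ n, (u n : ℝ) ≤ K * ν ^ n) (l : ℕ) :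
    (s l : ℝ) ≤ K * η ^ D * (l + 1) * (ν / η) ^ l := by
  have hK : 0 ≤ K := by simpa using (Nat.cast_nonneg (u 0)).trans (hu 0)
  have hbinom : (s l : ℝ) * (η ^ D) ^ (l / D) ≤ ((l / D : ℕ) + 1) * (K * ν ^ l) := by
    rw [hηD]
    refine mul_one_add_inv_pow_le (by positivity) fun m => ?_
    calc (s l : ℝ) * (l / D).choose m ≤ u (l + L * m) := by exact_mod_cast h l m
      _ ≤ K * ν ^ (l + L * m) := hu _
      _ = K * ν ^ l * (ν ^ L) ^ m := by rw [pow_add, pow_mul, mul_assoc]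
  have hpow : η ^ l ≤ η ^ D * (η ^ D) ^ (l / D) := by
    rw [← pow_mul, ← pow_add]
    exact pow_le_pow_right₀ hη (by have := Nat.lt_mul_div_succ l hD; lia)
  rw [div_pow, ← mul_div_assoc, le_div_iff₀ (by positivity)]
  calc (s l : ℝ) * η ^ l ≤ s l * (η ^ D * (η ^ D) ^ (l / D)) := by gcongr
    _ = η ^ D * (s l * (η ^ D) ^ (l / D)) := by ring
    _ ≤ η ^ D * (((l / D : ℕ) + 1) * (K * ν ^ l)) := by gcongr
    _ ≤ η ^ D * ((l + 1) * (K * ν ^ l)) := by gcongr; exact Nat.div_le_self l D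
    _ = K * η ^ D * (l + 1) * ν ^ l := by ring

theorem expRate_sum_lt_of_mul_choose_le {s : ℕ → ℕ} {D L : ℕ} (hD : 0 < D)
    (hpos : ∀ n, 0 < u n) (hu : ∀ n, u n ≤ C ^ n)
    (hunbdd : ¬ BddAbove (Set.range fun n => ∑ l ∈ range (n + 1), s l))
    (h : ∀ l m, s l * (l / D).choose m ≤ u (l + L * m)) :
    expRate (fun n => ∑ l ∈ range (n + 1), s l) < expRate u := by
  set v := expRate u
  have hv : 0 < v := one_pos.trans_le (one_le_expRate hpos hu)
  let η : ℝ → ℝ := fun ν => (1 + (ν ^ L)⁻¹) ^ (D : ℝ)⁻¹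
  have one_lt_η : ∀ ν > 0, 1 < η ν := fun ν hν =>
    Real.one_lt_rpow (lt_add_of_pos_right _ (by positivity)) (by positivity)
  have rate_le : ∀ ν > v, expRate (fun n => ∑ l ∈ range (n + 1), s l) ≤ ν / η ν := by
    intro ν hν
    have hν0 : 0 < ν := hv.trans hν
    have hη := one_lt_η ν hν0
    obtain ⟨K, hK⟩ := exists_le_mul_pow_of_expRate_lt hu hν0 hν
    have hηD : η ν ^ D = 1 + (ν ^ L)⁻¹ := Real.rpow_inv_natCast_pow (by positivity) hD.ne'
    exact expRate_sum_le (div_nonneg hν0.le (one_pos.trans hη).le)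
      (le_mul_div_pow_of_mul_choose_le hD h hν0 hη.le hηD hK) hunbdd
  have hcont : ContinuousAt (fun ν => ν / η ν) v := by
    have hv' : v ^ L ≠ 0 := by positivity
    refine continuousAt_id.div (ContinuousAt.rpow_const ?_ (.inr (by positivity)))
      (one_pos.trans (one_lt_η v hv)).ne'
    fun_prop (disch := assumption)
  have htends : Tendsto (fun ν => ν / η ν) (𝓝[>] v) (𝓝 (v / η v)) :=
    hcont.tendsto.mono_left nhdsWithin_le_nhds
  calc expRate (fun n => ∑ l ∈ range (n + 1), s l) ≤ v / η v :=
        ge_of_tendsto htends (eventually_nhdsWithin_of_forall rate_le)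
    _ < v := div_lt_self hv (one_lt_η v hv)

end ExpRate

/-! ### Balls and spheres -/

section Balls

variable {G : Type*} [Group G] {S : Set G}

lemma ball_mono {m n : ℕ} (h : m ≤ n) : ball S m ⊆ ball S n := by
  rintro _ ⟨w, hw, hlen, rfl⟩
  exact ⟨w, hw, hlen.trans h, rfl⟩

lemma one_mem_ball (S : Set G) (n : ℕ) : 1 ∈ ball S n :=
  ⟨[], by simp, by simp, rfl⟩

lemma exists_mem_ball (hS : Subgroup.closure S = ⊤) (g : G) : ∃ n, g ∈ ball S n := by
  have hg : g ∈ (Subgroup.closure S).toSubmonoid := hS ▸ Subgroup.mem_top g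
  rw [Subgroup.closure_toSubmonoid] at hg
  obtain ⟨w, hw, rfl⟩ := Submonoid.exists_list_of_mem_closure hg
  exact ⟨w.length, w, hw, le_rfl, rfl⟩

lemma mem_ball_range_iff {α : Type*} {f : α → G} {n : ℕ} {g : G} :
    g ∈ ball (Set.range f) n ↔ ∃ w : List (α × Bool), w.length ≤ n ∧ lift f (mk w) = g := by
  simp only [lift_mk]
  constructor
  · rintro ⟨w, hw, hlen, rfl⟩
    obtain ⟨v, rfl⟩ : w ∈ Set.range (List.map fun c : α × Bool => cond c.2 (f c.1) (f c.1)⁻¹) := by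
      rw [Set.range_list_map]
      intro x hx
      rcases hw x hx with ⟨c, hc⟩ | ⟨c, hc⟩
      · exact ⟨(c, true), hc⟩
      · exact ⟨(c, false), by simp [hc]⟩
    exact ⟨v, by simpa using hlen, rfl⟩
  · rintro ⟨w, hlen, rfl⟩
    refine ⟨_, fun x hx => ?_, by simpa using hlen, rfl⟩
    obtain ⟨⟨c, _ | _⟩, -, rfl⟩ := List.mem_map.1 hx <;> simp

lemma list_prod_mem_pow {T : Set G} {w : List G} (hw : ∀ x ∈ w, x ∈ T) :
    w.prod ∈ T ^ w.length := by
  induction w with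
  | nil => simp
  | cons x w ih =>
    rw [List.prod_cons, List.length_cons, pow_succ']
    exact Set.mul_mem_mul (hw x (by simp)) (ih fun y hy => hw y (by simp [hy]))

lemma ball_subset_pow (S : Set G) (n : ℕ) : ball S n ⊆ insert 1 (S ∪ S⁻¹) ^ n := by
  rintro _ ⟨w, hw, hlen, rfl⟩
  exact Set.pow_subset_pow_right (Set.mem_insert 1 _) hlen
    (list_prod_mem_pow fun x hx => .inr (hw x hx))

lemma exists_finset_ball_subset_pow (hS : S.Finite) :
    ∃ T : Finset G, ∀ n, ball S n ⊆ (T : Set G) ^ n := by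
  obtain ⟨T, hT⟩ := ((hS.union hS.inv).insert 1).exists_finset_coe
  exact ⟨T, fun n => hT ▸ ball_subset_pow S n⟩

lemma ball_finite (hS : S.Finite) (n : ℕ) : (ball S n).Finite := by
  classical
  obtain ⟨T, hT⟩ := exists_finset_ball_subset_pow hS
  exact (finite_toSet (T ^ n)).subset (coe_pow T n ▸ hT n)

lemma exists_ncard_ball_le_pow (hS : S.Finite) : ∃ C : ℕ, ∀ n, (ball S n).ncard ≤ C ^ n := by
  classical
  obtain ⟨T, hT⟩ := exists_finset_ball_subset_pow hS
  refine ⟨#T, fun n => ?_⟩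
  calc (ball S n).ncard ≤ (T ^ n : Finset G).card := by
        rw [← Set.ncard_coe_finset, coe_pow]
        exact Set.ncard_le_ncard (hT n) (coe_pow T n ▸ finite_toSet _)
    _ ≤ #T ^ n := card_pow_le

lemma ncard_ball_pos (hS : S.Finite) (n : ℕ) : 0 < (ball S n).ncard :=
  (Set.ncard_pos (ball_finite hS n)).2 ⟨1, one_mem_ball S n⟩

lemma growthRate_eq_expRate (S : Set G) : growthRate S = expRate fun n => (ball S n).ncard :=
  rfl

lemma one_le_growthRate (hS : S.Finite) : 1 ≤ growthRate S := by
  obtain ⟨C, hC⟩ := exists_ncard_ball_le_pow hS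
  exact one_le_expRate (ncard_ball_pos hS) hC

lemma not_bddAbove_ncard_ball [Infinite G] (hS : S.Finite) (hgen : Subgroup.closure S = ⊤) :
    ¬ BddAbove (Set.range fun n => (ball S n).ncard) := by
  rintro ⟨M, hM⟩
  obtain ⟨T, hT⟩ := Infinite.exists_subset_card_eq G (M + 1)
  choose r hr using exists_mem_ball hgen
  have hsub : (T : Set G) ⊆ ball S (T.sup r) := fun g hg => ball_mono (le_sup hg) (hr g)
  have hle := Set.ncard_le_ncard hsub (ball_finite hS _)
  rw [Set.ncard_coe_finset, hT] at hle
  exact absurd (hM ⟨_, rfl⟩) (by simpa using hle)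

/-- The sphere of radius `n` about `1` for the word metric. -/
def sphere (S : Set G) (n : ℕ) : Set G :=
  {g | g ∈ ball S n ∧ ∀ m < n, g ∉ ball S m}

lemma ncard_ball_eq_sum (hS : S.Finite) (n : ℕ) :
    (ball S n).ncard = ∑ l ∈ range (n + 1), (sphere S l).ncard := by
  induction n with
  | zero => simp [sphere]
  | succ n ih =>
    have hsphere : sphere S (n + 1) = ball S (n + 1) \ ball S n := by
      ext g
      refine and_congr_right fun _ => ⟨fun h => h n n.lt_succ_self, fun h m hm hg => h ?_⟩
      exact ball_mono (Nat.le_of_lt_succ hm) hg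
    rw [sum_range_succ, ← ih, hsphere, add_comm (ball S n).ncard,
      Set.ncard_sdiff_add_ncard_of_subset (ball_mono n.le_succ) (ball_finite hS _)]

end Balls

/-! ### Squares of a subgroup -/

section SquareClosure

variable {G : Type*} [Group G] {R R' : Subgroup G}

/-- The normal subgroup `R²` generated by the squares of the elements of `R`. For normal `R`, the
quotient by `R²` is, among the quotients of `G`, the largest extension of `G ⧸ R` by an elementary
abelian `2`-group. -/
def squareClosure (R : Subgroup G) : Subgroup G :=
  Subgroup.normalClosure ((· ^ 2) '' (R : Set G))

instance (R : Subgroup G) : (squareClosure R).Normal := Subgroup.normalClosure_normal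

lemma squareClosure_mono (h : R ≤ R') : squareClosure R ≤ squareClosure R' :=
  Subgroup.normalClosure_mono (Set.image_mono h)

lemma squareClosure_le (R : Subgroup G) [R.Normal] : squareClosure R ≤ R := by
  apply Subgroup.normalClosure_le_normal
  rintro _ ⟨r, hr, rfl⟩
  exact R.pow_mem hr 2

lemma mk_inv_eq_mk_squareClosure {r : G} (hr : r ∈ R) :
    (r : G ⧸ squareClosure R)⁻¹ = (r : G ⧸ squareClosure R) := by
  rw [inv_eq_iff_mul_eq_one, ← QuotientGroup.mk_mul, QuotientGroup.eq_one_iff, ← pow_two]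
  exact Subgroup.subset_normalClosure ⟨r, hr, rfl⟩

lemma commutatorElement_mem_squareClosure {r u : G} (hr : r ∈ R) (hu : u ∈ R) :
    ⁅r, u⁆ ∈ squareClosure R := by
  have hcomm : ((r * u : G) : G ⧸ squareClosure R) = u * r := by
    rw [← mk_inv_eq_mk_squareClosure (R.mul_mem hr hu), QuotientGroup.mk_mul, mul_inv_rev,
      mk_inv_eq_mk_squareClosure hr, mk_inv_eq_mk_squareClosure hu]
  rw [← QuotientGroup.eq_one_iff, commutatorElement_def, mul_assoc, ← mul_inv_rev,
    QuotientGroup.mk_mul, hcomm, ← QuotientGroup.mk_mul, ← QuotientGroup.mk_mul,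
    mul_inv_cancel, QuotientGroup.mk_one]

end SquareClosure

/-! ### Quotients of free groups and geodesic words -/

section MarkedGenerators

variable {α : Type*} {N : Subgroup (FreeGroup α)}

/-- The images of the free generators in a quotient of a free group. -/
def markedGenerators (N : Subgroup (FreeGroup α)) : Set (FreeGroup α ⧸ N) :=
  Set.range fun x : α => (of x : FreeGroup α ⧸ N)

lemma finite_markedGenerators [Finite α] (N : Subgroup (FreeGroup α)) :
    (markedGenerators N).Finite :=
  Set.finite_range _

lemma closure_markedGenerators (N : Subgroup (FreeGroup α)) [N.Normal] :
    Subgroup.closure (markedGenerators N) = ⊤ := by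
  have himage : markedGenerators N = QuotientGroup.mk' N '' Set.range of :=
    Set.range_comp (QuotientGroup.mk' N) of
  rw [himage, ← MonoidHom.map_closure, closure_range_of,
    Subgroup.map_top_of_surjective _ (QuotientGroup.mk'_surjective N)]

lemma mem_ball_markedGenerators_iff [N.Normal] {n : ℕ} {g : FreeGroup α ⧸ N} :
    g ∈ ball (markedGenerators N) n ↔ ∃ w : List (α × Bool), w.length ≤ n ∧ mk w = g := by
  have hlift : lift (fun x : α => (of x : FreeGroup α ⧸ N)) = QuotientGroup.mk' N := by
    ext x
    simp
  rw [markedGenerators, mem_ball_range_iff, hlift]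
  rfl

/-- A word is geodesic modulo `N` if no shorter word represents the same element of the quotient
by `N`. -/
def IsGeodesic (N : Subgroup (FreeGroup α)) (w : List (α × Bool)) : Prop :=
  ∀ w' : List (α × Bool), (mk w' : FreeGroup α ⧸ N) = mk w → w.length ≤ w'.length

lemma exists_isGeodesic_of_mem_sphere [N.Normal] {l : ℕ} {g : FreeGroup α ⧸ N}
    (hg : g ∈ sphere (markedGenerators N) l) :
    ∃ w, IsGeodesic N w ∧ w.length = l ∧ mk w = g := by
  obtain ⟨w, hle, rfl⟩ := mem_ball_markedGenerators_iff.1 hg.1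
  have hmin (w' : List (α × Bool)) (hw' : (mk w' : FreeGroup α ⧸ N) = mk w) : l ≤ w'.length := by
    by_contra! hlt
    exact hg.2 _ hlt (mem_ball_markedGenerators_iff.2 ⟨w', le_rfl, hw'⟩)
  exact ⟨w, fun w' hw' => hle.trans (hmin w' hw'), hle.antisymm (hmin w rfl), rfl⟩

end MarkedGenerators

lemma exists_subset_injOn_leftCoset {Q ι : Type*} [Group Q] (H : Subgroup Q) [Finite H]
    [DecidableEq Q] {s : Finset ι} {x : ι → Q} {k : ℕ} (hk : ∀ q, #{i ∈ s | x i = q} ≤ k) :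
    ∃ t ⊆ s, #t = #s / (k * Nat.card H) ∧ Set.InjOn (fun i => (x i : Q ⧸ H)) t := by
  classical
  have := Fintype.ofFinite H
  set y : ι → Q ⧸ H := fun i => x i
  have hfiber : ∀ c ∈ s.image y, #{i ∈ s | y i = c} ≤ k * Nat.card H := by
    intro c hc
    obtain ⟨i₀, -, rfl⟩ := mem_image.1 hc
    have hmaps : ∀ i ∈ {i ∈ s | y i = y i₀}, x i ∈ univ.image fun h : H => x i₀ * h := by
      intro i hi
      refine mem_image.2 ⟨⟨(x i₀)⁻¹ * x i, ?_⟩, mem_univ _, mul_inv_cancel_left _ _⟩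
      exact QuotientGroup.eq.1 (mem_filter.1 hi).2.symm
    calc _ ≤ k * #(univ.image fun h : H => x i₀ * h) :=
          card_le_mul_card_image_of_maps_to hmaps k fun q _ =>
            (card_le_card (filter_subset_filter _ (filter_subset _ s))).trans (hk q)
      _ ≤ k * Nat.card H := by
          rw [Nat.card_eq_fintype_card]
          exact Nat.mul_le_mul_left k card_image_le
  have hcard : #s / (k * Nat.card H) ≤ #(s.image y) :=
    Nat.div_le_of_le_mul (card_le_mul_card_image s _ hfiber)
  obtain ⟨c, hcs, hc⟩ := exists_subset_card_eq hcard
  have hsurj : Set.SurjOn y s c := fun z hz => by simpa using hcs hz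
  obtain ⟨t, hts, hinj, htc⟩ := exists_subset_injOn_image_eq_of_surjOn _ _ hsurj
  exact ⟨t, mod_cast hts, by rw [← hc, ← htc, card_image_of_injOn hinj], hinj⟩

section Visits

variable {α : Type*} {R : Subgroup (FreeGroup α)} {w : List (α × Bool)}

/-- Modulo `R²` the loop `c :: u` equals its inverse, so that the two letters `c` cancel. -/
lemma mk_append_invRev_append (p u v : List (α × Bool)) (c : α × Bool) (hu : mk (c :: u) ∈ R) :
    (mk (p ++ invRev u ++ v) : FreeGroup α ⧸ squareClosure R) =
      mk (p ++ (c :: u) ++ (c :: v)) := by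
  have hcons : ∀ x, mk (c :: x) = mk [c] * mk x := fun x => by rw [mul_mk, List.singleton_append]
  have hinv := mk_inv_eq_mk_squareClosure hu
  simp only [← mul_mk, ← inv_mk, QuotientGroup.mk_mul]
  rw [← hinv, hcons u, hcons v]
  simp only [QuotientGroup.mk_mul, QuotientGroup.mk_inv]
  group

lemma IsGeodesic.getElem_ne (hw : IsGeodesic (squareClosure R) w) {i j : ℕ} (hij : i < j)
    (hj : j < w.length) (hloop : (mk (w.take i) : FreeGroup α ⧸ R) = mk (w.take j)) :
    w[i] ≠ w[j] := by
  intro hc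
  set u := (w.take j).drop (i + 1)
  have htake : w.take j = w.take i ++ w[i] :: u := by
    have hi : i < (w.take j).length := by simp [hij, hij.trans hj]
    rw [← List.getElem_take (h := hi), ← List.drop_eq_getElem_cons,
      ← min_eq_left hij.le, ← List.take_take, min_eq_left hij.le, List.take_append_drop]
  have hsplit : w = w.take i ++ (w[i] :: u) ++ (w[i] :: w.drop (j + 1)) := by
    rw [← htake, hc, ← List.drop_eq_getElem_cons hj, List.take_append_drop]
  have hmem : mk (w[i] :: u) ∈ R := by
    rwa [htake, ← mul_mk, QuotientGroup.eq, inv_mul_cancel_left] at hloop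
  have hle := hw _ ((mk_append_invRev_append (w.take i) u (w.drop (j + 1)) w[i] hmem).trans
    (by rw [← hsplit]))
  have hlength := congrArg List.length hsplit
  simp only [List.length_append, List.length_cons, invRev_length] at hle hlength
  lia

open scoped Classical in
lemma IsGeodesic.card_visits_le [Fintype α] (hw : IsGeodesic (squareClosure R) w)
    (q : FreeGroup α ⧸ R) :
    #{i : Fin w.length | (mk (w.take i) : FreeGroup α ⧸ R) = q} ≤ 2 * Fintype.card α := by
  have hinj : Set.InjOn w.get {i : Fin w.length | (mk (w.take i) : FreeGroup α ⧸ R) = q} := by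
    intro i hi j hj hij
    by_contra hne
    rcases lt_or_gt_of_ne hne with h | h
    · exact hw.getElem_ne h j.2 (hi.trans hj.symm) hij
    · exact hw.getElem_ne h i.2 (hj.trans hi.symm) hij.symm
  calc _ ≤ #(univ : Finset (α × Bool)) :=
        card_le_card_of_injOn w.get (fun _ _ => mem_univ _) (by simpa using hinj)
    _ = 2 * Fintype.card α := by simp [mul_comm]

lemma IsGeodesic.exists_injOn_leftCoset [Fintype α] [R.Normal]
    (hw : IsGeodesic (squareClosure R) w) (H : Subgroup (FreeGroup α ⧸ R)) [Finite H] :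
    ∃ P ⊆ range w.length, #P = w.length / (2 * Fintype.card α * Nat.card H) ∧
      Set.InjOn (fun i => ((mk (w.take i) : FreeGroup α ⧸ R) : (FreeGroup α ⧸ R) ⧸ H)) P := by
  classical
  obtain ⟨t, -, hcard, hinj⟩ := exists_subset_injOn_leftCoset H (s := univ) hw.card_visits_le
  refine ⟨t.map Fin.valEmbedding, fun i hi => ?_, by simpa using hcard, ?_⟩
  · obtain ⟨j, -, rfl⟩ := mem_map.1 hi
    exact mem_range.2 j.2
  · rw [coe_map]
    exact Set.InjOn.image_of_comp (f := Fin.valEmbedding) hinj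

end Visits

/-! ### Insertion of loops -/

section InsertAt

variable {β : Type*} (κ w : List β) (I : Finset ℕ)

/-- The word obtained from `w` by inserting `κ` in front of the letter with index `i` for every
`i ∈ I`. -/
def insertAt : List β :=
  w.zipIdx.flatMap fun c => if c.2 ∈ I then κ ++ [c.1] else [c.1]

lemma insertAt_append_singleton (c : β) :
    insertAt κ (w ++ [c]) I = insertAt κ w I ++ ((if w.length ∈ I then κ else []) ++ [c]) := by
  simp only [insertAt, List.zipIdx_append, List.flatMap_append]
  split_ifs with h <;> simp [h]

lemma length_insertAt :
    (insertAt κ w I).length = w.length + κ.length * #{i ∈ range w.length | i ∈ I} := by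
  induction w using List.reverseRecOn with
  | nil => simp [insertAt]
  | append_singleton w c ih =>
    simp only [insertAt_append_singleton, List.length_append, List.length_singleton, ih,
      card_filter, sum_range_succ]
    split_ifs
    · ring
    · rw [List.length_nil]
      ring

variable {α : Type*} {N : Subgroup (FreeGroup α)} [N.Normal] {κ : List (α × Bool)}

lemma mk_insertAt (hκ : mk κ ∈ N) (w : List (α × Bool)) (I : Finset ℕ) :
    (mk (insertAt κ w I) : FreeGroup α ⧸ N) = mk w := by
  have hκ1 : (mk κ : FreeGroup α ⧸ N) = 1 := (QuotientGroup.eq_one_iff _).2 hκ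
  induction w using List.reverseRecOn with
  | nil => rfl
  | append_singleton w c ih =>
    rw [insertAt_append_singleton]
    split_ifs <;> simp only [← mul_mk, QuotientGroup.mk_mul, ih, hκ1, one_mul, List.nil_append]

end InsertAt

section Lamp

variable {α : Type*} (R : Subgroup (FreeGroup α)) [R.Normal] (a : α)

open scoped Classical in
/-- The homomorphism to the wreath product `C₂ ≀ (F ⧸ R)` of a free group `F` under which a word
records its value modulo `R` together with the set of `a`-edges of the Cayley graph of `F ⧸ R` that
its path crosses an odd number of times. -/
noncomputable def lamp : FreeGroup α →* Multiplicative (ZMod 2) ≀ᵣ (FreeGroup α ⧸ R) :=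
  lift fun x => ⟨if x = a then Pi.mulSingle 1 (.ofAdd 1) else 1, (of x : FreeGroup α ⧸ R)⟩

lemma lamp_right (x : FreeGroup α) : (lamp R a x).right = x := by
  have hcomp : RegularWreathProduct.rightHom.comp (lamp R a) = QuotientGroup.mk' R := by
    ext t
    simp [lamp]
  exact DFunLike.congr_fun hcomp x

lemma lamp_mul_left (x y : FreeGroup α) (q : FreeGroup α ⧸ R) :
    (lamp R a (x * y)).left q =
      (lamp R a x).left q * (lamp R a y).left ((x : FreeGroup α ⧸ R)⁻¹ * q) := by
  rw [map_mul, RegularWreathProduct.mul_left, Pi.mul_apply, lamp_right]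

lemma lamp_one_left (q : FreeGroup α ⧸ R) : (lamp R a 1).left q = 1 := by
  rw [map_one, RegularWreathProduct.one_left, Pi.one_apply]

lemma multiplicative_zmod_two_mul_self (x : Multiplicative (ZMod 2)) : x * x = 1 := by
  decide +revert

variable {R}

lemma lamp_mul_left_of_mem {x : FreeGroup α} (hx : x ∈ R) (y : FreeGroup α) (q : FreeGroup α ⧸ R) :
    (lamp R a (x * y)).left q = (lamp R a x).left q * (lamp R a y).left q := by
  rw [lamp_mul_left, (QuotientGroup.eq_one_iff x).2 hx, inv_one, one_mul]

lemma lamp_inv_left_of_mem {x : FreeGroup α} (hx : x ∈ R) (q : FreeGroup α ⧸ R) :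
    (lamp R a x⁻¹).left q = (lamp R a x).left q := by
  have hmul := lamp_mul_left_of_mem a hx x⁻¹ q
  rw [mul_inv_cancel, lamp_one_left] at hmul
  exact mul_left_cancel (hmul.symm.trans (multiplicative_zmod_two_mul_self _).symm)

lemma lamp_eq_lamp_of_mk_eq {x y : FreeGroup α}
    (h : (x : FreeGroup α ⧸ squareClosure R) = y) : lamp R a x = lamp R a y := by
  have hker : squareClosure R ≤ (lamp R a).ker := by
    apply Subgroup.normalClosure_le_normal
    rintro _ ⟨r, hr, rfl⟩
    rw [SetLike.mem_coe, MonoidHom.mem_ker]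
    ext q
    · dsimp only
      rw [pow_two, lamp_mul_left_of_mem a hr, multiplicative_zmod_two_mul_self]
      rfl
    · rw [lamp_right]
      exact (QuotientGroup.eq_one_iff _).2 (R.pow_mem hr 2)
  have hmem := hker (QuotientGroup.eq.1 h)
  rwa [MonoidHom.mem_ker, map_mul, map_inv, inv_mul_eq_one] at hmem

lemma lamp_commutatorElement_left {s : FreeGroup α} (hs : s ∈ R) (r : FreeGroup α)
    (q : FreeGroup α ⧸ R) :
    (lamp R a ⁅r, s⁆).left q =
      (lamp R a s).left ((r : FreeGroup α ⧸ R)⁻¹ * q) * (lamp R a s).left q := by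
  have hinv : (lamp R a r).left q * (lamp R a r⁻¹).left ((r : FreeGroup α ⧸ R)⁻¹ * q) = 1 := by
    rw [← lamp_mul_left, mul_inv_cancel, lamp_one_left]
  rw [commutatorElement_def, lamp_mul_left_of_mem a (Subgroup.Normal.conj_mem ‹_› s hs r),
    lamp_inv_left_of_mem a hs, mul_assoc r, lamp_mul_left, lamp_mul_left_of_mem a hs,
    mul_left_comm, hinv, mul_one]

open scoped Classical in
lemma lamp_sq_left (q : FreeGroup α ⧸ R) :
    (lamp R a (of a ^ 2)).left q = (Pi.mulSingle 1 (.ofAdd 1) : FreeGroup α ⧸ R → _) q *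
      (Pi.mulSingle 1 (.ofAdd 1) : FreeGroup α ⧸ R → _) ((of a : FreeGroup α ⧸ R)⁻¹ * q) := by
  rw [pow_two, lamp_mul_left]
  simp [lamp]

variable {a}

lemma lamp_sq_left_eq_one {q : FreeGroup α ⧸ R} (h1 : q ≠ 1) (ha : q ≠ of a) :
    (lamp R a (of a ^ 2)).left q = 1 := by
  classical
  rw [lamp_sq_left, Pi.mulSingle_eq_of_ne h1,
    Pi.mulSingle_eq_of_ne (by rwa [Ne, inv_mul_eq_one, eq_comm]), one_mul]

lemma lamp_sq_left_one_ne_one (ha : of a ∉ R) : (lamp R a (of a ^ 2)).left 1 ≠ 1 := by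
  classical
  rw [lamp_sq_left, Pi.mulSingle_eq_same, Pi.mulSingle_eq_of_ne, mul_one]
  · decide
  · rwa [mul_one, Ne, inv_eq_one, QuotientGroup.eq_one_iff]

variable {R' : Subgroup (FreeGroup α)} {r : FreeGroup α}

lemma lamp_commutatorElement_sq_left_one_ne_one (hRR' : R ≤ R') (ha : of a ^ 2 ∈ R)
    (ha' : of a ∉ R') (hr : r ∈ R') (hr' : r ∉ R) : (lamp R a ⁅r, of a ^ 2⁆).left 1 ≠ 1 := by
  rw [lamp_commutatorElement_left a ha, mul_one, lamp_sq_left_eq_one, one_mul]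
  · exact lamp_sq_left_one_ne_one fun h => ha' (hRR' h)
  · rwa [Ne, inv_eq_one, QuotientGroup.eq_one_iff]
  · rw [← QuotientGroup.mk_inv, Ne, QuotientGroup.eq, inv_inv]
    exact fun h => ha' ((R'.mul_mem_cancel_left hr).1 (hRR' h))

lemma lamp_commutatorElement_sq_left_eq_one [R'.Normal] (hRR' : R ≤ R') (ha : of a ^ 2 ∈ R)
    (hr : r ∈ R') {x : FreeGroup α}
    (hx : (x : FreeGroup α ⧸ R') ∉ Subgroup.zpowers (of a : FreeGroup α ⧸ R')) :
    (lamp R a ⁅r, of a ^ 2⁆).left x = 1 := by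
  have hvanish : ∀ y : FreeGroup α, (y : FreeGroup α ⧸ R') = x →
      (lamp R a (of a ^ 2)).left y = 1 := by
    intro y hy
    apply lamp_sq_left_eq_one <;> rintro h <;> apply hx <;> rw [← hy]
    · rw [(QuotientGroup.eq_one_iff y).2 (hRR' ((QuotientGroup.eq_one_iff y).1 h))]
      exact one_mem _
    · rw [QuotientGroup.eq.2 (hRR' (QuotientGroup.eq.1 h))]
      exact Subgroup.mem_zpowers _
  rw [lamp_commutatorElement_left a ha, hvanish x rfl, ← QuotientGroup.mk_inv,
    ← QuotientGroup.mk_mul, hvanish, one_mul]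
  rw [QuotientGroup.mk_mul, (QuotientGroup.eq_one_iff _).2 (R'.inv_mem hr), one_mul]

variable {κ w : List (α × Bool)}

lemma lamp_insertAt_left (hκ : mk κ ∈ R) (w : List (α × Bool)) (I : Finset ℕ)
    (q : FreeGroup α ⧸ R) :
    (lamp R a (mk (insertAt κ w I))).left q = (lamp R a (mk w)).left q *
      ∏ i ∈ range w.length, if i ∈ I then
        (lamp R a (mk κ)).left ((mk (w.take i) : FreeGroup α ⧸ R)⁻¹ * q) else 1 := by
  induction w using List.reverseRecOn with
  | nil => simp [insertAt]
  | append_singleton w c ih =>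
    have htake : ∀ i ∈ range w.length, (w ++ [c]).take i = w.take i := fun i hi =>
      List.take_append_of_le_length (mem_range.1 hi).le
    rw [insertAt_append_singleton, List.length_append, List.length_singleton, prod_range_succ,
      prod_congr rfl fun i hi => by rw [htake i hi], List.take_left, ← mul_mk, ← mul_mk,
      lamp_mul_left, ih, mk_insertAt hκ, ← mul_mk, lamp_mul_left R a (mk w)]
    split_ifs
    · rw [lamp_mul_left_of_mem a hκ]
      ac_rfl
    · rw [← FreeGroup.one_eq_mk, one_mul, mul_one]
      ac_rfl

lemma lamp_insertAt_left_take {P I : Finset ℕ} (hP : P ⊆ range w.length) (hκ : mk κ ∈ R)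
    (hsep : ∀ i ∈ P, ∀ j ∈ P, i ≠ j → (lamp R a (mk κ)).left
      ((mk (w.take i) : FreeGroup α ⧸ R)⁻¹ * (mk (w.take j) : FreeGroup α ⧸ R)) = 1)
    (hI : I ⊆ P) {j : ℕ} (hj : j ∈ P) :
    (lamp R a (mk (insertAt κ w I))).left (mk (w.take j)) =
      (lamp R a (mk w)).left (mk (w.take j)) *
        if j ∈ I then (lamp R a (mk κ)).left 1 else 1 := by
  rw [lamp_insertAt_left hκ, prod_eq_single_of_mem j (hP hj), inv_mul_cancel]
  intro i _ hij
  split_ifs with hi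
  · exact hsep i (hI hi) j hj hij
  · rfl

/-- The lamps at the insertion points tell which of them have been used. -/
lemma injOn_mk_insertAt {P : Finset ℕ} (hP : P ⊆ range w.length) (hκ : mk κ ∈ R)
    (hone : (lamp R a (mk κ)).left 1 ≠ 1)
    (hsep : ∀ i ∈ P, ∀ j ∈ P, i ≠ j → (lamp R a (mk κ)).left
      ((mk (w.take i) : FreeGroup α ⧸ R)⁻¹ * (mk (w.take j) : FreeGroup α ⧸ R)) = 1) :
    Set.InjOn (fun I => (mk (insertAt κ w I) : FreeGroup α ⧸ squareClosure R))
      {I : Finset ℕ | I ⊆ P} := by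
  intro I hI J hJ hIJ
  have hmem : ∀ j ∈ P, (j ∈ I ↔ j ∈ J) := by
    intro j hj
    have hlamp := congrArg (fun x => x.left (mk (w.take j) : FreeGroup α ⧸ R))
      (lamp_eq_lamp_of_mk_eq a hIJ)
    simp only [lamp_insertAt_left_take hP hκ hsep hI hj,
      lamp_insertAt_left_take hP hκ hsep hJ hj, mul_right_inj] at hlamp
    split_ifs at hlamp <;> simp_all
  ext j
  exact ⟨fun hj => (hmem j (hI hj)).1 hj, fun hj => (hmem j (hJ hj)).2 hj⟩

end Lamp

/-! ### Strict monotonicity of the growth rate -/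

section StrictMono

variable {α : Type*} {R R' : Subgroup (FreeGroup α)} [R.Normal] [R'.Normal] {a : α}
  {r : FreeGroup α}

/-- The lifts are the words `insertAt κ w I`, where `I` consists of `m` of the positions provided by
`IsGeodesic.exists_injOn_leftCoset`. -/
lemma IsGeodesic.exists_choose_le_card_lifts [Fintype α] {w κ : List (α × Bool)}
    (hw : IsGeodesic (squareClosure R') w) (hRR' : R ≤ R') (ha : of a ^ 2 ∈ R) (ha' : of a ∉ R')
    (hr : r ∈ R') (hr' : r ∉ R) (hκ : mk κ = ⁅r, of a ^ 2⁆)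
    [Finite (Subgroup.zpowers (of a : FreeGroup α ⧸ R'))] (m : ℕ) :
    ∃ A : Finset (FreeGroup α ⧸ squareClosure R),
      (∀ x ∈ A, x ∈ ball (markedGenerators (squareClosure R)) (w.length + κ.length * m) ∧
        Subgroup.quotientMapOfLE (squareClosure_mono hRR') x = mk w) ∧
      (w.length / (2 * Fintype.card α *
        Nat.card (Subgroup.zpowers (of a : FreeGroup α ⧸ R')))).choose m ≤ #A := by
  classical
  obtain ⟨P, hP, hPcard, hPinj⟩ :=
    hw.exists_injOn_leftCoset (Subgroup.zpowers (of a : FreeGroup α ⧸ R'))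
  have hκR : mk κ ∈ R :=
    hκ ▸ Subgroup.commutator_le_right ⊤ R (Subgroup.commutator_mem_commutator trivial ha)
  have hκR' : mk κ ∈ squareClosure R' :=
    hκ ▸ commutatorElement_mem_squareClosure hr (hRR' ha)
  have hone : (lamp R a (mk κ)).left 1 ≠ 1 :=
    hκ ▸ lamp_commutatorElement_sq_left_one_ne_one hRR' ha ha' hr hr'
  have hsep : ∀ i ∈ P, ∀ j ∈ P, i ≠ j → (lamp R a (mk κ)).left
      ((mk (w.take i) : FreeGroup α ⧸ R)⁻¹ * (mk (w.take j) : FreeGroup α ⧸ R)) = 1 := by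
    intro i hi j hj hij
    rw [hκ, ← QuotientGroup.mk_inv, ← QuotientGroup.mk_mul]
    refine lamp_commutatorElement_sq_left_eq_one hRR' ha hr fun hmem => hij ?_
    exact hPinj hi hj (QuotientGroup.eq.2 hmem)
  refine ⟨(P.powersetCard m).image fun I => (mk (insertAt κ w I) : FreeGroup α ⧸ squareClosure R),
    fun x hx => ?_, ?_⟩
  · obtain ⟨I, hI, rfl⟩ := mem_image.1 hx
    obtain ⟨hIP, rfl⟩ := mem_powersetCard.1 hI
    refine ⟨mem_ball_markedGenerators_iff.2 ⟨_, ?_, rfl⟩, mk_insertAt hκR' w I⟩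
    rw [length_insertAt, filter_mem_eq_inter, inter_eq_right.2 (hIP.trans hP)]
  · rw [card_image_of_injOn, card_powersetCard, hPcard]
    exact (injOn_mk_insertAt hP hκR hone hsep).mono fun I hI => (mem_powersetCard.1 hI).1

lemma ncard_sphere_mul_choose_le [Fintype α] {κ : List (α × Bool)} (hRR' : R ≤ R')
    (ha : of a ^ 2 ∈ R) (ha' : of a ∉ R') (hr : r ∈ R') (hr' : r ∉ R) (hκ : mk κ = ⁅r, of a ^ 2⁆)
    [Finite (Subgroup.zpowers (of a : FreeGroup α ⧸ R'))] (l m : ℕ) :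
    (sphere (markedGenerators (squareClosure R')) l).ncard *
        (l / (2 * Fintype.card α *
          Nat.card (Subgroup.zpowers (of a : FreeGroup α ⧸ R')))).choose m ≤
      (ball (markedGenerators (squareClosure R)) (l + κ.length * m)).ncard := by
  classical
  set π := Subgroup.quotientMapOfLE (squareClosure_mono hRR')
  have hsphere : (sphere (markedGenerators (squareClosure R')) l).Finite :=
    (ball_finite (finite_markedGenerators _) l).subset fun _ hg => hg.1
  have hball := ball_finite (finite_markedGenerators (squareClosure R)) (l + κ.length * m)
  rw [Set.ncard_eq_toFinset_card _ hsphere, Set.ncard_eq_toFinset_card _ hball, mul_comm]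
  refine (mul_card_image_le_card_of_maps_to
    (s := {x ∈ hball.toFinset | π x ∈ hsphere.toFinset}) (fun x hx => (mem_filter.1 hx).2) _
    fun g hg => ?_).trans (card_le_card (filter_subset _ _))
  obtain ⟨w, hw, rfl, rfl⟩ := exists_isGeodesic_of_mem_sphere (hsphere.mem_toFinset.1 hg)
  obtain ⟨A, hA, hcard⟩ := hw.exists_choose_le_card_lifts hRR' ha ha' hr hr' hκ m
  refine hcard.trans (card_le_card fun x hx => ?_)
  obtain ⟨hxball, hxw⟩ := hA x hx
  have hxsphere : π x ∈ hsphere.toFinset := (congrArg (· ∈ hsphere.toFinset) hxw).mpr hg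
  exact mem_filter.2 ⟨mem_filter.2 ⟨hball.mem_toFinset.2 hxball, hxsphere⟩, hxw⟩

theorem growthRate_lt_growthRate [Finite α] (hRR' : R < R') (ha : of a ^ 2 ∈ R) (ha' : of a ∉ R')
    [Infinite (FreeGroup α ⧸ squareClosure R')] :
    growthRate (markedGenerators (squareClosure R')) <
      growthRate (markedGenerators (squareClosure R)) := by
  have := Fintype.ofFinite α
  obtain ⟨hle, r, hr, hr'⟩ := SetLike.lt_iff_le_and_exists.1 hRR'
  obtain ⟨κ, hκ⟩ : ∃ κ : List (α × Bool), mk κ = ⁅r, of a ^ 2⁆ := Quot.exists_rep _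
  have hsq : (of a : FreeGroup α ⧸ R') ^ 2 = 1 :=
    (QuotientGroup.eq_one_iff (of a ^ 2)).2 (hle ha)
  have : Finite (Subgroup.zpowers (of a : FreeGroup α ⧸ R')) :=
    finite_zpowers.2 (isOfFinOrder_iff_pow_eq_one.2 ⟨2, two_pos, hsq⟩)
  have hfin := finite_markedGenerators (squareClosure R')
  have hfin' := finite_markedGenerators (squareClosure R)
  have hball := funext (ncard_ball_eq_sum hfin)
  have hunbdd := not_bddAbove_ncard_ball hfin (closure_markedGenerators _)
  have hD : 0 < 2 * Fintype.card α * Nat.card (Subgroup.zpowers (of a : FreeGroup α ⧸ R')) :=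
    Nat.mul_pos (Nat.mul_pos two_pos (Fintype.card_pos_iff.2 ⟨a⟩)) Nat.card_pos
  obtain ⟨C, hC⟩ := exists_ncard_ball_le_pow hfin'
  rw [growthRate_eq_expRate, growthRate_eq_expRate, hball]
  rw [hball] at hunbdd
  exact expRate_sum_lt_of_mul_choose_le hD (ncard_ball_pos hfin') hC hunbdd
    (ncard_sphere_mul_choose_le hle ha ha' hr hr' hκ)

end StrictMono

/-! ### A chain of normal subgroups -/

section ShiftSwap

/-- The action of the free group on `a = of true` and `b = of false` on `ℤ/n` (which is `ℤ` for
`n = 0`) in which `a` is the transposition `(0 1)` and `b` is the translation by `1`. -/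
def shiftSwap (n : ℕ) : FreeGroup Bool →* Equiv.Perm (ZMod n) :=
  lift fun x => if x then Equiv.swap 0 1 else Equiv.addRight 1

lemma shiftSwap_of_true (n : ℕ) : shiftSwap n (of true) = Equiv.swap 0 1 := by
  simp [shiftSwap]

lemma shiftSwap_of_false (n : ℕ) : shiftSwap n (of false) = Equiv.addRight 1 := by
  simp [shiftSwap]

lemma shiftSwap_of_false_pow_apply (n k : ℕ) (x : ZMod n) :
    shiftSwap n (of false ^ k) x = x + k := by
  simp [shiftSwap_of_false]

/-- The commutator of `a` and its conjugate by `b ^ (3 * k + 1)`; under `shiftSwap n` it becomes the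
commutator of the transpositions `(0 1)` and `(3k+1 3k+2)`. -/
def swapCommutator (k : ℕ) : FreeGroup Bool :=
  ⁅of true, of false ^ (3 * k + 1) * of true * (of false ^ (3 * k + 1))⁻¹⁆

lemma shiftSwap_swapCommutator (n k : ℕ) : shiftSwap n (swapCommutator k) =
    ⁅Equiv.swap ((0 : ℕ) : ZMod n) (1 : ℕ),
      Equiv.swap ((3 * k + 1 : ℕ) : ZMod n) (3 * k + 2 : ℕ)⁆ := by
  simp only [swapCommutator, map_commutatorElement, map_mul, map_inv, shiftSwap_of_true,
    ← Equiv.swap_apply_apply, shiftSwap_of_false_pow_apply]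
  push_cast
  ring_nf

lemma natCast_zmod_ne_of_mod_three_ne {n x y : ℕ} (hn : 3 ∣ n) (hxy : x % 3 ≠ y % 3) :
    (x : ZMod n) ≠ y := by
  rw [Ne, ZMod.natCast_eq_natCast_iff]
  exact fun h => hxy (h.of_dvd hn)

lemma shiftSwap_swapCommutator_eq_one_iff {n k : ℕ} (hn : 3 ∣ n) :
    shiftSwap n (swapCommutator k) = 1 ↔ ¬ n ∣ 3 * k := by
  have hne {x y : ℕ} (hxy : x % 3 ≠ y % 3) : (x : ZMod n) ≠ y :=
    natCast_zmod_ne_of_mod_three_ne hn hxy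
  have hone : ((1 : ℕ) : ZMod n) = (3 * k + 1 : ℕ) ↔ n ∣ 3 * k := by
    rw [ZMod.natCast_eq_natCast_iff, Nat.modEq_iff_dvd' (by lia), Nat.add_sub_cancel]
  rw [shiftSwap_swapCommutator, commutatorElement_eq_one_iff_commute]
  constructor
  · intro hcomm hdvd
    have hzero := DFunLike.congr_fun hcomm.eq ((0 : ℕ) : ZMod n)
    rw [← hone.2 hdvd, Equiv.Perm.mul_apply, Equiv.Perm.mul_apply, Equiv.swap_apply_left,
      Equiv.swap_apply_left, Equiv.swap_apply_of_ne_of_ne (hne (by lia)) (hne (by lia)),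
      Equiv.swap_apply_left] at hzero
    exact hne (by lia) hzero
  · intro hdvd
    refine (Equiv.Perm.disjoint_swap_swap ?_).commute
    have hne_one := mt hone.1 hdvd
    simp only [List.nodup_cons, List.mem_cons, List.not_mem_nil, or_false, not_or,
      not_false_eq_true, List.nodup_nil, and_true]
    exact ⟨⟨hne (by lia), hne (by lia), hne (by lia)⟩, ⟨hne_one, hne (by lia)⟩, hne (by lia)⟩

/-- The elements acting trivially under `shiftSwap` on `ℤ` and on `ℤ/3p` for all `p ∈ A`. -/
def shiftSwapKer (A : Set Nat.Primes) : Subgroup (FreeGroup Bool) :=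
  (shiftSwap 0).ker ⊓ ⨅ p ∈ A, (shiftSwap (3 * p)).ker

variable {A B : Set Nat.Primes}

lemma mem_shiftSwapKer {x : FreeGroup Bool} :
    x ∈ shiftSwapKer A ↔ shiftSwap 0 x = 1 ∧ ∀ p ∈ A, shiftSwap (3 * p) x = 1 := by
  simp [shiftSwapKer, Subgroup.mem_iInf]

instance (A : Set Nat.Primes) : (shiftSwapKer A).Normal where
  conj_mem x hx g := by
    simp +contextual [mem_shiftSwapKer, mem_shiftSwapKer.1 hx]

lemma swapCommutator_mem_shiftSwapKer_iff {p : Nat.Primes} :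
    swapCommutator p ∈ shiftSwapKer A ↔ p ∉ A := by
  have hzero : shiftSwap 0 (swapCommutator p) = 1 :=
    (shiftSwap_swapCommutator_eq_one_iff (dvd_zero 3)).2 (by simp [p.2.ne_zero])
  have hprime (q : Nat.Primes) : shiftSwap (3 * q) (swapCommutator p) = 1 ↔ q ≠ p := by
    rw [shiftSwap_swapCommutator_eq_one_iff (dvd_mul_right 3 _),
      Nat.mul_dvd_mul_iff_left three_pos, Nat.prime_dvd_prime_iff_eq q.2 p.2,
      Nat.Primes.coe_nat_inj]
  simp only [mem_shiftSwapKer, hzero, hprime, true_and]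
  exact ⟨fun h hp => h p hp rfl, fun h q hq hqp => h (hqp ▸ hq)⟩

lemma shiftSwapKer_strictAnti : StrictAnti shiftSwapKer := by
  intro A B hAB
  obtain ⟨hle, p, hpB, hpA⟩ := Set.ssubset_iff_exists.1 hAB
  refine SetLike.lt_iff_le_and_exists.2 ⟨fun x hx => ?_, swapCommutator p,
    swapCommutator_mem_shiftSwapKer_iff.2 hpA, fun h => swapCommutator_mem_shiftSwapKer_iff.1 h hpB⟩
  obtain ⟨hzero, hB⟩ := mem_shiftSwapKer.1 hx
  exact mem_shiftSwapKer.2 ⟨hzero, fun q hq => hB q (hle hq)⟩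

lemma of_true_sq_mem_shiftSwapKer (A : Set Nat.Primes) : of true ^ 2 ∈ shiftSwapKer A := by
  simp [mem_shiftSwapKer, shiftSwap_of_true, pow_two]

lemma of_true_notMem_shiftSwapKer (A : Set Nat.Primes) : of true ∉ shiftSwapKer A := by
  intro h
  have hswap := (mem_shiftSwapKer.1 h).1
  rw [shiftSwap_of_true, Equiv.swap_eq_one_iff] at hswap
  exact absurd hswap (by decide)

lemma shiftSwap_eq_of_mk_eq {x y : FreeGroup Bool}
    (h : (x : FreeGroup Bool ⧸ squareClosure (shiftSwapKer A)) = y) :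
    shiftSwap 0 x = shiftSwap 0 y := by
  have hmem := (mem_shiftSwapKer.1 (squareClosure_le _ (QuotientGroup.eq.1 h))).1
  rwa [map_mul, map_inv, inv_mul_eq_one] at hmem

instance (A : Set Nat.Primes) : Infinite (FreeGroup Bool ⧸ squareClosure (shiftSwapKer A)) := by
  refine Infinite.of_injective (fun k : ℕ => ((of false ^ k : FreeGroup Bool) : _ ⧸ _))
    fun j k hjk => ?_
  have hzero := DFunLike.congr_fun (shiftSwap_eq_of_mk_eq hjk) 0
  simp only [shiftSwap_of_false_pow_apply, zero_add] at hzero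
  exact Nat.cast_injective (R := ℤ) hzero

lemma injective_mk_of_shiftSwapKer (A : Set Nat.Primes) : Function.Injective
    fun x : Bool => (of x : FreeGroup Bool ⧸ squareClosure (shiftSwapKer A)) := by
  refine Bool.injective_iff.2 fun h => ?_
  have hone := DFunLike.congr_fun (shiftSwap_eq_of_mk_eq h) 1
  rw [shiftSwap_of_true, shiftSwap_of_false, Equiv.swap_apply_right] at hone
  exact absurd hone (by decide)

end ShiftSwap

/-! ### A continuum of growth rates -/

lemma exists_strictMono_real_set (ι : Type*) [Countable ι] [Infinite ι] :
    ∃ A : ℝ → Set ι, StrictMono A := by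
  obtain ⟨e⟩ := nonempty_equiv_of_countable (α := ι) (β := ℚ)
  refine ⟨fun x => {i | (e i : ℝ) < x}, fun x y hxy => ?_⟩
  obtain ⟨q, hxq, hqy⟩ := exists_rat_btwn hxy
  refine Set.ssubset_iff_exists.2 ⟨fun i hi => lt_trans hi hxy, e.symm q, ?_, ?_⟩
  · simpa using hqy
  · simpa using hxq.le

theorem strictMono_growthRate_shiftSwapKer : StrictMono fun A : Set Nat.Primes =>
    growthRate (markedGenerators (squareClosure (shiftSwapKer A))) := fun A B hAB =>
  growthRate_lt_growthRate (shiftSwapKer_strictAnti hAB) (of_true_sq_mem_shiftSwapKer B)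
    (of_true_notMem_shiftSwapKer A)

end GroupGrowth

open GroupGrowth

/-- The set `Ω₂` of exponential growth rates of groups with respect to
two-element generating sets has the cardinality of the continuum. -/
theorem omega_two_has_cardinality_continuum :
    Cardinal.mk ↥{v : ℝ | 1 ≤ v ∧ ∃ (G : Type) (_ : Group G) (S : Finset G),
      S.card = 2 ∧ Subgroup.closure (S : Set G) = ⊤ ∧ growthRate (S : Set G) = v} =
    2 ^ Cardinal.aleph0 := by
  classical
  rw [Cardinal.two_power_aleph0]
  refine le_antisymm ((Cardinal.mk_set_le _).trans_eq Cardinal.mk_real) ?_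
  obtain ⟨A, hA⟩ := exists_strictMono_real_set Nat.Primes
  let N (x : ℝ) := squareClosure (shiftSwapKer (A x))
  have hmem (x : ℝ) : 1 ≤ growthRate (markedGenerators (N x)) ∧
      ∃ (G : Type) (_ : Group G) (S : Finset G), S.card = 2 ∧
        Subgroup.closure (S : Set G) = ⊤ ∧
        growthRate (S : Set G) = growthRate (markedGenerators (N x)) := by
    refine ⟨one_le_growthRate (finite_markedGenerators _), _, inferInstance,
      Finset.univ.image fun i : Bool => (FreeGroup.of i : _ ⧸ N x),
      Finset.card_image_of_injective _ (injective_mk_of_shiftSwapKer (A x)), ?_⟩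
    rw [Finset.coe_image, Finset.coe_univ, Set.image_univ]
    exact ⟨closure_markedGenerators (N x), rfl⟩
  rw [← Cardinal.mk_real]
  exact Cardinal.mk_le_of_injective (f := fun x => ⟨_, hmem x⟩) fun x y hxy =>
    (strictMono_growthRate_shiftSwapKer.comp hA).injective (congrArg Subtype.val hxy)
end

section
/- There exists a function E : ℕ → ℕ with the following property. For i ∈ ℕ let r_i = (a^{E(i)} b^{E(i)})^{100} in the free group on {a,b}, and for each subset J ⊆ ℕ let G_J = ⟨a, b | r_j = e, j ∈ J⟩. Then for all subsets I, J ⊆ ℕ, if I ≠ J then v(G_I) ≠ v(G_J), where growth rates are taken with respect to the images of the generators {a,b}. -/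
/-!
For a set `X` of even numbers let `G_X = ⟨a, b | (aᵉ bᵉ)²ᵏ, e ∈ X⟩`. The point is that for every set
`F` of even numbers and every even `L > 0` there is a radius `R` such that
`v(G_X) > v(G_{F ∪ {L}})` whenever `X` consists of even numbers, omits `L`, and has all its elements
below `R` in `F`. If the exponents `E 0 < E 1 < …` are even and sparse enough, the first index at
which `I` and `J` differ therefore decides which of the two growth rates is larger.

*Coxeter groups.* Let `Cox X` be the Coxeter group with generators `σᵢ`, `i ∈ ℤ`, and relations
`(σᵢ σⱼ)²ᵏ = 1` for `|i - j| ∈ X`; let `ℤ = ⟨t⟩` act on it by shifting the indices, and put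
`s = σ₀`. Then `a ↦ t`, `b ↦ s t⁻¹ s` sends `aᵉ bᵉ` to `σₑ σ₀` and embeds `G_X` with index two
into `Cox X ⋊ ℤ`. A word of length `n` in `a`, `b` becomes a walk of length `n` on `ℤ` that may emit
`σᵢ` free of charge while it is at `i`. Hence counting elements by walk length gives the sizes of
the balls of `G_X` up to a factor two.

*Retractions.* All labels being even, reflections may be sent to `1`. This gives homomorphisms that
see only a bounded window of indices, and shows that the separators `(σ_p σ_{p+L})²ᵏ` are
non-trivial and pairwise distinct in `Cox X` when `L ∉ X`.

*Normal forms.* As `X` consists of even numbers, `Cox X` is the free product of the subgroups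
generated by the odd and by the even reflections, so that elements have unique normal forms as
products of syllables.

*Renewal.* Let `Y = F ∪ {L}`. An element of `Cox Y ⋊ ℤ` given by a walk of bounded length that emits
as few reflections as possible is lifted to `Cox X ⋊ ℤ` by the same walk. By minimality the
retraction to `Cox Y` kills no syllable of the lift. Lifts that start and end with an odd syllable
can be concatenated with separators, each of which contributes one even syllable which the
retraction *does* kill, so the concatenation can be parsed uniquely. Hence the number `f n` of
suitable elements of length at most `n` satisfies `f n ≥ ∑ f (n - ℓ a)`, the sum running over the
lifted elements. Since `∑ v ^ (-|a|)` over all `a ∈ Cox Y ⋊ ℤ` diverges for `v = v(G_Y)`, finitely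
many `a` suffice to make `∑ v ^ (-ℓ a) > 1` in spite of the constant cost of the separators, and so
`f` grows at a rate strictly larger than `v`.
-/

namespace GrowthRates

open Filter Topology

/-! ### Balls and growth rates -/

section Ball

variable {G : Type*} [Group G] {S : Set G}

lemma one_mem_ball (S : Set G) (n : ℕ) : (1 : G) ∈ ball S n :=
  ⟨[], by simp, by simp, rfl⟩

lemma mem_ball_one {g : G} (hg : g ∈ S ∨ g⁻¹ ∈ S) : g ∈ ball S 1 :=
  ⟨[g], by simpa using hg, by simp, by simp⟩

lemma mul_mem_ball {m n : ℕ} {g h : G} (hg : g ∈ ball S m) (hh : h ∈ ball S n) :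
    g * h ∈ ball S (m + n) := by
  obtain ⟨v, hv, hvm, rfl⟩ := hg
  obtain ⟨w, hw, hwn, rfl⟩ := hh
  refine ⟨v ++ w, fun x hx => ?_, by simpa using add_le_add hvm hwn, List.prod_append⟩
  exact (List.mem_append.1 hx).elim (hv x) (hw x)

lemma ball_zero (S : Set G) : ball S 0 = {1} := by
  refine Set.eq_singleton_iff_unique_mem.2 ⟨one_mem_ball S 0, ?_⟩
  rintro g ⟨w, -, hw, rfl⟩
  rw [List.length_eq_zero_iff.1 (Nat.le_zero.1 hw), List.prod_nil]

lemma ball_mono (S : Set G) : Monotone (ball S) := by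
  rintro m n hmn g ⟨w, hw, hwm, rfl⟩
  exact ⟨w, hw, hwm.trans hmn, rfl⟩

lemma zpow_mem_ball {g : G} {n : ℕ} (hg : g ∈ S) {p : ℤ} (hp : p.natAbs ≤ n) :
    g ^ p ∈ ball S n := by
  refine ball_mono S hp ?_
  obtain ⟨m, rfl | rfl⟩ := p.eq_nat_or_neg
  · exact ⟨List.replicate m g, by simp [hg], by simp, by simp⟩
  · exact ⟨List.replicate m g⁻¹, by simp [hg], by simp, by simp⟩

lemma ball_add_subset (S : Set G) (m n : ℕ) :
    ball S (m + n) ⊆ Set.image2 (· * ·) (ball S m) (ball S n) := by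
  rintro g ⟨w, hw, hwl, rfl⟩
  exact ⟨(w.take m).prod, ⟨_, fun x hx => hw x (List.mem_of_mem_take hx), by simp, rfl⟩,
    (w.drop m).prod, ⟨_, fun x hx => hw x (List.mem_of_mem_drop hx), by simp; omega, rfl⟩,
    List.prod_take_mul_prod_drop w m⟩

lemma ball_induction {P : ℕ → G → Prop} (one : P 0 1)
    (mul : ∀ n x g, (x ∈ S ∨ x⁻¹ ∈ S) → P n g → P (n + 1) (x * g))
    (mono : ∀ m n g, m ≤ n → P m g → P n g) {n : ℕ} {g : G} (hg : g ∈ ball S n) : P n g := by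
  obtain ⟨w, hw, hwn, rfl⟩ := hg
  refine mono _ _ _ hwn ?_
  clear hwn
  induction w with
  | nil => exact one
  | cons x w ih =>
    exact mul _ _ _ (hw x List.mem_cons_self) (ih fun y hy => hw y (List.mem_cons_of_mem x hy))

lemma length_le_of_mem_ball {ℓ : G → ℕ} (h_one : ℓ 1 = 0) (h_mul : ∀ g h, ℓ (g * h) ≤ ℓ g + ℓ h)
    (h_gen : ∀ x, x ∈ S ∨ x⁻¹ ∈ S → ℓ x ≤ 1) {n : ℕ} {g : G} (hg : g ∈ ball S n) : ℓ g ≤ n := by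
  refine ball_induction (P := fun n g => ℓ g ≤ n) h_one.le (fun n x g hx hg => ?_)
    (fun _ _ _ hmn h => h.trans hmn) hg
  have := h_gen x hx
  have := h_mul x g
  omega

lemma ball_image_subset {H : Type*} [Group H] (f : G →* H) (S : Set G) (n : ℕ) :
    ball (f '' S) n ⊆ f '' ball S n := by
  intro g hg
  refine ball_induction (P := fun n g => g ∈ f '' ball S n) ⟨1, one_mem_ball S 0, map_one f⟩ ?_
    (fun _ _ _ hmn => fun h => Set.image_mono (ball_mono S hmn) h) hg
  rintro n x _ hx ⟨g, hg, rfl⟩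
  obtain ⟨y, hy, rfl⟩ : ∃ y, (y ∈ S ∨ y⁻¹ ∈ S) ∧ f y = x := by
    rcases hx with ⟨z, hz, rfl⟩ | ⟨z, hz, hzx⟩
    · exact ⟨z, .inl hz, rfl⟩
    · exact ⟨z⁻¹, .inr (by rwa [inv_inv]), by rw [map_inv, hzx, inv_inv]⟩
  exact ⟨y * g, add_comm 1 n ▸ mul_mem_ball (mem_ball_one hy) hg, map_mul f y g⟩

lemma finite_ball (hS : S.Finite) (n : ℕ) : (ball S n).Finite := by
  induction n with
  | zero => exact ball_zero S ▸ Set.finite_singleton 1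
  | succ n ih =>
    refine (ih.image2 _ ?_).subset (ball_add_subset S n 1)
    refine ((hS.union hS.inv).insert 1).subset ?_
    rintro g ⟨_ | ⟨x, _ | ⟨y, w⟩⟩, hw, hwl, rfl⟩
    · exact .inl rfl
    · simpa using Or.inr (hw x List.mem_cons_self)
    · simp at hwl

lemma card_ball_pos (hS : S.Finite) (n : ℕ) : 0 < Nat.card (ball S n) :=
  (Set.ncard_pos (finite_ball hS n)).2 ⟨1, one_mem_ball S n⟩

lemma card_ball_add (hS : S.Finite) (m n : ℕ) :
    Nat.card (ball S (m + n)) ≤ Nat.card (ball S m) * Nat.card (ball S n) := by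
  have hm := finite_ball hS m
  have hn := finite_ball hS n
  calc (ball S (m + n)).ncard ≤ (Set.image2 (· * ·) (ball S m) (ball S n)).ncard :=
        Set.ncard_le_ncard (ball_add_subset S m n) (hm.image2 _ hn)
    _ ≤ (ball S m ×ˢ ball S n).ncard := by
        rw [← Set.image_prod]
        exact Set.ncard_image_le (hm.prod hn)
    _ = (ball S m).ncard * (ball S n).ncard := Set.ncard_prod

end Ball

section Growth

variable {G : Type*} [Group G] {S : Set G}

lemma subadditive_log_card_ball (hS : S.Finite) :
    Subadditive fun n => Real.log (Nat.card (ball S n)) := by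
  intro m n
  have hm : (Nat.card (ball S m) : ℝ) ≠ 0 := mod_cast (card_ball_pos hS m).ne'
  have hn : (Nat.card (ball S n) : ℝ) ≠ 0 := mod_cast (card_ball_pos hS n).ne'
  rw [← Real.log_mul hm hn]
  exact Real.log_le_log (mod_cast card_ball_pos hS _) (mod_cast card_ball_add hS m n)

lemma bddBelow_log_card_ball (S : Set G) :
    BddBelow (Set.range fun n : ℕ => Real.log (Nat.card (ball S n)) / n) :=
  ⟨0, by rintro _ ⟨n, rfl⟩; exact div_nonneg (Real.log_natCast_nonneg _) n.cast_nonneg⟩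

lemma tendsto_root_card_ball (hS : S.Finite) :
    Tendsto (fun n : ℕ => (Nat.card (ball S n) : ℝ) ^ ((1 : ℝ) / n)) atTop
      (𝓝 (Real.exp (subadditive_log_card_ball hS).lim)) := by
  have h := (Real.continuous_exp.tendsto _).comp
    ((subadditive_log_card_ball hS).tendsto_lim (bddBelow_log_card_ball S))
  refine h.congr fun n => ?_
  rw [Function.comp_apply, Real.rpow_def_of_pos (mod_cast card_ball_pos hS n), mul_one_div]

lemma growthRate_eq_exp_lim (hS : S.Finite) :
    growthRate S = Real.exp (subadditive_log_card_ball hS).lim :=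
  (tendsto_root_card_ball hS).limsup_eq

lemma tendsto_growthRate (hS : S.Finite) :
    Tendsto (fun n : ℕ => (Nat.card (ball S n) : ℝ) ^ ((1 : ℝ) / n)) atTop
      (𝓝 (growthRate S)) :=
  growthRate_eq_exp_lim hS ▸ tendsto_root_card_ball hS

lemma growthRate_pow_le (hS : S.Finite) (n : ℕ) :
    growthRate S ^ n ≤ Nat.card (ball S n) := by
  have hpos : (0 : ℝ) < Nat.card (ball S n) := mod_cast card_ball_pos hS n
  rcases eq_or_ne n 0 with rfl | hn
  · simp [ball_zero]
  rw [growthRate_eq_exp_lim hS, ← Real.exp_nat_mul, ← Real.le_log_iff_exp_le hpos,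
    ← le_div_iff₀' (by positivity)]
  exact (subadditive_log_card_ball hS).lim_le_div (bddBelow_log_card_ball S) hn

lemma one_le_growthRate (hS : S.Finite) : 1 ≤ growthRate S :=
  ge_of_tendsto' (tendsto_growthRate hS) fun n =>
    Real.one_le_rpow (mod_cast card_ball_pos hS n) (by positivity)

lemma le_growthRate (hS : S.Finite) {κ y : ℝ} (hκ : 0 < κ) (hy : 0 < y)
    (h : ∀ n : ℕ, κ * y ^ n ≤ Nat.card (ball S n)) : y ≤ growthRate S := by
  have hlim : Tendsto (fun n : ℕ => κ ^ ((1 : ℝ) / n) * y) atTop (𝓝 y) := by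
    have := (tendsto_const_nhds (x := κ)).rpow
      (tendsto_one_div_atTop_nhds_zero_nat (𝕜 := ℝ)) (.inl hκ.ne')
    simpa only [Real.rpow_zero, one_mul] using this.mul_const y
  refine le_of_tendsto_of_tendsto hlim (tendsto_growthRate hS) ?_
  filter_upwards [eventually_ne_atTop 0] with n hn
  calc κ ^ ((1 : ℝ) / n) * y = (κ * y ^ n) ^ ((1 : ℝ) / n) := by
        rw [Real.mul_rpow hκ.le (by positivity), one_div, Real.pow_rpow_inv_natCast hy.le hn]
    _ ≤ (Nat.card (ball S n) : ℝ) ^ ((1 : ℝ) / n) :=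
        Real.rpow_le_rpow (by positivity) (h n) (by positivity)

lemma growthRate_image_le {H : Type*} [Group H] (f : G →* H) (hS : S.Finite) :
    growthRate (f '' S) ≤ growthRate S := by
  refine le_of_tendsto_of_tendsto' (tendsto_growthRate (hS.image f)) (tendsto_growthRate hS)
    fun n => Real.rpow_le_rpow (by positivity) ?_ (by positivity)
  have hfin := finite_ball hS n
  exact mod_cast (Set.ncard_le_ncard (ball_image_subset f S n) (hfin.image f)).trans
    (Set.ncard_image_le hfin)

end Growth

/-! ### Generating series and renewal inequalities -/

section Series

lemma not_summable_pow_of_one_le_ncard_mul_pow {α : Type*} [Infinite α] {ℓ : α → ℕ} {z : ℝ}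
    (hz0 : 0 < z) (hz1 : z ≤ 1) (hcard : ∀ n, 1 ≤ ({a | ℓ a ≤ n}.ncard : ℝ) * z ^ n) :
    ¬ Summable fun a => z ^ ℓ a := by
  intro hsum
  rcases hz1.eq_or_lt with rfl | hlt
  · simp only [one_pow, summable_const_iff, one_ne_zero] at hsum
  let truncated (n : ℕ) (a : α) : ℝ := {a | ℓ a ≤ n}.indicator (fun _ => z ^ n) a
  have htsum : ∀ n, ∑' a, truncated n a = {a | ℓ a ≤ n}.ncard * z ^ n := fun n => by
    rw [← tsum_subtype {a | ℓ a ≤ n} fun _ => z ^ n, tsum_const, nsmul_eq_mul]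
    rfl
  have hlim : Tendsto (fun n => ∑' a, truncated n a) atTop (𝓝 (∑' _ : α, (0 : ℝ))) := by
    refine tendsto_tsum_of_dominated_convergence hsum (fun a => ?_) (.of_forall fun n a => ?_)
    · refine (tendsto_pow_atTop_nhds_zero_of_lt_one hz0.le hlt).congr' ?_
      filter_upwards [eventually_ge_atTop (ℓ a)] with n hn
      exact (Set.indicator_of_mem (s := {a | ℓ a ≤ n}) hn fun _ => z ^ n).symm
    · rw [Real.norm_of_nonneg (Set.indicator_nonneg (fun _ _ => by positivity) a)]
      exact Set.indicator_apply_le' (fun ha => pow_le_pow_of_le_one hz0.le hz1 ha)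
        fun _ => by positivity
  rw [tsum_zero] at hlim
  exact one_pos.not_ge (ge_of_tendsto' hlim fun n => (hcard n).trans_eq (htsum n).symm)

lemma summable_pow_of_forall_exists_mem {α ι : Type*} [Finite ι] {ℓ : α → ℕ} {P : Set α}
    {φ : ι → α → α} {m : ℕ} (hφ : ∀ i, (φ i).Injective) (hℓ : ∀ i a, ℓ (φ i a) ≤ ℓ a + m)
    (hP : ∀ a, ∃ i, φ i a ∈ P) {z : ℝ} (hz0 : 0 < z) (hz1 : z ≤ 1)
    (hsum : Summable fun a : P => z ^ ℓ a) : Summable fun a => z ^ ℓ a := by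
  have := Fintype.ofFinite ι
  have hsumP : Summable (P.indicator fun a => z ^ ℓ a) := summable_subtype_iff_indicator.1 hsum
  have hmajor : Summable fun a => ∑ i, z⁻¹ ^ m * P.indicator (fun a => z ^ ℓ a) (φ i a) :=
    summable_sum fun i _ => (hsumP.comp_injective (hφ i)).mul_left _
  refine hmajor.of_nonneg_of_le (fun a => by positivity) fun a => ?_
  have hnonneg : ∀ i, 0 ≤ z⁻¹ ^ m * P.indicator (fun a => z ^ ℓ a) (φ i a) := fun i =>
    mul_nonneg (by positivity) (Set.indicator_nonneg (fun _ _ => by positivity) _)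
  obtain ⟨i, hi⟩ := hP a
  calc z ^ ℓ a = z⁻¹ ^ m * z ^ (ℓ a + m) := by
        rw [pow_add, inv_pow, mul_comm (z ^ ℓ a), inv_mul_cancel_left₀ (by positivity)]
    _ ≤ z⁻¹ ^ m * P.indicator (fun a => z ^ ℓ a) (φ i a) := by
        rw [Set.indicator_of_mem hi]
        exact mul_le_mul_of_nonneg_left (pow_le_pow_of_le_one hz0.le hz1 (hℓ i a)) (by positivity)
    _ ≤ _ := Finset.single_le_sum (f := fun i => z⁻¹ ^ m * P.indicator _ (φ i a))
        (fun i _ => hnonneg i) (Finset.mem_univ i)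

end Series

section Renewal

variable {α : Type*} {A : Finset α} {ℓ : α → ℕ} {f : ℕ → ℕ} {N : ℕ}

lemma mul_inv_pow_le_of_renewal (hℓ : ∀ a ∈ A, 1 ≤ ℓ a ∧ ℓ a ≤ N) (hf_pos : ∀ n, 1 ≤ f n)
    (hf : ∀ n, N ≤ n → ∑ a ∈ A, f (n - ℓ a) ≤ f n)
    {z : ℝ} (hz0 : 0 < z) (hz1 : z ≤ 1) (hz : 1 ≤ ∑ a ∈ A, z ^ ℓ a) (n : ℕ) :
    z ^ N * z⁻¹ ^ n ≤ f n := by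
  induction n using Nat.strong_induction_on with
  | _ n ih =>
    rcases lt_or_ge n N with h | h
    · calc z ^ N * z⁻¹ ^ n ≤ 1 := by
            rw [inv_pow, ← div_eq_mul_inv, div_le_one (by positivity)]
            exact pow_le_pow_of_le_one hz0.le hz1 h.le
        _ ≤ f n := mod_cast hf_pos n
    · calc z ^ N * z⁻¹ ^ n ≤ (z ^ N * z⁻¹ ^ n) * ∑ a ∈ A, z ^ ℓ a :=
            le_mul_of_one_le_right (by positivity) hz
        _ = ∑ a ∈ A, z ^ N * z⁻¹ ^ (n - ℓ a) := by
            rw [Finset.mul_sum]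
            refine Finset.sum_congr rfl fun a ha => ?_
            obtain ⟨m, rfl⟩ := Nat.exists_eq_add_of_le ((hℓ a ha).2.trans h)
            rw [Nat.add_sub_cancel_left, pow_add, inv_pow z (ℓ a)]
            field_simp
        _ ≤ ∑ a ∈ A, (f (n - ℓ a) : ℝ) :=
            Finset.sum_le_sum fun a ha => ih _ (by have := hℓ a ha; omega)
        _ ≤ f n := mod_cast hf n h

lemma exists_gt_inv_of_renewal (hℓ : ∀ a ∈ A, 1 ≤ ℓ a ∧ ℓ a ≤ N) (hf_pos : ∀ n, 1 ≤ f n)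
    (hf : ∀ n, N ≤ n → ∑ a ∈ A, f (n - ℓ a) ≤ f n)
    {z : ℝ} (hz0 : 0 < z) (hz1 : z ≤ 1) (hz : 1 < ∑ a ∈ A, z ^ ℓ a) :
    ∃ y > z⁻¹, ∃ κ > 0, ∀ n : ℕ, κ * y ^ n ≤ f n := by
  have hcont : Continuous fun x : ℝ => ∑ a ∈ A, x ^ ℓ a := by fun_prop
  have hlt : ∀ᶠ x in 𝓝[<] z, 1 < ∑ a ∈ A, x ^ ℓ a :=
    ((hcont.tendsto z).eventually (lt_mem_nhds hz)).filter_mono nhdsWithin_le_nhds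
  obtain ⟨x, hx, hx0, hxz⟩ := (hlt.and (Ioo_mem_nhdsLT hz0)).exists
  exact ⟨x⁻¹, inv_strictAnti₀ hx0 hxz, x ^ N, by positivity,
    mul_inv_pow_le_of_renewal hℓ hf_pos hf hx0 (hxz.le.trans hz1) hx.le⟩

lemma sum_ncard_le_ncard {β γ : Type*} {T : α → Set β} {U : Set γ} (φ : α → β → γ)
    (hU : U.Finite) (h_maps : ∀ a ∈ A, Set.MapsTo (φ a) (T a) U)
    (h_inj : ∀ a ∈ A, ∀ b ∈ T a, ∀ a' ∈ A, ∀ b' ∈ T a', φ a b = φ a' b' → a = a' ∧ b = b') :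
    ∑ a ∈ A, (T a).ncard ≤ U.ncard := by
  have hT_inj : ∀ a ∈ A, Set.InjOn (φ a) (T a) := fun a ha b hb b' hb' h =>
    (h_inj a ha b hb a ha b' hb' h).2
  have hfin : ∀ a ∈ A, (φ a '' T a).Finite := fun a ha => hU.subset (h_maps a ha).image_subset
  have hdisj : (A : Set α).PairwiseDisjoint fun a => φ a '' T a := by
    refine fun a ha a' ha' hne => Set.disjoint_left.2 ?_
    rintro _ ⟨b, hb, rfl⟩ ⟨b', hb', h⟩
    exact hne (h_inj a ha b hb a' ha' b' hb' h.symm).1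
  calc ∑ a ∈ A, (T a).ncard = ∑ a ∈ A, (φ a '' T a).ncard :=
        Finset.sum_congr rfl fun a ha => (hT_inj a ha).ncard_image.symm
    _ = (⋃ a ∈ A, φ a '' T a).ncard := by
        rw [← finsum_mem_coe_finset]
        exact (A.finite_toSet.ncard_biUnion hfin hdisj).symm
    _ ≤ U.ncard := Set.ncard_le_ncard (Set.iUnion₂_subset fun a ha => (h_maps a ha).image_subset) hU

end Renewal

/-! ### Even Coxeter groups -/

section EvenCoxeter

variable {B W G : Type*} [Group W] [Group G] {M : CoxeterMatrix B} (cs : CoxeterSystem M W)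

/-- A Coxeter matrix is even if all its off-diagonal labels are; the label `∞`, encoded as `0`,
counts as even. -/
def IsEven (M : CoxeterMatrix B) : Prop := ∀ i j, i ≠ j → Even (M i j)

lemma pow_eq_one_of_even {x : G} (hx : x * x = 1) {m : ℕ} (hm : Even m) : x ^ m = 1 := by
  obtain ⟨k, rfl⟩ := hm
  rw [← two_mul, pow_mul, sq, hx, one_pow]

lemma isLiftable_mulIndicator (hM : IsEven M) {s : Set B} {f : B → G}
    (hf : ∀ i ∈ s, ∀ j ∈ s, (f i * f j) ^ M i j = 1) : M.IsLiftable (s.mulIndicator f) := by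
  have hsq : ∀ i ∈ s, f i * f i = 1 := fun i hi => by simpa [M.diagonal] using hf i hi i hi
  intro i j
  by_cases hi : i ∈ s <;> by_cases hj : j ∈ s <;>
    simp only [hi, hj, Set.mulIndicator_of_mem, Set.mulIndicator_of_notMem, not_false_eq_true,
      mul_one, one_mul, one_pow]
  · exact hf i hi j hj
  · exact pow_eq_one_of_even (hsq i hi) (hM i j fun h => hj (h ▸ hi))
  · exact pow_eq_one_of_even (hsq j hj) (hM i j fun h => hi (h ▸ hj))

/-- The homomorphism from an even Coxeter group that is given by `f` on the simple reflections with
index in `s` and kills the others. -/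
noncomputable def evenLift (hM : IsEven M) (s : Set B) (f : B → G)
    (hf : ∀ i ∈ s, ∀ j ∈ s, (f i * f j) ^ M i j = 1) : W →* G :=
  cs.lift ⟨s.mulIndicator f, isLiftable_mulIndicator hM hf⟩

section EvenLift

variable (hM : IsEven M) {s : Set B} {f : B → G}
  (hf : ∀ i ∈ s, ∀ j ∈ s, (f i * f j) ^ M i j = 1)

lemma evenLift_simple (i : B) : evenLift cs hM s f hf (cs.simple i) = s.mulIndicator f i :=
  cs.lift_apply_simple _ i

lemma evenLift_simple_of_mem {i : B} (hi : i ∈ s) :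
    evenLift cs hM s f hf (cs.simple i) = f i := by
  rw [evenLift_simple, Set.mulIndicator_of_mem hi]

lemma evenLift_simple_of_notMem {i : B} (hi : i ∉ s) :
    evenLift cs hM s f hf (cs.simple i) = 1 := by
  rw [evenLift_simple, Set.mulIndicator_of_notMem hi]

end EvenLift

lemma simple_ne_one (i : B) : cs.simple i ≠ 1 := fun h => by
  simpa [h] using cs.length_simple i

lemma orderOf_simple_mul_simple (hM : IsEven M) (i j : B) :
    orderOf (cs.simple i * cs.simple j) = M i j := by
  classical
  rcases eq_or_ne i j with rfl | hij
  · rw [cs.simple_mul_simple_self, orderOf_one, M.diagonal]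
  refine Nat.dvd_antisymm (orderOf_dvd_of_pow_eq_one (cs.simple_mul_simple_pow i j)) ?_
  let reflection (l : B) : DihedralGroup (M i j) := if l = i then .sr 0 else .sr 1
  have hreflection : ∀ l ∈ ({i, j} : Set B), ∀ l' ∈ ({i, j} : Set B),
      (reflection l * reflection l') ^ M l l' = 1 := by
    rintro l (rfl | rfl) l' (rfl | rfl)
    · simp [reflection]
    · simp [reflection, hij.symm]
    · simp [reflection, hij.symm, M.symmetric l l']
    · simp [reflection, hij.symm]
  let φ := evenLift cs hM {i, j} reflection hreflection
  have hφ : φ (cs.simple i * cs.simple j) = .r 1 := by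
    rw [map_mul, evenLift_simple_of_mem cs hM hreflection (.inl rfl),
      evenLift_simple_of_mem cs hM hreflection (.inr rfl)]
    simp [reflection, hij.symm]
  have hdvd := orderOf_map_dvd φ (cs.simple i * cs.simple j)
  rwa [hφ, DihedralGroup.orderOf_r_one] at hdvd

-- Killing the generator `i` trivializes the left-hand side only.
lemma simple_mul_simple_pow_ne (hM : IsEven M) {i j p q : B} (hij : i ≠ j) (hip : i ≠ p)
    (hiq : i ≠ q) {m : ℕ} (hm : Even m) (h : (cs.simple p * cs.simple q) ^ m ≠ 1) :
    (cs.simple i * cs.simple j) ^ m ≠ (cs.simple p * cs.simple q) ^ m := by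
  intro heq
  have hrel : ∀ l ∈ ({i}ᶜ : Set B), ∀ l' ∈ ({i}ᶜ : Set B),
      (cs.simple l * cs.simple l') ^ M l l' = 1 := fun l _ l' _ => cs.simple_mul_simple_pow l l'
  refine h ?_
  have := congrArg (evenLift cs hM {i}ᶜ cs.simple hrel) heq
  rwa [map_pow, map_mul, evenLift_simple_of_notMem cs hM hrel (not_not.2 rfl),
    evenLift_simple_of_mem cs hM hrel hij.symm, one_mul,
    pow_eq_one_of_even (cs.simple_mul_simple_self j) hm, map_pow, map_mul,
    evenLift_simple_of_mem cs hM hrel hip.symm, evenLift_simple_of_mem cs hM hrel hiq.symm,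
    eq_comm] at this

end EvenCoxeter

/-! ### Free splittings of Coxeter groups and syllables -/

section Splitting

open Monoid (CoprodI)

variable {B ι W : Type*} [Group W] {M : CoxeterMatrix B} (cs : CoxeterSystem M W) {c : B → ι}

/-- A colouring of the generators separates a Coxeter matrix if generators of different colours
satisfy no relation. The Coxeter group is then the free product of the subgroups generated by the
colour classes. -/
def Separates (M : CoxeterMatrix B) (c : B → ι) : Prop := ∀ i j, c i ≠ c j → M i j = 0

/-- The inclusion of a Coxeter group, as the free product of its colour classes, into the free
product of copies of the group itself. -/
noncomputable def split (hc : Separates M c) : W →* CoprodI fun _ : ι => W :=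
  cs.lift ⟨fun i => CoprodI.of (M := fun _ : ι => W) (i := c i) (cs.simple i), fun i j => by
    beta_reduce
    by_cases h : c i = c j
    · rw [h, ← map_mul, ← map_pow, cs.simple_mul_simple_pow, map_one]
    · rw [hc i j h, pow_zero]⟩

variable (hc : Separates M c)

lemma split_simple (i : B) :
    split cs hc (cs.simple i) = CoprodI.of (M := fun _ : ι => W) (i := c i) (cs.simple i) :=
  cs.lift_apply_simple _ i

lemma split_injective : Function.Injective (split cs hc) := by
  let fold : (CoprodI fun _ : ι => W) →* W := CoprodI.lift fun _ => MonoidHom.id W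
  have h : fold.comp (split cs hc) = MonoidHom.id W := cs.ext_simple fun i => by
    rw [MonoidHom.comp_apply, split_simple]
    exact CoprodI.lift_of _ _
  exact Function.LeftInverse.injective (DFunLike.congr_fun h)

/-- The subgroup generated by the simple reflections of colour `a`, described as the set of elements
which `split` sends to the corresponding free factor. -/
noncomputable def colorSubgroup (a : ι) : Subgroup W :=
  (split cs hc).eqLocus (CoprodI.of (M := fun _ : ι => W) (i := a))

lemma simple_mem_colorSubgroup (i : B) : cs.simple i ∈ colorSubgroup cs hc (c i) :=
  split_simple cs hc i

open Classical in
/-- The syllables of the normal form of an element of a Coxeter group as a free product: non-trivial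
elements of the colour classes, each tagged with its colour, neighbours having different colours. -/
noncomputable def syllables (w : W) : List (Σ _ : ι, W) :=
  (CoprodI.Word.equiv (split cs hc w)).toList

/-- The product of a list of syllables in the free product. -/
def syllableProd (S : List (Σ _ : ι, W)) : CoprodI fun _ : ι => W :=
  (S.map fun x => CoprodI.of (M := fun _ : ι => W) (i := x.1) x.2).prod

/-- The colour of the first syllable. -/
noncomputable def firstColor (w : W) : Option ι := (syllables cs hc w).head?.map Sigma.fst

/-- The colour of the last syllable. -/
noncomputable def lastColor (w : W) : Option ι := (syllables cs hc w).getLast?.map Sigma.fst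

lemma syllables_ne_one {w : W} {x : Σ _ : ι, W} (hx : x ∈ syllables cs hc w) : x.2 ≠ 1 := by
  classical exact (CoprodI.Word.equiv (split cs hc w)).ne_one x hx

lemma isChain_syllables (w : W) : (syllables cs hc w).IsChain fun x y => x.1 ≠ y.1 := by
  classical exact (CoprodI.Word.equiv (split cs hc w)).chain_ne

lemma syllableProd_syllables (w : W) : syllableProd (syllables cs hc w) = split cs hc w := by
  classical exact CoprodI.Word.equiv.symm_apply_apply (split cs hc w)

lemma syllables_eq {w : W} {S : List (Σ _ : ι, W)} (h_ne : ∀ x ∈ S, x.2 ≠ 1)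
    (h_chain : S.IsChain fun x y => x.1 ≠ y.1) (h_prod : syllableProd S = split cs hc w) :
    syllables cs hc w = S := by
  classical
  let word : CoprodI.Word fun _ : ι => W := ⟨S, h_ne, h_chain⟩
  have : CoprodI.Word.equiv (split cs hc w) = word :=
    CoprodI.Word.equiv.symm.injective ((CoprodI.Word.equiv.symm_apply_apply _).trans h_prod.symm)
  exact congrArg CoprodI.Word.toList this

lemma syllables_injective : Function.Injective (syllables cs hc) := fun w w' h =>
  split_injective cs hc (by
    rw [← syllableProd_syllables cs hc w, h, syllableProd_syllables cs hc w'])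

lemma syllables_one : syllables cs hc 1 = [] :=
  syllables_eq cs hc (by simp) List.isChain_nil (map_one (split cs hc)).symm

lemma syllables_of_mem_colorSubgroup {w : W} {a : ι} (hw : w ≠ 1)
    (ha : w ∈ colorSubgroup cs hc a) : syllables cs hc w = [⟨a, w⟩] :=
  syllables_eq cs hc (by simpa using hw) (List.isChain_singleton _)
    (by simpa [syllableProd] using ha.symm)

lemma syllables_simple (i : B) : syllables cs hc (cs.simple i) = [⟨c i, cs.simple i⟩] :=
  syllables_of_mem_colorSubgroup cs hc (simple_ne_one cs i) (simple_mem_colorSubgroup cs hc i)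

lemma syllables_mul {w w' : W} (h : ∀ a ∈ lastColor cs hc w, a ∉ firstColor cs hc w') :
    syllables cs hc (w * w') = syllables cs hc w ++ syllables cs hc w' := by
  refine syllables_eq cs hc (fun x hx => ?_) ?_ ?_
  · exact (List.mem_append.1 hx).elim (syllables_ne_one cs hc) (syllables_ne_one cs hc)
  · refine (isChain_syllables cs hc w).append (isChain_syllables cs hc w') fun x hx y hy hxy => ?_
    exact h x.1 (Option.mem_map_of_mem _ hx) (hxy ▸ Option.mem_map_of_mem _ hy)
  · rw [map_mul, ← syllableProd_syllables cs hc w, ← syllableProd_syllables cs hc w',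
      syllableProd, List.map_append, List.prod_append]
    rfl

lemma firstColor_mul {w w' : W} {a : ι} (ha : firstColor cs hc w = some a)
    (h : ∀ b ∈ lastColor cs hc w, b ∉ firstColor cs hc w') :
    firstColor cs hc (w * w') = some a := by
  obtain ⟨x, hx, rfl⟩ := Option.map_eq_some_iff.1 ha
  rw [firstColor, syllables_mul cs hc h, List.head?_append, hx]
  rfl

lemma lastColor_mul {w w' : W} {a : ι} (ha : lastColor cs hc w' = some a)
    (h : ∀ b ∈ lastColor cs hc w, b ∉ firstColor cs hc w') :
    lastColor cs hc (w * w') = some a := by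
  obtain ⟨x, hx, rfl⟩ := Option.map_eq_some_iff.1 ha
  rw [lastColor, syllables_mul cs hc h, List.getLast?_append, hx]
  rfl

lemma firstColor_simple (i : B) : firstColor cs hc (cs.simple i) = some (c i) := by
  rw [firstColor, syllables_simple]
  rfl

lemma lastColor_simple (i : B) : lastColor cs hc (cs.simple i) = some (c i) := by
  rw [lastColor, syllables_simple]
  rfl

lemma exists_firstColor_mul_eq (i : B) (w : W) :
    ∃ x ∈ ({1, cs.simple i} : Set W), firstColor cs hc (x * w) = some (c i) := by
  by_cases h : firstColor cs hc w = some (c i)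
  · exact ⟨1, .inl rfl, by rwa [one_mul]⟩
  · refine ⟨cs.simple i, .inr rfl, firstColor_mul cs hc (firstColor_simple cs hc i) ?_⟩
    rw [lastColor_simple]
    rintro _ ⟨⟩
    exact h

lemma exists_lastColor_mul_eq (i : B) {w : W} {a : ι} (ha : firstColor cs hc w = some a) :
    ∃ y ∈ ({1, cs.simple i} : Set W), firstColor cs hc (w * y) = some a ∧
      lastColor cs hc (w * y) = some (c i) := by
  by_cases h : lastColor cs hc w = some (c i)
  · exact ⟨1, .inl rfl, by rwa [mul_one], by rwa [mul_one]⟩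
  · have hne : ∀ b ∈ lastColor cs hc w, b ∉ firstColor cs hc (cs.simple i) := by
      rw [firstColor_simple]
      rintro b hb ⟨⟩
      exact h hb
    exact ⟨cs.simple i, .inr rfl, firstColor_mul cs hc ha hne,
      lastColor_mul cs hc (lastColor_simple cs hc i) hne⟩

lemma exists_firstColor_lastColor_eq (i j : B) (w : W) :
    ∃ x ∈ ({1, cs.simple i} : Set W), ∃ y ∈ ({1, cs.simple j} : Set W),
      firstColor cs hc (x * w * y) = some (c i) ∧ lastColor cs hc (x * w * y) = some (c j) := by
  obtain ⟨x, hx, hxw⟩ := exists_firstColor_mul_eq cs hc i w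
  exact ⟨x, hx, exists_lastColor_mul_eq cs hc j hxw⟩

section Map

variable {B' W' : Type*} [Group W'] {M' : CoxeterMatrix B'} (cs' : CoxeterSystem M' W')
  {c' : B' → ι} (hc' : Separates M' c')

lemma syllables_map {f : W →* W'} (hf : ∀ i, f (cs.simple i) ∈ colorSubgroup cs' hc' (c i)) {w : W}
    (hw : ∀ x ∈ syllables cs hc w, f x.2 ≠ 1) :
    syllables cs' hc' (f w) = (syllables cs hc w).map (Sigma.map id fun _ => f) := by
  let F : (CoprodI fun _ : ι => W) →* CoprodI fun _ : ι => W' :=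
    CoprodI.lift fun a => (CoprodI.of (M := fun _ : ι => W') (i := a)).comp f
  have hF_of : ∀ a x, F (CoprodI.of (M := fun _ : ι => W) (i := a) x) =
      CoprodI.of (M := fun _ : ι => W') (i := a) (f x) := fun a x => CoprodI.lift_of _ _
  have hF_split : F.comp (split cs hc) = (split cs' hc').comp f := cs.ext_simple fun i => by
    rw [MonoidHom.comp_apply, split_simple, hF_of]
    exact (hf i).symm
  have hF_prod : ∀ S, F (syllableProd S) = syllableProd (S.map (Sigma.map id fun _ => f)) :=
    fun S => by
      simp only [syllableProd, map_list_prod, List.map_map]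
      exact congrArg List.prod (List.map_congr_left fun x _ => hF_of x.1 x.2)
  refine syllables_eq cs' hc' (fun x hx => ?_) ?_ ?_
  · obtain ⟨y, hy, rfl⟩ := List.mem_map.1 hx
    exact hw y hy
  · rw [List.isChain_map]
    exact isChain_syllables cs hc w
  · rw [← hF_prod, syllableProd_syllables]
    exact DFunLike.congr_fun hF_split w

lemma firstColor_map {f : W →* W'} (hf : ∀ i, f (cs.simple i) ∈ colorSubgroup cs' hc' (c i)) {w : W}
    (hw : ∀ x ∈ syllables cs hc w, f x.2 ≠ 1) :
    firstColor cs' hc' (f w) = firstColor cs hc w := by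
  rw [firstColor, syllables_map cs hc cs' hc' hf hw, List.head?_map, Option.map_map]
  rfl

lemma lastColor_map {f : W →* W'} (hf : ∀ i, f (cs.simple i) ∈ colorSubgroup cs' hc' (c i)) {w : W}
    (hw : ∀ x ∈ syllables cs hc w, f x.2 ≠ 1) :
    lastColor cs' hc' (f w) = lastColor cs hc w := by
  rw [lastColor, syllables_map cs hc cs' hc' hf hw, List.getLast?_map, Option.map_map]
  rfl

end Map

end Splitting

section NoTrivialBlock

variable {B ι W : Type*} [Group W] {M : CoxeterMatrix B} (cs : CoxeterSystem M W) {c : B → ι}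

/-- A word in the simple reflections has no trivial block if none of its non-empty contiguous
subwords represents the identity. -/
def NoTrivialBlock (l : List B) : Prop := ∀ m, m ≠ [] → m <:+: l → cs.wordProd m ≠ 1

variable (hc : Separates M c)

lemma syllables_simple_mul_of_firstColor_ne {i : B} {w : W} (h : firstColor cs hc w ≠ some (c i)) :
    syllables cs hc (cs.simple i * w) = ⟨c i, cs.simple i⟩ :: syllables cs hc w := by
  rw [syllables_mul cs hc, syllables_simple, List.singleton_append]
  rw [lastColor_simple]
  rintro _ ⟨⟩
  exact h

lemma syllables_simple_mul_of_eq_cons {i : B} {w u : W} {S : List (Σ _ : ι, W)}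
    (h : syllables cs hc w = ⟨c i, u⟩ :: S) (hu : cs.simple i * u ≠ 1) :
    syllables cs hc (cs.simple i * w) = ⟨c i, cs.simple i * u⟩ :: S := by
  have h_chain := isChain_syllables cs hc w
  rw [h, List.isChain_cons] at h_chain
  refine syllables_eq cs hc (fun x hx => ?_) (List.isChain_cons.2 h_chain) ?_
  · rcases List.mem_cons.1 hx with rfl | hx
    · exact hu
    · exact syllables_ne_one cs hc (h ▸ List.mem_cons_of_mem _ hx)
  · simp only [map_mul, ← syllableProd_syllables cs hc w, h, split_simple, syllableProd,
      List.map_cons, List.prod_cons, mul_assoc]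

variable {cs}

lemma NoTrivialBlock.of_cons {i : B} {l : List B} (h : NoTrivialBlock cs (i :: l)) :
    NoTrivialBlock cs l := fun m hm hml => h m hm (hml.trans (List.suffix_cons i l).isInfix)

lemma NoTrivialBlock.exists_syllables_eq_cons {i : B} {l : List B}
    (hl : NoTrivialBlock cs (i :: l)) : ∃ m S, m <+: l ∧
      syllables cs hc (cs.wordProd (i :: l)) = ⟨c i, cs.wordProd (i :: m)⟩ :: S ∧
      ∀ x ∈ S, ∃ m', m' ≠ [] ∧ m' <:+: l ∧ cs.wordProd m' = x.2 := by
  induction l generalizing i with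
  | nil => exact ⟨[], [], List.prefix_rfl, by simp [syllables_simple], by simp⟩
  | cons j l ih =>
    obtain ⟨m, S, hm, h_syllables, hS⟩ := ih hl.of_cons
    have hS_cons : ∀ x ∈ S, ∃ m', m' ≠ [] ∧ m' <:+: j :: l ∧ cs.wordProd m' = x.2 := fun x hx =>
      let ⟨m', hm', h_infix, h_prod⟩ := hS x hx
      ⟨m', hm', h_infix.trans (List.suffix_cons j l).isInfix, h_prod⟩
    have hm_cons : j :: m <+: j :: l := List.cons_prefix_cons.2 ⟨rfl, hm⟩
    by_cases hij : c i = c j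
    · refine ⟨j :: m, S, hm_cons, ?_, hS_cons⟩
      have hne : cs.simple i * cs.wordProd (j :: m) ≠ 1 := by
        rw [← cs.wordProd_cons]
        exact hl _ (List.cons_ne_nil _ _) (List.cons_prefix_cons.2 ⟨rfl, hm_cons⟩).isInfix
      rw [cs.wordProd_cons i, cs.wordProd_cons i]
      exact syllables_simple_mul_of_eq_cons cs hc (hij ▸ h_syllables) hne
    · refine ⟨[], ⟨c j, cs.wordProd (j :: m)⟩ :: S, List.nil_prefix, ?_, ?_⟩
      · rw [cs.wordProd_cons i, cs.wordProd_singleton, ← h_syllables]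
        refine syllables_simple_mul_of_firstColor_ne cs hc ?_
        rw [firstColor, h_syllables]
        exact fun h => hij (Option.some_injective _ h).symm
      · exact List.forall_mem_cons.2
          ⟨⟨j :: m, List.cons_ne_nil _ _, hm_cons.isInfix, rfl⟩, hS_cons⟩

lemma NoTrivialBlock.exists_wordProd_eq_of_mem_syllables {l : List B} (hl : NoTrivialBlock cs l)
    {x : Σ _ : ι, W} (hx : x ∈ syllables cs hc (cs.wordProd l)) :
    ∃ m, m ≠ [] ∧ m <:+: l ∧ cs.wordProd m = x.2 := by
  cases l with
  | nil => simp [syllables_one] at hx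
  | cons i l =>
    obtain ⟨m, S, hm, h_syllables, hS⟩ := hl.exists_syllables_eq_cons hc
    rw [h_syllables, List.mem_cons] at hx
    rcases hx with rfl | hx
    · exact ⟨i :: m, List.cons_ne_nil _ _, (List.cons_prefix_cons.2 ⟨rfl, hm⟩).isInfix, rfl⟩
    · obtain ⟨m', hm', h_infix, h_prod⟩ := hS x hx
      exact ⟨m', hm', h_infix.trans (List.suffix_cons i l).isInfix, h_prod⟩

end NoTrivialBlock

/-! ### The Coxeter groups and their extensions by the shift -/

section Extension

open Multiplicative (ofAdd toAdd)
open SemidirectProduct (inl inr)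

/-- The Coxeter matrix on `ℤ` whose only relations say that `σᵢ σⱼ` has order `2 * k` whenever the
distance of `i` and `j` lies in `X`. -/
noncomputable def coxMatrix (k : ℕ) (X : Set ℕ) : CoxeterMatrix ℤ := by
  classical exact
  { M := .of fun i j => if i = j then 1 else if (i - j).natAbs ∈ X then 2 * k else 0
    isSymm := .ext fun i j => by
      simp only [Matrix.of_apply, eq_comm (a := i), ← Int.natAbs_neg (j - i), neg_sub]
    diagonal := fun i => by simp
    off_diagonal := fun i j h => by
      simp only [Matrix.of_apply, h, if_false]
      split_ifs <;> omega }

variable (k : ℕ) (X : Set ℕ)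

/-- The Coxeter system given by `coxMatrix`. -/
noncomputable abbrev cox : CoxeterSystem (coxMatrix k X) (coxMatrix k X).Group :=
  (coxMatrix k X).toCoxeterSystem

variable {k X}

lemma coxMatrix_of_mem {i j : ℤ} (hij : i ≠ j) (h : (i - j).natAbs ∈ X) :
    coxMatrix k X i j = 2 * k := by
  change ite _ _ _ = _
  rw [if_neg hij, if_pos h]

lemma coxMatrix_of_notMem {i j : ℤ} (hij : i ≠ j) (h : (i - j).natAbs ∉ X) :
    coxMatrix k X i j = 0 := by
  change ite _ _ _ = _
  rw [if_neg hij, if_neg h]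

lemma coxMatrix_add_right (i j p : ℤ) : coxMatrix k X (i + p) (j + p) = coxMatrix k X i j := by
  change ite _ _ _ = ite _ _ _
  rw [add_sub_add_right_eq_sub]
  simp only [add_left_inj]

lemma isEven_coxMatrix : IsEven (coxMatrix k X) := fun i j hij => by
  by_cases h : (i - j).natAbs ∈ X
  · rw [coxMatrix_of_mem hij h]
    exact even_two_mul k
  · rw [coxMatrix_of_notMem hij h]
    exact Even.zero

lemma simple_mul_simple_pow_eq_one {i j : ℤ} (h : (i - j).natAbs ∈ X) :
    ((cox k X).simple i * (cox k X).simple j) ^ (2 * k) = 1 := by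
  rcases eq_or_ne i j with rfl | hij
  · rw [CoxeterSystem.simple_mul_simple_self, one_pow]
  · rw [← coxMatrix_of_mem hij h, CoxeterSystem.simple_mul_simple_pow]

/-- The parity of the index of a reflection. -/
abbrev parity : ℤ → ZMod 2 := Int.cast

lemma separates_parity (hX : ∀ e ∈ X, Even e) : Separates (coxMatrix k X) parity := by
  intro i j hij
  refine coxMatrix_of_notMem (fun h => hij (congrArg parity h)) fun h => hij ?_
  rw [ZMod.intCast_eq_intCast_iff_dvd_sub, Nat.cast_two, ← even_iff_two_dvd, ← Int.natAbs_even,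
    ← Int.natAbs_neg, neg_sub]
  exact hX _ h

variable (k X)

/-- The endomorphism of the Coxeter group that moves all indices by `p`. -/
noncomputable def shiftHom (p : ℤ) : (coxMatrix k X).Group →* (coxMatrix k X).Group :=
  (cox k X).lift ⟨fun i => (cox k X).simple (i + p), fun i j => by
    rw [← coxMatrix_add_right i j p, CoxeterSystem.simple_mul_simple_pow]⟩

lemma shiftHom_simple (p i : ℤ) :
    shiftHom k X p ((cox k X).simple i) = (cox k X).simple (i + p) :=
  (cox k X).lift_apply_simple _ i

lemma shiftHom_comp (p q : ℤ) : (shiftHom k X p).comp (shiftHom k X q) = shiftHom k X (p + q) :=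
  (cox k X).ext_simple fun i => by
    rw [MonoidHom.comp_apply, shiftHom_simple, shiftHom_simple, shiftHom_simple, add_assoc,
      add_comm q]

lemma shiftHom_zero : shiftHom k X 0 = MonoidHom.id _ :=
  (cox k X).ext_simple fun i => by rw [shiftHom_simple, add_zero, MonoidHom.id_apply]

/-- The action of `ℤ` on the Coxeter group by moving indices. -/
noncomputable def shift : Multiplicative ℤ →* MulAut (coxMatrix k X).Group where
  toFun p := (shiftHom k X (toAdd p)).toMulEquiv (shiftHom k X (-toAdd p))
    (by rw [shiftHom_comp, neg_add_cancel, shiftHom_zero])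
    (by rw [shiftHom_comp, add_neg_cancel, shiftHom_zero])
  map_one' := MulEquiv.ext fun w => DFunLike.congr_fun (shiftHom_zero k X) w
  map_mul' p q := MulEquiv.ext fun w =>
    (DFunLike.congr_fun (shiftHom_comp k X (toAdd p) (toAdd q)) w).symm

variable {k X}

lemma shift_simple (p i : ℤ) :
    shift k X (ofAdd p) ((cox k X).simple i) = (cox k X).simple (i + p) :=
  shiftHom_simple k X p i

lemma shift_wordProd (p : ℤ) (l : List ℤ) :
    shift k X (ofAdd p) ((cox k X).wordProd l) = (cox k X).wordProd (l.map (· + p)) := by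
  induction l with
  | nil => simp
  | cons i l ih => rw [CoxeterSystem.wordProd_cons, map_mul, shift_simple, ih, List.map_cons,
      CoxeterSystem.wordProd_cons]

variable (k X) in
/-- The semidirect product of the Coxeter group with `ℤ` acting by shifts. Its element
`⟨w, ofAdd p⟩` is thought of as a walk on `ℤ` from `0` to `p` that emits the reflections of a word
for `w`. -/
abbrev Ext : Type := (coxMatrix k X).Group ⋊[shift k X] Multiplicative ℤ

lemma inr_mul_inl_mul_inr (p : ℤ) (w : (coxMatrix k X).Group) :
    (inr (ofAdd p) * inl w * inr (ofAdd (-p)) : Ext k X) = inl (shift k X (ofAdd p) w) :=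
  (SemidirectProduct.inl_aut _ _).symm

end Extension

/-! ### Walks -/

section Walk

open Multiplicative (ofAdd toAdd)
open SemidirectProduct (inl inr)

/-- The length of the walk on `ℤ` from `q` to `p` through the positions listed in `l`. -/
def walkCost : ℤ → List ℤ → ℤ → ℕ
  | q, [], p => (p - q).natAbs
  | q, i :: l, p => (i - q).natAbs + walkCost i l p

lemma walkCost_triangle (q q' : ℤ) (l : List ℤ) (p : ℤ) :
    walkCost q l p ≤ (q' - q).natAbs + walkCost q' l p := by
  cases l <;> simp only [walkCost] <;> omega

lemma walkCost_append_le (q : ℤ) (l l' : List ℤ) (r p : ℤ) :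
    walkCost q (l ++ l') p ≤ walkCost q l r + walkCost r l' p := by
  induction l generalizing q with
  | nil => exact walkCost_triangle q r l' p
  | cons i l ih =>
    simp only [List.cons_append, walkCost]
    linarith [ih i]

lemma walkCost_le_of_sublist {l l' : List ℤ} (h : l.Sublist l') (q p : ℤ) :
    walkCost q l p ≤ walkCost q l' p := by
  induction h generalizing q with
  | slnil => rfl
  | cons i _ ih => exact (walkCost_triangle q i _ p).trans (Nat.add_le_add_left (ih i) _)
  | cons_cons i _ ih => exact Nat.add_le_add_left (ih i) _

lemma walkCost_map_add (q : ℤ) (l : List ℤ) (p r : ℤ) :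
    walkCost (q + r) (l.map (· + r)) (p + r) = walkCost q l p := by
  induction l generalizing q with
  | nil => simp only [List.map_nil, walkCost, add_sub_add_right_eq_sub]
  | cons i l ih => simp only [List.map_cons, walkCost, add_sub_add_right_eq_sub, ih]

lemma natAbs_sub_le_walkCost {q : ℤ} {l : List ℤ} {p i : ℤ} (hi : i ∈ l) :
    (i - q).natAbs ≤ walkCost q l p := by
  induction l generalizing q with
  | nil => simp at hi
  | cons j l ih =>
    rcases List.mem_cons.1 hi with rfl | h
    · exact Nat.le_add_right _ _
    · have := ih (q := j) h
      simp only [walkCost]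
      omega

variable {k : ℕ} {X : Set ℕ}

/-- The length of a shortest walk representing an element of the extended group. -/
noncomputable def walkLength (g : Ext k X) : ℕ :=
  sInf {n | ∃ l, (cox k X).wordProd l = g.left ∧ walkCost 0 l (toAdd g.right) = n}

lemma walkLength_le {g : Ext k X} {l : List ℤ} (hl : (cox k X).wordProd l = g.left) :
    walkLength g ≤ walkCost 0 l (toAdd g.right) := Nat.sInf_le ⟨l, hl, rfl⟩

lemma exists_walk (g : Ext k X) :
    ∃ l, (cox k X).wordProd l = g.left ∧ walkCost 0 l (toAdd g.right) = walkLength g :=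
  Nat.sInf_mem (s := {n | ∃ l, (cox k X).wordProd l = g.left ∧ walkCost 0 l (toAdd g.right) = n})
    (let ⟨l, hl⟩ := (cox k X).wordProd_surjective g.left
     ⟨_, l, hl, rfl⟩)

-- A trivial block could be cut out, so a shortest walk with as few emissions as possible has none.
lemma exists_walk_noTrivialBlock (g : Ext k X) :
    ∃ l, (cox k X).wordProd l = g.left ∧ walkCost 0 l (toAdd g.right) = walkLength g ∧
      NoTrivialBlock (cox k X) l := by
  obtain ⟨l, ⟨h_prod, h_cost⟩, h_min⟩ := exists_minimalFor_of_wellFoundedLT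
    (fun l => (cox k X).wordProd l = g.left ∧ walkCost 0 l (toAdd g.right) = walkLength g)
    List.length (exists_walk g)
  refine ⟨l, h_prod, h_cost, ?_⟩
  rintro m hm ⟨l₁, l₂, rfl⟩ h_one
  have h_cut : (cox k X).wordProd (l₁ ++ l₂) = g.left := by
    simpa only [CoxeterSystem.wordProd_append, h_one, mul_one] using h_prod
  have h_sublist : (l₁ ++ l₂).Sublist (l₁ ++ m ++ l₂) :=
    (List.sublist_append_left l₁ m).append_right l₂
  have h_le := h_min ⟨h_cut, (walkLength_le h_cut).antisymm'
    ((walkCost_le_of_sublist h_sublist 0 _).trans_eq h_cost)⟩ h_sublist.length_le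
  have := List.length_pos_iff.2 hm
  simp only [List.length_append] at h_le
  omega

lemma walkLength_mul_le (g h : Ext k X) : walkLength (g * h) ≤ walkLength g + walkLength h := by
  obtain ⟨l, hl, hgl⟩ := exists_walk g
  obtain ⟨l', hl', hhl⟩ := exists_walk h
  have h_prod : (cox k X).wordProd (l ++ l'.map (· + toAdd g.right)) = (g * h).left := by
    rw [CoxeterSystem.wordProd_append, ← shift_wordProd, hl, hl']
    rfl
  refine (walkLength_le h_prod).trans
    ((walkCost_append_le _ _ _ (toAdd g.right) _).trans_eq (congrArg₂ _ hgl ?_))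
  rw [← hhl, ← walkCost_map_add 0 l' _ (toAdd g.right), zero_add, SemidirectProduct.mul_right,
    toAdd_mul, add_comm]

lemma walkLength_one : walkLength (1 : Ext k X) = 0 :=
  Nat.le_zero.1 (walkLength_le (l := []) rfl)

lemma walkLength_inr_le (p : ℤ) : walkLength (inr (ofAdd p) : Ext k X) ≤ p.natAbs :=
  (walkLength_le (l := []) rfl).trans_eq (congrArg Int.natAbs (sub_zero p))

lemma walkLength_inl_simple_le (i : ℤ) :
    walkLength (inl ((cox k X).simple i) : Ext k X) ≤ 2 * i.natAbs := by
  refine (walkLength_le (l := [i]) ((cox k X).wordProd_singleton i)).trans_eq ?_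
  simp [walkCost, two_mul]

lemma walkLength_pow_le (g : Ext k X) (n : ℕ) : walkLength (g ^ n) ≤ n * walkLength g := by
  induction n with
  | zero => rw [pow_zero, walkLength_one, zero_mul]
  | succ n ih =>
    rw [pow_succ, Nat.succ_mul]
    exact (walkLength_mul_le _ _).trans (Nat.add_le_add_right ih _)

end Walk

/-! ### The two-generator groups -/

section TwoGenerator

open Multiplicative (ofAdd toAdd)
open SemidirectProduct (inl inr)

variable (k : ℕ) (X : Set ℕ)

/-- The relators `(aᵉ bᵉ)²ᵏ` for `e ∈ X`, where `a` is the letter `true` and `b` is `false`. -/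
def relators : Set (FreeGroup Bool) :=
  {r | ∃ e ∈ X, r = (FreeGroup.of true ^ e * FreeGroup.of false ^ e) ^ (2 * k)}

variable {k} in
lemma relators_image (E : ℕ → ℕ) (I : Set ℕ) : relators k (E '' I) =
    {r | ∃ i ∈ I, r = (FreeGroup.of true ^ E i * FreeGroup.of false ^ E i) ^ (2 * k)} :=
  Set.ext fun _ => Set.exists_mem_image

/-- The group on two generators `a` and `b` with relators `(aᵉ bᵉ)²ᵏ` for `e ∈ X`. -/
abbrev Grp : Type := PresentedGroup (relators k X)

/-- The two generators of `Grp`. -/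
def gens : Set (Grp k X) := Set.range PresentedGroup.of

/-- The generator `a` of `Grp`. -/
abbrev genA : Grp k X := PresentedGroup.of true

/-- The generator `b` of `Grp`. -/
abbrev genB : Grp k X := PresentedGroup.of false

variable {k X}

lemma finite_gens : (gens k X).Finite := Set.finite_range _

lemma genA_mem_gens : genA k X ∈ gens k X := ⟨true, rfl⟩

lemma genB_mem_gens : genB k X ∈ gens k X := ⟨false, rfl⟩

lemma genA_pow_mul_genB_pow_pow {e : ℕ} (he : e ∈ X) :
    (genA k X ^ e * genB k X ^ e) ^ (2 * k) = 1 :=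
  PresentedGroup.one_of_mem ⟨e, he, rfl⟩

lemma genB_zpow_mul_genA_zpow_pow {p : ℤ} (hp : p.natAbs ∈ X) :
    (genB k X ^ p * genA k X ^ p) ^ (2 * k) = 1 := by
  have h := genA_pow_mul_genB_pow_pow (k := k) hp
  rcases Int.natAbs_eq p with hp' | hp' <;> rw [hp']
  · have h_conj := conj_pow (i := 2 * k) (a := genB k X ^ p.natAbs)
      (b := genA k X ^ p.natAbs * genB k X ^ p.natAbs)
    rw [h, mul_one, mul_inv_cancel, ← mul_assoc, mul_inv_cancel_right] at h_conj
    simpa only [zpow_natCast] using h_conj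
  · rw [zpow_neg, zpow_neg, zpow_natCast, zpow_natCast, ← mul_inv_rev, inv_pow, h, inv_one]

section Lift

variable {G : Type*} [Group G] {x y : G} (h : ∀ e ∈ X, (x ^ e * y ^ e) ^ (2 * k) = 1)

/-- The homomorphism from `Grp` that sends `a` to `x` and `b` to `y`. -/
def grpLift : Grp k X →* G :=
  PresentedGroup.toGroup (f := fun i => bif i then x else y) (by
    rintro _ ⟨e, he, rfl⟩
    simpa using h e he)

lemma grpLift_genA : grpLift h (genA k X) = x := PresentedGroup.toGroup.of _

lemma grpLift_genB : grpLift h (genB k X) = y := PresentedGroup.toGroup.of _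

lemma grp_hom_ext {f g : Grp k X →* G} (hA : f (genA k X) = g (genA k X))
    (hB : f (genB k X) = g (genB k X)) : f = g :=
  PresentedGroup.ext fun i => i.casesOn hB hA

end Lift

lemma growthRate_anti {Y : Set ℕ} (hXY : X ⊆ Y) :
    growthRate (gens k Y) ≤ growthRate (gens k X) := by
  let quotientMap : Grp k X →* Grp k Y := grpLift fun e he => genA_pow_mul_genB_pow_pow (hXY he)
  have h_image : quotientMap '' gens k X = gens k Y := by
    rw [gens, gens, ← Set.range_comp]
    exact congrArg Set.range (funext fun i => by cases i <;> exact PresentedGroup.toGroup.of _)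
  exact h_image ▸ growthRate_image_le quotientMap finite_gens

lemma inl_simple_mul_self (i : ℤ) :
    (inl ((cox k X).simple i) * inl ((cox k X).simple i) : Ext k X) = 1 := by
  rw [← map_mul, CoxeterSystem.simple_mul_simple_self, map_one]

lemma inl_simple_inv (i : ℤ) :
    (inl ((cox k X).simple i) : Ext k X)⁻¹ = inl ((cox k X).simple i) :=
  inv_eq_of_mul_eq_one_left (inl_simple_mul_self i)

lemma inl_simple_eq (p : ℤ) : (inl ((cox k X).simple p) : Ext k X) =
    inr (ofAdd p) * inl ((cox k X).simple 0) * inr (ofAdd (-p)) := by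
  rw [inr_mul_inl_mul_inr, shift_simple, zero_add]

lemma inr_zpow (p : ℤ) : (inr (ofAdd 1) : Ext k X) ^ p = inr (ofAdd p) := by
  rw [← map_zpow, ← ofAdd_zsmul, smul_eq_mul, mul_one]

lemma inr_conj_zpow (g : Ext k X) (p : ℤ) :
    (g * inr (ofAdd (-1)) * g⁻¹) ^ p = g * inr (ofAdd (-p)) * g⁻¹ := by
  rw [conj_zpow, ofAdd_neg, map_inv, inv_zpow, inr_zpow, ofAdd_neg, map_inv]

/-- The embedding of `Grp` into `Ext` given by `a ↦ t` and `b ↦ s t⁻¹ s⁻¹`, where `t` is the shift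
and `s` is the reflection `σ₀`. -/
noncomputable def toExt : Grp k X →* Ext k X :=
  grpLift (x := inr (ofAdd 1))
    (y := inl ((cox k X).simple 0) * inr (ofAdd (-1)) * (inl ((cox k X).simple 0))⁻¹)
    fun e he => by
      rw [← zpow_natCast (_ * _ * _⁻¹) e, inr_conj_zpow, ← zpow_natCast (inr _) e, inr_zpow,
        ← mul_assoc, ← mul_assoc, ← inl_simple_eq, inl_simple_inv, ← map_mul, ← map_pow,
        simple_mul_simple_pow_eq_one (by simpa using he), map_one]

lemma toExt_genA_zpow (p : ℤ) : toExt (genA k X ^ p) = inr (ofAdd p) := by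
  rw [map_zpow, toExt, grpLift_genA, inr_zpow]

lemma toExt_genB_zpow (p : ℤ) : toExt (genB k X ^ p) =
    inl ((cox k X).simple 0) * inr (ofAdd (-p)) * inl ((cox k X).simple 0) := by
  rw [map_zpow, toExt, grpLift_genB, inr_conj_zpow, inl_simple_inv]

/-- The endomorphism `a ↦ b⁻¹`, `b ↦ a⁻¹` of `Grp`, which conjugation by `s` induces. -/
def swapHom : Grp k X →* Grp k X :=
  grpLift (x := (genB k X)⁻¹) (y := (genA k X)⁻¹) fun e he => by
    have := genB_zpow_mul_genA_zpow_pow (k := k) (p := -e) (by simpa using he)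
    simpa only [zpow_neg, zpow_natCast, inv_pow] using this

lemma swapHom_genA : swapHom (genA k X) = (genB k X)⁻¹ := grpLift_genA _

lemma swapHom_genB : swapHom (genB k X) = (genA k X)⁻¹ := grpLift_genB _

lemma swapHom_comp_self : (swapHom : Grp k X →* _).comp swapHom = MonoidHom.id _ :=
  grp_hom_ext
    (by rw [MonoidHom.comp_apply, swapHom_genA, map_inv, swapHom_genB, inv_inv, MonoidHom.id_apply])
    (by rw [MonoidHom.comp_apply, swapHom_genB, map_inv, swapHom_genA, inv_inv, MonoidHom.id_apply])

/-- The involution `swapHom` as an automorphism. -/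
def swap : MulAut (Grp k X) := swapHom.toMulEquiv swapHom swapHom_comp_self swapHom_comp_self

lemma swap_mul_self : (swap : MulAut (Grp k X)) * swap = 1 :=
  MulEquiv.ext fun g => DFunLike.congr_fun swapHom_comp_self g

variable (k X) in
/-- The group `Grp` extended by all its automorphisms. It receives a homomorphism from `Ext` under
which the shift becomes `a` and `σ₀` becomes `swap`; this shows that `toExt` is injective. -/
abbrev Holomorph : Type := Grp k X ⋊[MonoidHom.id (MulAut (Grp k X))] MulAut (Grp k X)

/-- The image of the reflection `σᵢ` in the holomorph. -/
def reflectionImage (i : ℤ) : Holomorph k X :=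
  inl (genA k X ^ i) * inr swap * inl (genA k X ^ (-i))

lemma reflectionImage_mul (i j : ℤ) : (reflectionImage i * reflectionImage j : Holomorph k X) =
    inl (genA k X ^ i * (genB k X ^ (i - j) * genA k X ^ (i - j)) * (genA k X ^ i)⁻¹) := by
  have h_swap : (inr swap : Holomorph k X)⁻¹ = inr swap :=
    inv_eq_of_mul_eq_one_left (by rw [← map_mul, swap_mul_self, map_one])
  calc (reflectionImage i * reflectionImage j : Holomorph k X)
      = inl (genA k X ^ i) * (inr swap * inl (genA k X ^ (j - i)) * (inr swap)⁻¹) *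
          inl (genA k X ^ (-j)) := by
        rw [h_swap, sub_eq_neg_add, zpow_add, map_mul]
        simp only [reflectionImage, mul_assoc]
    _ = inl (genA k X ^ i * genB k X ^ (i - j) * genA k X ^ (-j)) := by
        rw [← map_inv, ← SemidirectProduct.inl_aut, ← map_mul, ← map_mul]
        congr 3
        change swapHom (genA k X ^ (j - i)) = _
        rw [map_zpow, swapHom_genA, inv_zpow', neg_sub]
    _ = _ := by group

lemma isLiftable_reflectionImage :
    (coxMatrix k X).IsLiftable (reflectionImage : ℤ → Holomorph k X) := fun i j => by
  rw [reflectionImage_mul, ← map_pow, conj_pow]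
  rcases eq_or_ne i j with rfl | hij
  · rw [sub_self, zpow_zero, zpow_zero, one_mul, one_pow, mul_one, mul_inv_cancel, map_one]
  by_cases h : (i - j).natAbs ∈ X
  · rw [coxMatrix_of_mem hij h, genB_zpow_mul_genA_zpow_pow h, mul_one, mul_inv_cancel, map_one]
  · rw [coxMatrix_of_notMem hij h, pow_zero, mul_one, mul_inv_cancel, map_one]

lemma reflectionImage_add (p i : ℤ) : (reflectionImage (i + p) : Holomorph k X) =
    inl (genA k X ^ p) * reflectionImage i * (inl (genA k X ^ p))⁻¹ := by
  simp only [reflectionImage, ← map_inv, mul_assoc, ← map_mul, ← zpow_neg, ← zpow_add]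
  simp only [← mul_assoc, ← map_mul, ← zpow_add, add_comm i, neg_add_rev]

/-- The homomorphism from `Ext` to the holomorph of `Grp`. -/
noncomputable def toHolomorph : Ext k X →* Holomorph k X :=
  SemidirectProduct.lift ((cox k X).lift ⟨reflectionImage, isLiftable_reflectionImage⟩)
    (inl.comp (zpowersHom (Grp k X) (genA k X))) fun p => (cox k X).ext_simple fun i => by
      change (cox k X).lift _ (shift k X (ofAdd (toAdd p)) _) =
        inl (genA k X ^ toAdd p) * (cox k X).lift _ _ * (inl (genA k X ^ toAdd p))⁻¹
      rw [shift_simple, CoxeterSystem.lift_apply_simple, CoxeterSystem.lift_apply_simple,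
        reflectionImage_add]

lemma toHolomorph_inl_simple (i : ℤ) :
    (toHolomorph (inl ((cox k X).simple i)) : Holomorph k X) = reflectionImage i := by
  rw [toHolomorph, SemidirectProduct.lift_inl, CoxeterSystem.lift_apply_simple]

lemma toHolomorph_inr (p : ℤ) :
    (toHolomorph (inr (ofAdd p)) : Holomorph k X) = inl (genA k X ^ p) := by
  rw [toHolomorph, SemidirectProduct.lift_inr]
  rfl

lemma toHolomorph_comp_toExt : toHolomorph.comp toExt = (inl : Grp k X →* Holomorph k X) := by
  refine grp_hom_ext ?_ ?_
  · rw [MonoidHom.comp_apply, ← zpow_one (genA k X), toExt_genA_zpow, toHolomorph_inr]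
  · rw [MonoidHom.comp_apply, ← zpow_one (genB k X), toExt_genB_zpow, map_mul, map_mul,
      toHolomorph_inl_simple, toHolomorph_inr]
    have h : inl (genA k X ^ (-1 : ℤ)) * (reflectionImage 0 : Holomorph k X) =
        reflectionImage (-1) * inl (genA k X ^ (-1 : ℤ)) := by
      rw [← zero_add (-1 : ℤ), reflectionImage_add, zero_add, inv_mul_cancel_right]
    rw [mul_assoc, h, ← mul_assoc, reflectionImage_mul, ← map_mul]
    congr 1
    group

lemma toExt_injective : Function.Injective (toExt : Grp k X →* Ext k X) := fun x y hxy =>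
  SemidirectProduct.inl_injective (by
    rw [← toHolomorph_comp_toExt, MonoidHom.comp_apply, hxy, MonoidHom.comp_apply])

end TwoGenerator

/-! ### Comparison of the word length of `Grp` and the walk length -/

section Comparison

open Multiplicative (ofAdd toAdd)
open SemidirectProduct (inl inr)

variable {k : ℕ} {X : Set ℕ}

lemma walkLength_toExt_le {x : Grp k X} (hx : x ∈ gens k X ∨ x⁻¹ ∈ gens k X) :
    walkLength (toExt x) ≤ 1 := by
  have hA : ∀ p : ℤ, walkLength (toExt (genA k X ^ p)) ≤ p.natAbs := fun p =>
    toExt_genA_zpow (k := k) (X := X) p ▸ walkLength_inr_le p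
  have hB : ∀ p : ℤ, walkLength (toExt (genB k X ^ p)) ≤ p.natAbs := fun p => by
    have h_zero : walkLength (inl ((cox k X).simple 0) : Ext k X) ≤ 0 := walkLength_inl_simple_le 0
    have h_inr := walkLength_inr_le (k := k) (X := X) (-p)
    have := walkLength_mul_le (inl ((cox k X).simple 0) : Ext k X) (inr (ofAdd (-p)))
    have := walkLength_mul_le (inl ((cox k X).simple 0) * inr (ofAdd (-p)) : Ext k X)
      (inl ((cox k X).simple 0))
    rw [toExt_genB_zpow]
    omega
  have h_gen : ∀ i, PresentedGroup.of i = x ∨ PresentedGroup.of i = x⁻¹ →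
      walkLength (toExt x) ≤ 1 := by
    rintro (_ | _) (rfl | hi)
    · simpa only [zpow_one] using! hB 1
    · simpa only [zpow_neg_one, ← inv_eq_iff_eq_inv.2 hi] using! hB (-1)
    · simpa only [zpow_one] using! hA 1
    · simpa only [zpow_neg_one, ← inv_eq_iff_eq_inv.2 hi] using! hA (-1)
  rcases hx with ⟨i, hi⟩ | ⟨i, hi⟩
  · exact h_gen i (.inl hi)
  · exact h_gen i (.inr hi)

lemma walkLength_toExt_le_of_mem_ball {n : ℕ} {g : Grp k X} (hg : g ∈ ball (gens k X) n) :
    walkLength (toExt g) ≤ n :=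
  length_le_of_mem_ball (ℓ := fun g => walkLength (toExt g)) (by rw [map_one, walkLength_one])
    (fun g h => by simpa only [map_mul] using walkLength_mul_le (toExt g) (toExt h))
    (fun _ => walkLength_toExt_le) hg

variable (k X) in
/-- The union of the images of a ball of `Grp` in the two cosets of `Grp` in `Ext`. -/
def ballCosets (n : ℕ) : Set (Ext k X) :=
  toExt '' ball (gens k X) n ∪
    (inl ((cox k X).simple 0) * ·) '' (toExt '' ball (gens k X) n)

lemma inl_simple_zero_mul_mem_ballCosets {n : ℕ} {g : Ext k X} (hg : g ∈ ballCosets k X n) :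
    inl ((cox k X).simple 0) * g ∈ ballCosets k X n := by
  rcases hg with hg | ⟨g, hg, rfl⟩
  · exact .inr ⟨g, hg, rfl⟩
  · refine .inl ?_
    rwa [← mul_assoc, inl_simple_mul_self, one_mul]

lemma inr_mul_mem_ballCosets {n : ℕ} {g : Ext k X} (hg : g ∈ ballCosets k X n) (p : ℤ) :
    inr (ofAdd p) * g ∈ ballCosets k X (p.natAbs + n) := by
  rcases hg with ⟨x, hx, rfl⟩ | ⟨_, ⟨x, hx, rfl⟩, rfl⟩
  · exact .inl ⟨genA k X ^ p * x, mul_mem_ball (zpow_mem_ball genA_mem_gens le_rfl) hx,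
      by rw [map_mul, toExt_genA_zpow]⟩
  · refine .inr ⟨_, ⟨genB k X ^ (-p) * x,
      mul_mem_ball (zpow_mem_ball genB_mem_gens p.natAbs_neg.le) hx, rfl⟩, ?_⟩
    simp only [map_mul, toExt_genB_zpow, neg_neg, ← mul_assoc, inl_simple_mul_self, one_mul]

lemma walk_mem_ballCosets (q p : ℤ) (l : List ℤ) :
    (inr (ofAdd (-q)) * inl ((cox k X).wordProd l) * inr (ofAdd p) : Ext k X) ∈
      ballCosets k X (walkCost q l p) := by
  have h_step : ∀ i : ℤ, (inr (ofAdd (i - q)) : Ext k X) = inr (ofAdd (-q)) * inr (ofAdd i) :=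
    fun i => by rw [sub_eq_neg_add, ofAdd_add, map_mul]
  induction l generalizing q with
  | nil =>
    have := inr_mul_mem_ballCosets (k := k) (X := X) (.inl ⟨1, one_mem_ball _ 0, map_one _⟩) (p - q)
    rw [h_step, mul_one] at this
    rwa [CoxeterSystem.wordProd_nil, map_one, mul_one, walkCost]
  | cons i l ih =>
    have := inr_mul_mem_ballCosets (inl_simple_zero_mul_mem_ballCosets
      (ih i fun j => by rw [sub_eq_neg_add, ofAdd_add, map_mul])) (i - q)
    rw [h_step] at this
    rw [CoxeterSystem.wordProd_cons, map_mul, inl_simple_eq, walkCost]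
    simpa only [mul_assoc] using this

lemma mem_ballCosets_walkLength (g : Ext k X) : g ∈ ballCosets k X (walkLength g) := by
  obtain ⟨l, hl, h_cost⟩ := exists_walk g
  have := walk_mem_ballCosets (k := k) (X := X) 0 (toAdd g.right) l
  rwa [hl, h_cost, neg_zero, ofAdd_zero, map_one, one_mul, ofAdd_toAdd,
    SemidirectProduct.inl_left_mul_inr_right] at this

lemma finite_ballCosets (n : ℕ) : (ballCosets k X n).Finite :=
  have := (finite_ball (finite_gens (k := k) (X := X)) n).image toExt
  this.union (this.image _)

lemma walkLength_le_subset_ballCosets (n : ℕ) :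
    {g : Ext k X | walkLength g ≤ n} ⊆ ballCosets k X n := fun g hg =>
  have h_mono := Set.image_mono (f := toExt) (ball_mono (gens k X) hg)
  Set.union_subset_union h_mono (Set.image_mono h_mono) (mem_ballCosets_walkLength g)

lemma finite_walkLength_le (n : ℕ) : {g : Ext k X | walkLength g ≤ n}.Finite :=
  (finite_ballCosets n).subset (walkLength_le_subset_ballCosets n)

lemma card_ball_le_ncard_walkLength_le (n : ℕ) :
    Nat.card (ball (gens k X) n) ≤ {g : Ext k X | walkLength g ≤ n}.ncard := by
  rw [Nat.card_coe_set_eq, ← Set.ncard_image_of_injective _ toExt_injective]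
  refine Set.ncard_le_ncard ?_ (finite_walkLength_le n)
  rintro _ ⟨g, hg, rfl⟩
  exact walkLength_toExt_le_of_mem_ball hg

lemma ncard_walkLength_le_le (n : ℕ) :
    {g : Ext k X | walkLength g ≤ n}.ncard ≤ 2 * Nat.card (ball (gens k X) n) := by
  have h_finite := finite_ball (finite_gens (k := k) (X := X)) n
  have h_image := Set.ncard_image_le (f := toExt) h_finite
  calc _ ≤ (ballCosets k X n).ncard :=
        Set.ncard_le_ncard (walkLength_le_subset_ballCosets n) (finite_ballCosets n)
    _ ≤ _ := Set.ncard_union_le _ _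
    _ ≤ Nat.card (ball (gens k X) n) + Nat.card (ball (gens k X) n) :=
        add_le_add h_image ((Set.ncard_image_le (h_finite.image _)).trans h_image)
    _ = _ := (two_mul _).symm

end Comparison

/-! ### Elements with odd ends -/

section OddEnds

open Multiplicative (ofAdd toAdd)
open SemidirectProduct (inl inr)

variable {k : ℕ} {X : Set ℕ} (hX : Separates (coxMatrix k X) parity)

lemma parity_add_of_even {p : ℤ} (hp : Even p) (i : ℤ) : parity (i + p) = parity i := by
  rw [parity, Int.cast_add, (ZMod.intCast_zmod_eq_zero_iff_dvd p 2).2 hp.two_dvd, add_zero]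

lemma firstColor_shift {p : ℤ} (hp : Even p) (w : (coxMatrix k X).Group) :
    firstColor (cox k X) hX (shift k X (ofAdd p) w) = firstColor (cox k X) hX w := by
  refine firstColor_map (cox k X) hX (cox k X) hX (f := (shift k X (ofAdd p)).toMonoidHom)
    (fun i => ?_) fun x hx h =>
      syllables_ne_one _ _ hx ((map_eq_one_iff _ (MulEquiv.injective _)).1 h)
  rw [← parity_add_of_even hp i, MulEquiv.coe_toMonoidHom, shift_simple]
  exact simple_mem_colorSubgroup (cox k X) hX _

/-- Elements `⟨w, ofAdd p⟩` with `p` even such that the normal form of `w` starts and ends with a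
syllable of odd colour. -/
structure OddEnds (a : Ext k X) : Prop where
  even_right : Even (toAdd a.right)
  firstColor_left : firstColor (cox k X) hX a.left = some 1
  lastColor_left : lastColor (cox k X) hX a.left = some 1

variable (k X) in
/-- The finite set of factors by which we multiply an arbitrary element, on both sides, in order to
give it odd ends. -/
def correctors : Set (Ext k X) :=
  Set.image2 (fun ε u => inr (ofAdd ε) * inl u) {0, 1} {1, (cox k X).simple 1}

lemma finite_correctors : (correctors k X).Finite :=
  (Set.toFinite _).image2 _ (Set.toFinite _)

lemma walkLength_correctors_le {x : Ext k X} (hx : x ∈ correctors k X) : walkLength x ≤ 3 := by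
  obtain ⟨ε, hε, u, hu, rfl⟩ := hx
  have h_inr : walkLength (inr (ofAdd ε) : Ext k X) ≤ 1 := by
    refine (walkLength_inr_le ε).trans ?_
    rcases hε with rfl | rfl <;> decide
  have h_inl : walkLength (inl u : Ext k X) ≤ 2 := by
    rcases hu with rfl | rfl
    · rw [map_one, walkLength_one]
      exact Nat.zero_le 2
    · exact walkLength_inl_simple_le 1
  exact (walkLength_mul_le _ _).trans (add_le_add h_inr h_inl)

lemma exists_oddEnds (a : Ext k X) :
    ∃ x ∈ correctors k X, ∃ y ∈ correctors k X, OddEnds hX (x * a * y) := by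
  obtain ⟨ε, hε, h_even⟩ : ∃ ε ∈ ({0, 1} : Set ℤ), Even (toAdd a.right + ε) := by
    rcases Int.even_or_odd (toAdd a.right) with h | h
    · exact ⟨0, .inl rfl, by rwa [add_zero]⟩
    · exact ⟨1, .inr rfl, h.add_one⟩
  set q := toAdd a.right + ε with hq
  obtain ⟨x, hx, y, hy, h_first, h_last⟩ :=
    exists_firstColor_lastColor_eq (cox k X) hX 1 (1 + q) a.left
  obtain ⟨u, hu, rfl⟩ : ∃ u ∈ ({1, (cox k X).simple 1} : Set _), shift k X (ofAdd q) u = y := by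
    rcases hy with rfl | rfl
    · exact ⟨1, .inl rfl, map_one _⟩
    · exact ⟨_, .inr rfl, shift_simple q 1⟩
  refine ⟨_, ⟨0, .inl rfl, x, hx, rfl⟩, _, ⟨ε, hε, u, hu, rfl⟩, ?_⟩
  have h_eq : inr (ofAdd 0) * inl x * a * (inr (ofAdd ε) * inl u) =
      ⟨x * a.left * shift k X (ofAdd q) u, ofAdd q⟩ := by
    ext <;> simp [hq, ofAdd_add]
  have h_one : parity 1 = 1 := Int.cast_one
  rw [h_one] at h_first
  rw [parity_add_of_even h_even, h_one] at h_last
  exact h_eq ▸ ⟨h_even, h_first, h_last⟩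

lemma not_summable_oddEnds : ¬ Summable fun a : {a : Ext k X // OddEnds hX a} =>
    (growthRate (gens k X))⁻¹ ^ walkLength a.1 := by
  intro h_sum
  have h_one := one_le_growthRate (finite_gens (k := k) (X := X))
  have h_pos : 0 < growthRate (gens k X) := one_pos.trans_le h_one
  have : Infinite (Ext k X) := .of_injective _ SemidirectProduct.inr_injective
  have : Finite (correctors k X) := finite_correctors
  refine not_summable_pow_of_one_le_ncard_mul_pow (ℓ := walkLength (k := k) (X := X))
    (inv_pos.2 h_pos) (inv_le_one_of_one_le₀ h_one) (fun n => ?_)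
    (summable_pow_of_forall_exists_mem (P := {a | OddEnds hX a}) (m := 6)
      (φ := fun (c : correctors k X × correctors k X) a => c.1.1 * a * c.2.1) ?_ ?_ ?_
      (inv_pos.2 h_pos) (inv_le_one_of_one_le₀ h_one) h_sum)
  · rw [inv_pow, ← div_eq_mul_inv, one_le_div (pow_pos h_pos n)]
    exact (growthRate_pow_le finite_gens n).trans
      (Nat.cast_le.2 (card_ball_le_ncard_walkLength_le n))
  · exact fun c => (mul_left_injective _).comp (mul_right_injective _)
  · intro c a
    have := walkLength_mul_le (c.1.1 * a) c.2.1
    have := walkLength_mul_le c.1.1 a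
    have := walkLength_correctors_le c.1.2
    have := walkLength_correctors_le c.2.2
    omega
  · intro a
    obtain ⟨x, hx, y, hy, h⟩ := exists_oddEnds hX a
    exact ⟨(⟨x, hx⟩, ⟨y, hy⟩), h⟩

end OddEnds

/-! ### Retractions and lifts -/

section Retraction

open Multiplicative (ofAdd toAdd)
open SemidirectProduct (inl inr)

variable {k : ℕ} {X Y : Set ℕ} {ρ : ℕ}

/-- The homomorphism that keeps the reflections of index at most `ρ` in absolute value and kills the
others. It exists if every relation of `X` between the reflections that it keeps holds for `Y`. -/
noncomputable def retract (hXY : ∀ e ∈ X, e ≤ 2 * ρ → e ∈ Y) :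
    (coxMatrix k X).Group →* (coxMatrix k Y).Group :=
  evenLift (cox k X) isEven_coxMatrix {i | i.natAbs ≤ ρ} (cox k Y).simple
    fun i (hi : i.natAbs ≤ ρ) j (hj : j.natAbs ≤ ρ) => by
      rcases eq_or_ne i j with rfl | hij
      · rw [CoxeterSystem.simple_mul_simple_self, one_pow]
      by_cases h : (i - j).natAbs ∈ X
      · rw [coxMatrix_of_mem hij h, simple_mul_simple_pow_eq_one (hXY _ h (by omega))]
      · rw [coxMatrix_of_notMem hij h, pow_zero]

variable (hXY : ∀ e ∈ X, e ≤ 2 * ρ → e ∈ Y)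

lemma retract_simple_eq_one_or (i : ℤ) : retract (k := k) hXY ((cox k X).simple i) = 1 ∨
    retract (k := k) hXY ((cox k X).simple i) = (cox k Y).simple i := by
  rw [retract, evenLift_simple]
  exact Set.mulIndicator_eq_one_or_self _ _ _

lemma retract_wordProd {l : List ℤ} (hl : ∀ i ∈ l, i.natAbs ≤ ρ) :
    retract (k := k) hXY ((cox k X).wordProd l) = (cox k Y).wordProd l := by
  induction l with
  | nil => simp
  | cons i l ih =>
    obtain ⟨hi, hl⟩ := List.forall_mem_cons.1 hl
    rw [CoxeterSystem.wordProd_cons, CoxeterSystem.wordProd_cons, map_mul, ih hl]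
    exact congrArg (· * _) (evenLift_simple_of_mem _ _ _ hi)

variable (hX : Separates (coxMatrix k X) parity) (hY : Separates (coxMatrix k Y) parity)

lemma retract_simple_mem_colorSubgroup (i : ℤ) :
    retract hXY ((cox k X).simple i) ∈ colorSubgroup (cox k Y) hY (parity i) := by
  rcases retract_simple_eq_one_or (k := k) hXY i with h | h <;> rw [h]
  · exact one_mem _
  · exact simple_mem_colorSubgroup _ _ i

/-- `b` is a lift of `a` along the retraction that is no longer than `a` and no syllable of which is
killed by the retraction. -/
structure IsLift (a : Ext k Y) (b : Ext k X) : Prop where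
  walkLength_le : walkLength b ≤ walkLength a
  right_eq : b.right = a.right
  retract_left : retract hXY b.left = a.left
  retract_ne_one : ∀ x ∈ syllables (cox k X) hX b.left, retract hXY x.2 ≠ 1

variable {hXY hX} in
lemma IsLift.oddEnds {a : Ext k Y} {b : Ext k X} (h : IsLift hXY hX a b) (ha : OddEnds hY a) :
    OddEnds hX b where
  even_right := h.right_eq ▸ ha.even_right
  firstColor_left := by
    rw [← firstColor_map _ hX _ hY (retract_simple_mem_colorSubgroup hXY hY) h.retract_ne_one,
      h.retract_left, ha.firstColor_left]
  lastColor_left := by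
    rw [← lastColor_map _ hX _ hY (retract_simple_mem_colorSubgroup hXY hY) h.retract_ne_one,
      h.retract_left, ha.lastColor_left]

-- A shortest walk without trivial blocks lifts to one without trivial blocks, whose syllables are
-- non-empty blocks.
lemma exists_isLift {a : Ext k Y} (ha : walkLength a ≤ ρ) : ∃ b, IsLift hXY hX a b := by
  obtain ⟨l, h_prod, h_cost, h_block⟩ := exists_walk_noTrivialBlock a
  have h_retract : ∀ m, m <:+: l →
      retract hXY ((cox k X).wordProd m) = (cox k Y).wordProd m := fun m hm =>
    retract_wordProd hXY fun i hi => by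
      have := natAbs_sub_le_walkCost (q := 0) (p := toAdd a.right) (hm.subset hi)
      rw [sub_zero] at this
      omega
  have h_lift_block : NoTrivialBlock (cox k X) l := fun m hm hml h_one =>
    h_block m hm hml (by rw [← h_retract m hml, h_one, map_one])
  refine ⟨⟨(cox k X).wordProd l, a.right⟩, (walkLength_le rfl).trans_eq h_cost, rfl,
    (h_retract l List.infix_rfl).trans h_prod, fun x hx => ?_⟩
  obtain ⟨m, hm, hml, h_eq⟩ := h_lift_block.exists_wordProd_eq_of_mem_syllables hX hx
  rw [← h_eq, h_retract m hml]
  exact h_block m hm hml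

end Retraction

/-! ### Separators -/

section Separator

open Multiplicative (ofAdd toAdd)
open SemidirectProduct (inl inr)

variable {k : ℕ} {X Y : Set ℕ} {L : ℕ}

variable (k X L) in
/-- The relator that the label `L` would impose on the reflections with indices `p` and `p + L`. -/
noncomputable def separator (p : ℤ) : (coxMatrix k X).Group :=
  ((cox k X).simple p * (cox k X).simple (p + L)) ^ (2 * k)

lemma shift_separator (p : ℤ) : shift k X (ofAdd p) (separator k X L 0) = separator k X L p := by
  rw [separator, map_pow, map_mul, shift_simple, shift_simple, zero_add, zero_add, add_comm,
    separator]

lemma walkLength_inl_separator_le :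
    walkLength (inl (separator k X L 0) : Ext k X) ≤ 2 * k * (2 * L) := by
  rw [separator, zero_add, map_pow, map_mul]
  refine (walkLength_pow_le _ _).trans (Nat.mul_le_mul_left _ ((walkLength_mul_le _ _).trans ?_))
  have h_zero := walkLength_inl_simple_le (k := k) (X := X) 0
  have h_L := walkLength_inl_simple_le (k := k) (X := X) L
  simpa using add_le_add h_zero h_L

lemma retract_separator {ρ : ℕ} (hXY : ∀ e ∈ X, e ≤ 2 * ρ → e ∈ Y) (hL : L ∈ Y) (p : ℤ) :
    retract hXY (separator k X L p) = 1 := by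
  have h_pow : ∀ i, (cox k Y).simple i ^ (2 * k) = 1 := fun i =>
    pow_eq_one_of_even ((cox k Y).simple_mul_simple_self i) (even_two_mul k)
  rw [separator, map_pow, map_mul]
  rcases retract_simple_eq_one_or (k := k) hXY p with h | h <;>
    rcases retract_simple_eq_one_or (k := k) hXY (p + L) with h' | h' <;> rw [h, h']
  · rw [one_mul, one_pow]
  · rw [one_mul, h_pow]
  · rw [mul_one, h_pow]
  · exact simple_mul_simple_pow_eq_one (by simpa using hL)

lemma separator_ne_one (hk : k ≠ 0) (hL0 : L ≠ 0) (hL : L ∉ X) (p : ℤ) :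
    separator k X L p ≠ 1 := fun h => by
  have h_order := orderOf_simple_mul_simple (cox k X) isEven_coxMatrix p (p + L)
  rw [coxMatrix_of_notMem (by simpa using hL0) (by simpa using hL), orderOf_eq_zero_iff'] at h_order
  exact h_order (2 * k) (by omega) h

lemma separator_injective (hk : k ≠ 0) (hL0 : L ≠ 0) (hL : L ∉ X) :
    Function.Injective (separator k X L) := by
  suffices h : ∀ p q : ℤ, p < q → separator k X L p ≠ separator k X L q by
    intro p q h_eq
    by_contra h_ne
    exact (lt_or_gt_of_ne h_ne).elim (fun hpq => h p q hpq h_eq) fun hqp => h q p hqp h_eq.symm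
  exact fun p q hpq => simple_mul_simple_pow_ne (cox k X) isEven_coxMatrix (by omega) (by omega)
    (by omega) (even_two_mul k) (separator_ne_one hk hL0 hL q)

lemma syllables_separator (hk : k ≠ 0) (hL0 : L ≠ 0) (hL : L ∉ X)
    (hX : Separates (coxMatrix k X) parity) (h_even : Even L) (p : ℤ) :
    syllables (cox k X) hX (separator k X L p) = [⟨parity p, separator k X L p⟩] := by
  refine syllables_of_mem_colorSubgroup _ _ (separator_ne_one hk hL0 hL p)
    (pow_mem (mul_mem (simple_mem_colorSubgroup _ _ p) ?_) _)
  rw [← parity_add_of_even ((Int.even_coe_nat L).2 h_even) p]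
  exact simple_mem_colorSubgroup _ _ _

end Separator

/-! ### The renewal inequality -/

section Prefixes

open Multiplicative (ofAdd toAdd)
open SemidirectProduct (inl inr)

lemma eq_of_append_cons_eq_append_cons {α : Type*} {P : α → Prop} {S S' T T' : List α} {x x' : α}
    (hS : ∀ y ∈ S, P y) (hS' : ∀ y ∈ S', P y) (hx : ¬ P x) (hx' : ¬ P x')
    (h : S ++ x :: T = S' ++ x' :: T') : S = S' ∧ x = x' := by
  classical
  have h_takeWhile := congrArg (List.takeWhile (P ·)) h
  rw [List.takeWhile_append_of_pos (by simpa using hS),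
    List.takeWhile_cons_of_neg (by simpa using hx),
    List.takeWhile_append_of_pos (by simpa using hS'),
    List.takeWhile_cons_of_neg (by simpa using hx'), List.append_nil,
    List.append_nil] at h_takeWhile
  subst h_takeWhile
  exact ⟨rfl, (List.cons.inj (List.append_cancel_left h)).1⟩

variable {k : ℕ} {X Y : Set ℕ} {L ρ : ℕ}

/-- The elements of walk length at most `n` whose normal form does not start with a syllable of even
colour. -/
def oddBall (hX : Separates (coxMatrix k X) parity) (n : ℕ) : Set (Ext k X) :=
  {g | walkLength g ≤ n ∧ firstColor (cox k X) hX g.left ≠ some 0}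

variable {hX : Separates (coxMatrix k X) parity} {hY : Separates (coxMatrix k Y) parity}
  {hXY : ∀ e ∈ X, e ≤ 2 * ρ → e ∈ Y}

lemma oddBall_subset (n : ℕ) : oddBall hX n ⊆ {g | walkLength g ≤ n} := fun _ h => h.1

lemma one_mem_oddBall (n : ℕ) : 1 ∈ oddBall hX n := by
  refine ⟨walkLength_one.trans_le n.zero_le, ?_⟩
  rw [SemidirectProduct.one_left, firstColor, syllables_one]
  exact Option.some_ne_none _ |>.symm

lemma mul_separator_mul_left (b g : Ext k X) : (b * inl (separator k X L 0) * g).left =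
    b.left * (separator k X L (toAdd b.right) * shift k X b.right g.left) := by
  rw [← shift_separator (toAdd b.right), ofAdd_toAdd]
  simp [mul_assoc]

lemma exists_syllables_mul_separator_mul_eq (hk : k ≠ 0) (hL0 : L ≠ 0) (hL : L ∉ X)
    (h_even : Even L) {b g : Ext k X} (hb : OddEnds hX b)
    (hg : firstColor (cox k X) hX g.left ≠ some 0) :
    ∃ S, syllables (cox k X) hX (b * inl (separator k X L 0) * g).left =
      syllables (cox k X) hX b.left ++ ⟨0, separator k X L (toAdd b.right)⟩ :: S := by
  have h_parity : parity (toAdd b.right) = 0 := by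
    simpa using parity_add_of_even hb.even_right 0
  have h_sep := syllables_separator hk hL0 hL hX h_even (toAdd b.right)
  rw [h_parity] at h_sep
  have h_tail : syllables (cox k X) hX
      (separator k X L (toAdd b.right) * shift k X b.right g.left) =
        ⟨0, separator k X L (toAdd b.right)⟩ ::
          syllables (cox k X) hX (shift k X b.right g.left) := by
    rw [syllables_mul, h_sep, List.singleton_append]
    rw [lastColor, h_sep]
    rintro _ ⟨⟩
    exact (firstColor_shift hX hb.even_right g.left).trans_ne hg
  refine ⟨syllables (cox k X) hX (shift k X b.right g.left), ?_⟩
  rw [mul_separator_mul_left, syllables_mul, h_tail]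
  rw [hb.lastColor_left, firstColor, h_tail]
  rintro _ ⟨⟩
  simp

lemma mul_separator_mul_mem_oddBall (hk : k ≠ 0) (hL0 : L ≠ 0) (hL : L ∉ X)
    (h_even : Even L) {a : Ext k Y} {b g : Ext k X} (hb : IsLift hXY hX a b)
    (hb_odd : OddEnds hX b) {n : ℕ} (hn : walkLength a + 2 * k * (2 * L) ≤ n)
    (hg : g ∈ oddBall hX (n - (walkLength a + 2 * k * (2 * L)))) :
    b * inl (separator k X L 0) * g ∈ oddBall hX n := by
  refine ⟨?_, ?_⟩
  · have := hg.1
    have := hb.walkLength_le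
    have := walkLength_inl_separator_le (k := k) (X := X) (L := L)
    have := walkLength_mul_le b (inl (separator k X L 0))
    have := walkLength_mul_le (b * inl (separator k X L 0)) g
    omega
  · obtain ⟨S, hS⟩ := exists_syllables_mul_separator_mul_eq hk hL0 hL h_even hb_odd hg.2
    have h_first := hb_odd.firstColor_left
    rw [firstColor] at h_first
    obtain ⟨x, hx, h_color⟩ := Option.map_eq_some_iff.1 h_first
    rw [firstColor, hS, List.head?_append, hx]
    simp [h_color]

-- In the normal form of the product, the separator is the first syllable that the retraction kills.
lemma eq_of_mul_separator_mul_eq (hk : k ≠ 0) (hL0 : L ≠ 0) (hL : L ∉ X)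
    (h_even : Even L) (hLY : L ∈ Y) {a a' : Ext k Y} {b b' g g' : Ext k X}
    (hb : IsLift hXY hX a b) (hb' : IsLift hXY hX a' b') (hb_odd : OddEnds hX b)
    (hb_odd' : OddEnds hX b') (hg : firstColor (cox k X) hX g.left ≠ some 0)
    (hg' : firstColor (cox k X) hX g'.left ≠ some 0)
    (h : b * inl (separator k X L 0) * g = b' * inl (separator k X L 0) * g') :
    a = a' ∧ g = g' := by
  obtain ⟨S, hS⟩ := exists_syllables_mul_separator_mul_eq hk hL0 hL h_even hb_odd hg
  obtain ⟨S', hS'⟩ := exists_syllables_mul_separator_mul_eq hk hL0 hL h_even hb_odd' hg'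
  have h_killed : ∀ p, ¬ retract hXY (⟨0, separator k X L p⟩ : Σ _ : ZMod 2, _).2 ≠ 1 := fun p =>
    not_not.2 (retract_separator hXY hLY p)
  obtain ⟨h_syllables, h_separator⟩ := eq_of_append_cons_eq_append_cons hb.retract_ne_one
    hb'.retract_ne_one (h_killed _) (h_killed _) (hS.symm.trans
      ((congrArg (fun x => syllables (cox k X) hX x.left) h).trans hS'))
  have h_left : b.left = b'.left := syllables_injective _ _ h_syllables
  have h_right : b.right = b'.right :=
    Multiplicative.toAdd.injective (separator_injective hk hL0 hL (congrArg Sigma.snd h_separator))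
  obtain rfl : b = b' := SemidirectProduct.ext h_left h_right
  exact ⟨SemidirectProduct.ext (hb.retract_left.symm.trans hb'.retract_left)
    (hb.right_eq.symm.trans hb'.right_eq), mul_left_cancel h⟩

lemma sum_ncard_oddBall_le (hk : k ≠ 0) (hL0 : L ≠ 0) (hL : L ∉ X)
    (h_even : Even L) (hLY : L ∈ Y) {A : Finset (Ext k Y)}
    (hA : ∀ a ∈ A, OddEnds hY a ∧ walkLength a ≤ ρ) {n : ℕ} (hn : ρ + 2 * k * (2 * L) ≤ n)
    (hXY : ∀ e ∈ X, e ≤ 2 * ρ → e ∈ Y) :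
    ∑ a ∈ A, (oddBall hX (n - (walkLength a + 2 * k * (2 * L)))).ncard ≤ (oddBall hX n).ncard := by
  have h_lift : ∀ a : Ext k Y, ∃ b, a ∈ A → IsLift hXY hX a b := fun a => by
    by_cases ha : a ∈ A
    · exact (exists_isLift hXY hX (hA a ha).2).imp fun _ h _ => h
    · exact ⟨1, fun h => absurd h ha⟩
  choose lift h_lift using h_lift
  have h_odd : ∀ a ∈ A, OddEnds hX (lift a) := fun a ha => (h_lift a ha).oddEnds hY (hA a ha).1
  refine sum_ncard_le_ncard (fun a g => lift a * inl (separator k X L 0) * g)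
    ((finite_walkLength_le n).subset (oddBall_subset n)) (fun a ha g hg => ?_) ?_
  · exact mul_separator_mul_mem_oddBall hk hL0 hL h_even (h_lift a ha) (h_odd a ha)
      (hn.trans' (Nat.add_le_add_right (hA a ha).2 _)) hg
  · intro a ha g hg a' ha' g' hg' h_eq
    exact eq_of_mul_separator_mul_eq hk hL0 hL h_even hLY (h_lift a ha) (h_lift a' ha')
      (h_odd a ha) (h_odd a' ha') hg.2 hg'.2 h_eq

end Prefixes

/-! ### Strict monotonicity of the growth rate -/

section StrictAnti

variable {k : ℕ}

lemma exists_finset_oddEnds_lt_sum {Y : Set ℕ} (hY : Separates (coxMatrix k Y) parity) (c : ℝ) :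
    ∃ A : Finset (Ext k Y), (∀ a ∈ A, OddEnds hY a) ∧
      c < ∑ a ∈ A, (growthRate (gens k Y))⁻¹ ^ walkLength a := by
  by_contra! h_le
  have h_nonneg : 0 ≤ (growthRate (gens k Y))⁻¹ :=
    inv_nonneg.2 (zero_le_one.trans (one_le_growthRate finite_gens))
  refine not_summable_oddEnds hY
    (summable_of_sum_le (c := c) (fun a => pow_nonneg h_nonneg _) fun A => ?_)
  simpa using h_le (A.map (.subtype _)) (by simp +contextual)

lemma le_growthRate_of_mul_pow_le_ncard_oddBall {X : Set ℕ}
    (hX : Separates (coxMatrix k X) parity) {κ y : ℝ} (hκ : 0 < κ) (hy : 0 < y)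
    (h : ∀ n : ℕ, κ * y ^ n ≤ (oddBall hX n).ncard) :
    y ≤ growthRate (gens k X) := by
  refine le_growthRate finite_gens (half_pos hκ) hy fun n => ?_
  have h_card : (oddBall hX n).ncard ≤ 2 * Nat.card (ball (gens k X) n) :=
    (Set.ncard_le_ncard (oddBall_subset n) (finite_walkLength_le n)).trans
      (ncard_walkLength_le_le n)
  have h_cast : ((oddBall hX n).ncard : ℝ) ≤ 2 * Nat.card (ball (gens k X) n) := mod_cast h_card
  linarith [h n]

variable (k) in
/-- Adding the label `L` to `F` makes the growth rate smaller than for every set of even labels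
without `L` all of whose labels below `R` belong to `F`. -/
def IsRadius (F : Set ℕ) (L R : ℕ) : Prop :=
  ∀ X : Set ℕ, (∀ e ∈ X, Even e) → L ∉ X → (∀ e ∈ X, e < R → e ∈ F) →
    growthRate (gens k (insert L F)) < growthRate (gens k X)

lemma eventually_isRadius (hk : k ≠ 0) {F : Set ℕ} {L : ℕ} (hF : ∀ e ∈ F, Even e)
    (h_even : Even L) (hL0 : L ≠ 0) : ∀ᶠ R in atTop, IsRadius k F L R := by
  have hY : Separates (coxMatrix k (insert L F)) parity :=
    separates_parity (Set.forall_mem_insert.2 ⟨h_even, hF⟩)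
  set z := (growthRate (gens k (insert L F)))⁻¹ with hz
  set N := 2 * k * (2 * L)
  have h_one := one_le_growthRate (finite_gens (k := k) (X := insert L F))
  have hz0 : 0 < z := inv_pos.2 (one_pos.trans_le h_one)
  obtain ⟨A, hA, h_sum⟩ := exists_finset_oddEnds_lt_sum hY (z ^ N)⁻¹
  have h_renewal : 1 < ∑ a ∈ A, z ^ (walkLength a + N) := by
    simp only [pow_add, ← Finset.sum_mul]
    exact (inv_lt_iff_one_lt_mul₀ (pow_pos hz0 N)).1 h_sum
  set ρ := A.sup walkLength
  have hρ : ∀ a ∈ A, walkLength a ≤ ρ := fun a ha => Finset.le_sup ha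
  filter_upwards [eventually_gt_atTop (2 * ρ)] with R hR X hX hLX hXF
  have hX := separates_parity (k := k) hX
  have hN : 0 < N := by positivity
  obtain ⟨y, hy, κ, hκ, h_growth⟩ := exists_gt_inv_of_renewal
    (f := fun n => (oddBall hX n).ncard) (ℓ := fun a => walkLength a + N) (N := ρ + N)
    (fun a ha => ⟨by omega, Nat.add_le_add_right (hρ a ha) N⟩)
    (fun n => (Set.ncard_pos ((finite_walkLength_le n).subset (oddBall_subset n))).2
      ⟨1, one_mem_oddBall n⟩)
    (fun n hn => sum_ncard_oddBall_le hk hL0 hLX h_even (Set.mem_insert L F)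
      (fun a ha => ⟨hA a ha, hρ a ha⟩) hn fun e he hle => .inr (hXF e he (hle.trans_lt hR)))
    hz0 (inv_le_one_of_one_le₀ h_one) h_renewal
  rw [hz, inv_inv] at hy
  exact hy.trans_le (le_growthRate_of_mul_pow_le_ncard_oddBall hX hκ
    (one_pos.trans_le (h_one.trans hy.le)) h_growth)

variable (k) in
/-- A sequence of even labels that grows so fast that each term is a radius, in the sense of
`IsRadius`, for its predecessor `L` and all sets of even labels up to `L`. -/
structure IsSparse (E : ℕ → ℕ) : Prop where
  even : ∀ i, Even (E i)
  strictMono : StrictMono E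
  isRadius : ∀ i, ∀ F ⊆ Set.Iic (E i), (∀ e ∈ F, Even e) → IsRadius k F (E i) (E (i + 1))

lemma exists_isSparse (hk : k ≠ 0) : ∃ E, IsSparse k E := by
  have h_next : ∀ L, Even L ∧ L ≠ 0 → ∀ᶠ R in atTop,
      L < R ∧ ∀ F ⊆ Set.Iic L, (∀ e ∈ F, Even e) → IsRadius k F L R := fun L hL =>
    (eventually_gt_atTop L).and <| (Set.finite_Iic L).finite_subsets.eventually_all.2 fun F _ =>
      eventually_imp_distrib_left.2 fun hF => eventually_isRadius hk hF hL.1 hL.2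
  obtain ⟨E, hE, h_radius⟩ := exists_seq_of_forall_finset_exists _ _ fun s hs => by
    obtain ⟨R, h_even, h_pos, hR⟩ := (Nat.frequently_even.and_eventually
      ((eventually_gt_atTop 0).and (s.eventually_all.2 fun L hL => h_next L (hs L hL)))).exists
    exact ⟨R, ⟨h_even, h_pos.ne'⟩, hR⟩
  exact ⟨E, fun i => (hE i).1, fun i j h => (h_radius i j h).1,
    fun i => (h_radius i _ i.lt_succ_self).2⟩

lemma growthRate_image_lt {E : ℕ → ℕ} (hE : IsSparse k E) {I J : Set ℕ} {i : ℕ}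
    (hI : i ∉ I) (hJ : i ∈ J) (hIJ : ∀ j < i, j ∈ I ↔ j ∈ J) :
    growthRate (gens k (E '' J)) < growthRate (gens k (E '' I)) := by
  have h_even : ∀ K : Set ℕ, ∀ e ∈ E '' K, Even e := fun K =>
    Set.forall_mem_image.2 fun j _ => hE.even j
  have h_subset : insert (E i) (E '' (J ∩ Set.Iio i)) ⊆ E '' J :=
    Set.insert_subset ⟨i, hJ, rfl⟩ (Set.image_mono Set.inter_subset_left)
  have h_le : E '' (J ∩ Set.Iio i) ⊆ Set.Iic (E i) :=
    Set.image_subset_iff.2 fun j hj => (hE.strictMono hj.2).le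
  refine (growthRate_anti h_subset).trans_lt (hE.isRadius i _ h_le (h_even _) _ (h_even I) ?_
    (Set.forall_mem_image.2 fun j hj hlt => ?_))
  · rwa [hE.strictMono.injective.mem_set_image]
  · have h_ne : j ≠ i := fun h => hI (h ▸ hj)
    have h_lt : j < i := by have := hE.strictMono.lt_iff_lt.1 hlt; omega
    exact ⟨j, ⟨(hIJ j h_lt).1 hj, h_lt⟩, rfl⟩

lemma growthRate_image_ne {E : ℕ → ℕ} (hE : IsSparse k E) {I J : Set ℕ} (hIJ : I ≠ J) :
    growthRate (gens k (E '' I)) ≠ growthRate (gens k (E '' J)) := by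
  classical
  have h_differ : ∃ i, ¬ (i ∈ I ↔ i ∈ J) := not_forall.1 fun h => hIJ (Set.ext h)
  have h_agree : ∀ j < Nat.find h_differ, j ∈ I ↔ j ∈ J := fun j hj =>
    not_not.1 (Nat.find_min h_differ hj)
  have h_iff := not_iff.1 (Nat.find_spec h_differ)
  by_cases hI : Nat.find h_differ ∈ I
  · exact (growthRate_image_lt hE (fun hJ => h_iff.2 hJ hI) hI fun j hj => (h_agree j hj).symm).ne
  · exact (growthRate_image_lt hE hI (h_iff.1 hI) h_agree).ne'

end StrictAnti

end GrowthRates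

open GrowthRates in
theorem exists_E_growth_rates_distinct_general {k : ℕ} (hk : k ≠ 0) :
    ∃ E : ℕ → ℕ, ∀ I J : Set ℕ, I ≠ J →
      growthRate (Set.range (PresentedGroup.of (rels :=
        {r : FreeGroup Bool | ∃ i ∈ I,
          r = ((FreeGroup.of true ^ E i) * (FreeGroup.of false ^ E i)) ^ (2 * k)}))) ≠
      growthRate (Set.range (PresentedGroup.of (rels :=
        {r : FreeGroup Bool | ∃ j ∈ J,
          r = ((FreeGroup.of true ^ E j) * (FreeGroup.of false ^ E j)) ^ (2 * k)}))) := by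
  obtain ⟨E, hE⟩ := exists_isSparse hk
  refine ⟨E, fun I J hIJ => ?_⟩
  rw [← relators_image E I, ← relators_image E J]
  exact growthRate_image_ne hE hIJ

/-- There is `E : ℕ → ℕ` such that, with `r_i = (a^{E i} b^{E i})^{100}` and
`G_J = ⟨a, b | r_j = e, j ∈ J⟩`, distinct subsets `I ≠ J` of `ℕ` give groups with
distinct growth rates (with respect to the images of the generators `a, b`). -/
theorem exists_E_growth_rates_distinct :
    ∃ E : ℕ → ℕ, ∀ I J : Set ℕ, I ≠ J →
      growthRate (Set.range (PresentedGroup.of (rels :=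
        {r : FreeGroup Bool | ∃ i ∈ I,
          r = ((FreeGroup.of true ^ E i) * (FreeGroup.of false ^ E i)) ^ 100}))) ≠
      growthRate (Set.range (PresentedGroup.of (rels :=
        {r : FreeGroup Bool | ∃ j ∈ J,
          r = ((FreeGroup.of true ^ E j) * (FreeGroup.of false ^ E j)) ^ 100}))) :=
  exists_E_growth_rates_distinct_general (k := 50) (by norm_num)
end

section
/- Let S be a finite set, let (w_i)_{i∈ℕ} be words in the free group on S, let H = ⟨S | w_i = e, i ∈ ℕ⟩ and, for each k ∈ ℕ, H_k = ⟨S | w_i = e, i ≤ k⟩. Then lim_{k→∞} v(H_k) = v(H), where all growth rates are taken with respect to the images of the generating set S. -/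
open Filter Topology
open scoped Pointwise

lemma natCard_image_le_natCard_image {α β γ : Type*} {f : α → β} {g : α → γ} {A : Set α}
    (hA : A.Finite) (h : ∀ x ∈ A, ∀ y ∈ A, g x = g y → f x = f y) :
    Nat.card (f '' A) ≤ Nat.card (g '' A) := by
  obtain ⟨T, hTA, hT⟩ := Set.exists_subset_bijOn A f
  have hg : Set.InjOn g T := fun x hx y hy hxy =>
    hT.injOn hx hy (h x (hTA hx) y (hTA hy) hxy)
  calc Nat.card (f '' A) = Nat.card (f '' T) := by rw [hT.image_eq]
    _ = Nat.card T := Nat.card_image_of_injOn hT.injOn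
    _ = Nat.card (g '' T) := (Nat.card_image_of_injOn hg).symm
    _ ≤ Nat.card (g '' A) := Nat.card_mono (hA.image g) (Set.image_mono hTA)

lemma exists_tendsto_rpow_one_div_of_submultiplicative {u : ℕ → ℝ} (hu : ∀ n, 1 ≤ u n)
    (hmul : ∀ m n, u (m + n) ≤ u m * u n) :
    ∃ L, Tendsto (fun n : ℕ => u n ^ ((1 : ℝ) / n)) atTop (𝓝 L) ∧
      ∀ n : ℕ, n ≠ 0 → L ≤ u n ^ ((1 : ℝ) / n) := by
  have hpos (n : ℕ) : 0 < u n := one_pos.trans_le (hu n)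
  have hsub : Subadditive fun n => Real.log (u n) := fun m n => by
    rw [← Real.log_mul (hpos m).ne' (hpos n).ne']
    exact Real.log_le_log (hpos _) (hmul m n)
  have hbdd : BddBelow (Set.range fun n : ℕ => Real.log (u n) / n) :=
    ⟨0, Set.forall_mem_range.2 fun n => div_nonneg (Real.log_nonneg (hu n)) n.cast_nonneg⟩
  have hexp (n : ℕ) : u n ^ ((1 : ℝ) / n) = Real.exp (Real.log (u n) / n) := by
    rw [Real.rpow_def_of_pos (hpos n), mul_one_div]
  simp_rw [hexp]
  exact ⟨Real.exp hsub.lim, (Real.continuous_exp.tendsto _).comp (hsub.tendsto_lim hbdd),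
    fun n hn => Real.exp_le_exp.2 (hsub.lim_le_div hbdd hn)⟩

section Ball

variable {G H : Type*} [Group G] [Group H] {S : Set G}

lemma ball_zero (S : Set G) : ball S 0 = 1 := by
  ext g
  simp [ball, eq_comm]

lemma ball_succ (S : Set G) (n : ℕ) : ball S (n + 1) = insert 1 (S ∪ S⁻¹) * ball S n := by
  ext g
  constructor
  · rintro ⟨_ | ⟨a, l⟩, hl, hn, rfl⟩
    · exact Set.mem_mul.2 ⟨1, Set.mem_insert 1 _, 1, ⟨[], by simp, by simp, rfl⟩, by simp⟩
    · obtain ⟨ha, hl⟩ := List.forall_mem_cons.1 hl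
      exact Set.mem_mul.2 ⟨a, Or.inr ha, l.prod, ⟨l, hl, by simpa using hn, rfl⟩, by simp⟩
  · rintro ⟨a, rfl | ha, _, ⟨l, hl, hn, rfl⟩, rfl⟩
    · exact ⟨l, hl, by lia, by simp⟩
    · exact ⟨a :: l, List.forall_mem_cons.2 ⟨ha, hl⟩, by simpa using hn, by simp⟩

lemma ball_eq_pow (S : Set G) (n : ℕ) : ball S n = insert 1 (S ∪ S⁻¹) ^ n := by
  induction n with
  | zero => rw [ball_zero, pow_zero]
  | succ n ih => rw [ball_succ, ih, pow_succ']

lemma image_ball (f : G →* H) (S : Set G) (n : ℕ) : f '' ball S n = ball (f '' S) n := by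
  simp only [ball_eq_pow, Set.image_pow, Set.image_insert_eq, Set.image_union, Set.image_inv,
    map_one]

lemma ball_add_eq_mul (S : Set G) (m n : ℕ) : ball S (m + n) = ball S m * ball S n := by
  simp only [ball_eq_pow, pow_add]

lemma inv_ball_eq_self (S : Set G) (n : ℕ) : (ball S n)⁻¹ = ball S n := by
  rw [ball_eq_pow, ← inv_pow, Set.inv_insert, Set.union_inv, inv_inv, inv_one, Set.union_comm]

lemma inv_mul_mem_ball {m n : ℕ} {x y : G} (hx : x ∈ ball S m) (hy : y ∈ ball S n) :
    x⁻¹ * y ∈ ball S (m + n) := by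
  rw [← inv_ball_eq_self S] at hx
  rw [ball_add_eq_mul]
  exact Set.mul_mem_mul hx hy

lemma one_mem_ball (S : Set G) (n : ℕ) : 1 ∈ ball S n := ⟨[], by simp, by simp, rfl⟩

lemma finite_ball (hS : S.Finite) (n : ℕ) : (ball S n).Finite := by
  induction n with
  | zero => exact (ball_zero S).symm ▸ Set.finite_one
  | succ n ih => exact (ball_succ S n).symm ▸ ((hS.union hS.inv).insert 1).mul ih

lemma one_le_card_ball (hS : S.Finite) (n : ℕ) : 1 ≤ Nat.card (ball S n) :=
  (Set.ncard_pos (finite_ball hS n)).2 ⟨1, one_mem_ball S n⟩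

lemma card_ball_add_le (S : Set G) (m n : ℕ) :
    Nat.card (ball S (m + n)) ≤ Nat.card (ball S m) * Nat.card (ball S n) := by
  rw [ball_add_eq_mul]
  exact Set.natCard_mul_le

end Ball

section GrowthRate

variable {G : Type*} [Group G] {S : Set G}

lemma tendsto_growthRate_and_le (hS : S.Finite) :
    Tendsto (fun n : ℕ => (Nat.card (ball S n) : ℝ) ^ ((1 : ℝ) / n)) atTop (𝓝 (growthRate S)) ∧
      ∀ n : ℕ, n ≠ 0 → growthRate S ≤ (Nat.card (ball S n) : ℝ) ^ ((1 : ℝ) / n) := by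
  obtain ⟨L, hL, hle⟩ := exists_tendsto_rpow_one_div_of_submultiplicative
    (u := fun n => (Nat.card (ball S n) : ℝ)) (fun n => mod_cast one_le_card_ball hS n)
    (fun m n => mod_cast card_ball_add_le S m n)
  obtain rfl : growthRate S = L := hL.limsup_eq
  exact ⟨hL, hle⟩

lemma tendsto_growthRate (hS : S.Finite) :
    Tendsto (fun n : ℕ => (Nat.card (ball S n) : ℝ) ^ ((1 : ℝ) / n)) atTop (𝓝 (growthRate S)) :=
  (tendsto_growthRate_and_le hS).1

lemma growthRate_le (hS : S.Finite) {n : ℕ} (hn : n ≠ 0) :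
    growthRate S ≤ (Nat.card (ball S n) : ℝ) ^ ((1 : ℝ) / n) :=
  (tendsto_growthRate_and_le hS).2 n hn

end GrowthRate

section Quotients

variable {G H K : Type*} [Group G] [Group H] [Group K] {S : Set G}

lemma card_ball_image_le (hS : S.Finite) {f : G →* H} {g : G →* K} {n : ℕ}
    (h : ∀ x ∈ ball S (n + n), x ∈ g.ker → x ∈ f.ker) :
    Nat.card (ball (f '' S) n) ≤ Nat.card (ball (g '' S) n) := by
  rw [← image_ball, ← image_ball]
  refine natCard_image_le_natCard_image (finite_ball hS n) fun x hx y hy hxy => ?_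
  exact f.eq_iff.2 (h _ (inv_mul_mem_ball hy hx) (g.eq_iff.1 hxy))

lemma growthRate_image_le_of_ker_le (hS : S.Finite) {f : G →* H} {g : G →* K}
    (h : g.ker ≤ f.ker) : growthRate (f '' S) ≤ growthRate (g '' S) := by
  refine le_of_tendsto_of_tendsto' (tendsto_growthRate (hS.image f))
    (tendsto_growthRate (hS.image g)) fun n => ?_
  have hcard := card_ball_image_le hS (n := n) fun x _ hx => h hx
  gcongr

variable {ι : Type*} {l : Filter ι} {Q : ι → Type*} [∀ k, Group (Q k)] {f : G →* H}
  {q : ∀ k, G →* Q k}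

lemma eventually_card_ball_image_le (hS : S.Finite)
    (h : ∀ x ∈ f.ker, ∀ᶠ k in l, x ∈ (q k).ker) (n : ℕ) :
    ∀ᶠ k in l, Nat.card (ball (q k '' S) n) ≤ Nat.card (ball (f '' S) n) := by
  have hball : ∀ᶠ k in l, ∀ x ∈ ball S (n + n), x ∈ f.ker → x ∈ (q k).ker :=
    (finite_ball hS _).eventually_all.2 fun x _ => eventually_imp_distrib_left.2 (h x)
  exact hball.mono fun k hk => card_ball_image_le hS hk

lemma eventually_growthRate_image_lt (hS : S.Finite)
    (h : ∀ x ∈ f.ker, ∀ᶠ k in l, x ∈ (q k).ker) {c : ℝ} (hc : growthRate (f '' S) < c) :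
    ∀ᶠ k in l, growthRate (q k '' S) < c := by
  obtain ⟨n, hn, hn0⟩ := (((tendsto_growthRate (hS.image f)).eventually_lt_const hc).and
    (eventually_ne_atTop 0)).exists
  filter_upwards [eventually_card_ball_image_le hS h n] with k hk
  calc growthRate (q k '' S) ≤ (Nat.card (ball (q k '' S) n) : ℝ) ^ ((1 : ℝ) / n) :=
        growthRate_le (hS.image _) hn0
    _ ≤ (Nat.card (ball (f '' S) n) : ℝ) ^ ((1 : ℝ) / n) := by gcongr
    _ < c := hn

theorem tendsto_growthRate_image (hS : S.Finite) (hle : ∀ᶠ k in l, (q k).ker ≤ f.ker)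
    (h : ∀ x ∈ f.ker, ∀ᶠ k in l, x ∈ (q k).ker) :
    Tendsto (fun k => growthRate (q k '' S)) l (𝓝 (growthRate (f '' S))) :=
  tendsto_order.2
    ⟨fun _ hc => hle.mono fun _ hk => hc.trans_le (growthRate_image_le_of_ker_le hS hk),
      fun _ hc => eventually_growthRate_image_lt hS h hc⟩

end Quotients

section Presentations

variable {ι : Type*} {l : Filter ι}

lemma eventually_mem_normalClosure {G : Type*} [Group G] {rels : ι → Set G} {R : Set G}
    (hR : ∀ r ∈ R, ∀ᶠ k in l, r ∈ rels k) {x : G} (hx : x ∈ Subgroup.normalClosure R) :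
    ∀ᶠ k in l, x ∈ Subgroup.normalClosure (rels k) := by
  induction hx using Subgroup.closure_induction with
  | mem x hx =>
    obtain ⟨r, hr, hrx⟩ := Group.mem_conjugatesOfSet_iff.1 hx
    exact (hR r hr).mono fun k hk => Subgroup.conjugatesOfSet_subset_normalClosure
      (Group.mem_conjugatesOfSet_iff.2 ⟨r, hk, hrx⟩)
  | one => exact Eventually.of_forall fun k => one_mem _
  | mul x y _ _ hx hy => exact (hx.and hy).mono fun k hk => mul_mem hk.1 hk.2
  | inv x _ hx => exact hx.mono fun k hk => inv_mem hk

variable {α : Type*}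

lemma ker_presentedGroup_mk (R : Set (FreeGroup α)) :
    (PresentedGroup.mk R).ker = Subgroup.normalClosure R :=
  QuotientGroup.ker_mk' _

lemma range_presentedGroup_of (R : Set (FreeGroup α)) :
    Set.range (PresentedGroup.of (rels := R)) =
      PresentedGroup.mk R '' Set.range FreeGroup.of :=
  Set.range_comp _ _

theorem tendsto_growthRate_of_truncated_presentations_general [Finite α]
    {rels : ι → Set (FreeGroup α)} {R : Set (FreeGroup α)} (hle : ∀ᶠ k in l, rels k ⊆ R)
    (hR : ∀ r ∈ R, ∀ᶠ k in l, r ∈ rels k) :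
    Tendsto (fun k => growthRate (Set.range (PresentedGroup.of (rels := rels k)))) l
      (𝓝 (growthRate (Set.range (PresentedGroup.of (rels := R))))) := by
  simp only [range_presentedGroup_of]
  refine tendsto_growthRate_image (Set.finite_range _) ?_ ?_ <;>
    simp only [ker_presentedGroup_mk]
  · exact hle.mono fun k hk => Subgroup.normalClosure_mono hk
  · exact fun x hx => eventually_mem_normalClosure hR hx

end Presentations

/-- If `H = ⟨S | w_i = e, i ∈ ℕ⟩` and `H_k = ⟨S | w_i = e, i ≤ k⟩`, then
`lim_k v(H_k) = v(H)`. -/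
theorem tendsto_growthRate_of_truncated_presentations
    {α : Type} [Fintype α] (w : ℕ → FreeGroup α) :
    Filter.Tendsto
      (fun k : ℕ => growthRate (Set.range (PresentedGroup.of (rels :=
        {r : FreeGroup α | ∃ i ≤ k, r = w i}))))
      Filter.atTop
      (nhds (growthRate (Set.range (PresentedGroup.of (rels := Set.range w))))) := by
  exact tendsto_growthRate_of_truncated_presentations_general
    (Eventually.of_forall fun _ _ ⟨i, _, hr⟩ => ⟨i, hr.symm⟩)
    (Set.forall_mem_range.2 fun i => (eventually_ge_atTop i).mono fun _ hk => ⟨i, hk, rfl⟩)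
end

section
/- Consider a Markov grammar with s states and k labels, deterministic and with every state reachable from the initial state, and let v be the growth rate of the language it generates. Let N ∈ ℕ with s ≤ N, and fix p words of length 4N, called long forbidden words. Let the new language consist of those words of the old language that contain none of the long forbidden words as a subword, and let v_new be its growth rate. Then v_new^N ≥ (v^N/s² − 4Np)/k^s. -/
/-- A Markov grammar with states `Fin s`, labels in `Λ`: `edge p a q` is the number
of directed edges from `p` to `q` labelled `a`, and `init` is the initial state. -/
structure MarkovGrammar (s : ℕ) (Λ : Type*) where
  edge : Fin s → Λ → Fin s → ℕ
  init : Fin s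

/-- `G.path p w q`: one can read the word `w` along a directed path from `p` to `q`. -/
def MarkovGrammar.path {s : ℕ} {Λ : Type*} (G : MarkovGrammar s Λ) :
    Fin s → List Λ → Fin s → Prop
  | p, [], q => p = q
  | p, a :: w, q => ∃ t, 0 < G.edge p a t ∧ G.path t w q

/-- The language generated by a Markov grammar: words read along directed paths
starting at the initial state. -/
def MarkovGrammar.language {s : ℕ} {Λ : Type*} (G : MarkovGrammar s Λ) : Set (List Λ) :=
  {w | ∃ q, G.path G.init w q}

/-- Deterministic: edges leaving a common state carry distinct labels. -/
def MarkovGrammar.Deterministic {s : ℕ} {Λ : Type*} (G : MarkovGrammar s Λ) : Prop :=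
  ∀ p a, (∑ q, G.edge p a q) ≤ 1

/-- Every state is reachable by a directed path from the initial state. -/
def MarkovGrammar.Reachable {s : ℕ} {Λ : Type*} (G : MarkovGrammar s Λ) : Prop :=
  ∀ q, ∃ w, G.path G.init w q

/-- The adjacency matrix of a Markov grammar. -/
def MarkovGrammar.adj {s : ℕ} {Λ : Type*} [Fintype Λ] (G : MarkovGrammar s Λ) :
    Matrix (Fin s) (Fin s) ℕ :=
  fun p q => ∑ a, G.edge p a q

/-- The growth rate of a language. -/
noncomputable def langGrowth {Λ : Type*} (L : Set (List Λ)) : ℝ :=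
  Filter.limsup (fun n : ℕ => (Nat.card {w ∈ L | w.length ≤ n} : ℝ) ^ ((1 : ℝ) / n))
    Filter.atTop

/-- The maximal nonnegative eigenvalue of a matrix (equal to `0` if there is none). -/
noncomputable def maxEigenvalue {s : ℕ} (M : Matrix (Fin s) (Fin s) ℝ) : ℝ :=
  sSup ({0} ∪ {v : ℝ | 0 ≤ v ∧ M.charpoly.IsRoot v})

/-!
Let `W(a, b)` be the set of words of length `N` read along paths from `a` to `b`.

Cut a path into pieces of length `N`. A piece that stays in a strongly connected component has one
of `s` possible end states and, given it, one of at most `B = max |W(a, b)|` readings, where `b` is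
in the component of `a`; a piece that leaves its component decreases the number of reachable states,
so there are boundedly many of them. Hence `v ^ N ≤ s * B` (with `B` replaced by `1` if it is `0`).

Conversely, let `(a, b)` attain `B`, let `x` and `u` be words of length `< s` leading from the
initial state to `a` and from `b` to `a`, and discard from `W(a, b)` the at most `4 * N * p`
subwords of forbidden words. The words `x w₁ u w₂ u ⋯ wₘ u` built from the remaining `wᵢ` are in
the old language. Each block `wᵢ u` has length at most `2 * N`, so a subword of length `4 * N`
contains a whole block and cannot be forbidden. Therefore `B - 4 * N * p ≤ v_new ^ (N + |u|)`, and
`v_new ^ |u| ≤ k ^ s`.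
-/

open Filter Topology

/-! ### Words -/

section Words

variable {α ι : Type*}

lemma ncard_setOf_length_eq [Finite α] (n : ℕ) :
    {w : List α | w.length = n}.ncard = Nat.card α ^ n := by
  have := Fintype.ofFinite α
  rw [Nat.card_eq_fintype_card, ← card_vector, ← Nat.card_eq_fintype_card,
    ← Nat.card_coe_set_eq]
  rfl

lemma ncard_length_le_le_mul {L : Set (List α)} {n b : ℕ}
    (h : ∀ j ≤ n, {w ∈ L | w.length = j}.ncard ≤ b) :
    {w ∈ L | w.length ≤ n}.ncard ≤ (n + 1) * b := by
  have hunion : {w ∈ L | w.length ≤ n} =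
      ⋃ j ∈ Finset.range (n + 1), {w ∈ L | w.length = j} := by
    ext w
    simp
  calc {w ∈ L | w.length ≤ n}.ncard
      ≤ ∑ j ∈ Finset.range (n + 1), {w ∈ L | w.length = j}.ncard :=
        hunion ▸ Finset.set_ncard_biUnion_le _ _
    _ ≤ ∑ _j ∈ Finset.range (n + 1), b :=
        Finset.sum_le_sum fun j hj => h j (Finset.mem_range_succ_iff.1 hj)
    _ = (n + 1) * b := by simp

lemma ncard_infix_length_eq_le (f : List α) (n : ℕ) :
    {w : List α | w.length = n ∧ w <:+: f}.ncard ≤ f.length + 1 - n := by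
  have hsub : {w : List α | w.length = n ∧ w <:+: f} ⊆
      (fun i => (f.drop i).take n) '' Finset.range (f.length + 1 - n) := by
    rintro w ⟨rfl, x, y, rfl⟩
    refine ⟨x.length, ?_, by simp⟩
    simp only [List.length_append, Finset.coe_range, Set.mem_Iio]
    omega
  calc _ ≤ _ := Set.ncard_le_ncard hsub ((Finset.finite_toSet _).image _)
    _ ≤ _ := Set.ncard_image_le (Finset.finite_toSet _)
    _ = f.length + 1 - n := by rw [Set.ncard_coe_finset, Finset.card_range]

lemma ncard_exists_infix_length_eq_le [Finite ι] {F : ι → List α} {l n : ℕ} (hn : n ≠ 0)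
    (hF : ∀ i, (F i).length = l) :
    {w : List α | w.length = n ∧ ∃ i, w <:+: F i}.ncard ≤ l * Nat.card ι := by
  have := Fintype.ofFinite ι
  have hunion : {w : List α | w.length = n ∧ ∃ i, w <:+: F i} =
      ⋃ i, {w | w.length = n ∧ w <:+: F i} := by
    ext w
    simp
  calc _ ≤ ∑ i, {w | w.length = n ∧ w <:+: F i}.ncard :=
        hunion ▸ Set.ncard_iUnion_le_of_fintype _
    _ ≤ ∑ _i : ι, l := Finset.sum_le_sum fun i _ =>
        (ncard_infix_length_eq_le (F i) n).trans (by rw [hF]; omega)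
    _ = l * Nat.card ι := by simp [mul_comm]

lemma exists_infix_of_infix_append_flatten {n : ℕ} (hn : 0 < n) {f x : List α}
    {l : List (List α)} (hf : 2 * n ≤ f.length) (hx : x.length ≤ n) (hl : ∀ w ∈ l, w.length ≤ n)
    (h : f <:+: x ++ l.flatten) : ∃ w ∈ l, w <:+: f := by
  induction l generalizing x with
  | nil =>
    have := h.length_le
    simp only [List.flatten_nil, List.append_nil] at this
    omega
  | cons w l ih =>
    rw [List.forall_mem_cons] at hl
    rcases List.infix_append_iff.1 h with h | h | ⟨f₁, f₂, rfl, h₁, h₂⟩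
    · have := h.length_le
      omega
    · obtain ⟨v, hv, hvf⟩ := ih hl.1 hl.2 h
      exact ⟨v, List.mem_cons_of_mem w hv, hvf⟩
    · have hw : w <+: f₂ := by
        refine List.prefix_of_prefix_length_le (List.prefix_append w _) h₂ ?_
        have := h₁.length_le
        rw [List.length_append] at hf
        omega
      exact ⟨w, List.mem_cons_self, hw.isInfix.trans (List.suffix_append f₁ f₂).isInfix⟩

/-- The word `w₀ u w₁ u ⋯ wₘ₋₁ u`, in which each `wᵢ` is followed by the fixed separator `u`. -/
def concatBlocks (u : List α) {m : ℕ} (w : Fin m → List α) : List α :=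
  (List.ofFn fun i => w i ++ u).flatten

lemma length_concatBlocks (u : List α) {m n : ℕ} {w : Fin m → List α}
    (hw : ∀ i, (w i).length = n) : (concatBlocks u w).length = m * (n + u.length) := by
  simp [concatBlocks, List.length_flatten, List.map_ofFn, Function.comp_def, hw]

lemma concatBlocks_injOn (u : List α) (m n : ℕ) :
    Set.InjOn (concatBlocks u) {w : Fin m → List α | ∀ i, (w i).length = n} := by
  intro w hw w' hw' h
  have hlength : (List.ofFn fun i => w i ++ u).map List.length =
      (List.ofFn fun i => w' i ++ u).map List.length := by
    simp only [List.map_ofFn, Function.comp_def, List.length_append, hw _, hw' _]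
  have hofFn := List.ofFn_injective (List.eq_iff_flatten_eq.2 ⟨h, hlength⟩)
  exact funext fun i => List.append_cancel_right (congrFun hofFn i)

lemma exists_infix_of_infix_append_concatBlocks {n : ℕ} {f x u : List α} {m : ℕ}
    {w : Fin m → List α} (hn : 0 < n) (hf : 4 * n ≤ f.length) (hx : x.length ≤ 2 * n)
    (hu : u.length ≤ n) (hw : ∀ i, (w i).length = n) (h : f <:+: x ++ concatBlocks u w) :
    ∃ i, w i <:+: f := by
  obtain ⟨_, hmem, hinfix⟩ := exists_infix_of_infix_append_flatten (n := 2 * n) (by omega)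
    (by omega) hx (by simp only [List.forall_mem_ofFn_iff, List.length_append, hw]; omega) h
  obtain ⟨i, rfl⟩ := (List.mem_ofFn' _ _).1 hmem
  exact ⟨i, (List.prefix_append (w i) u).isInfix.trans hinfix⟩

end Words

/-! ### Growth rates of languages -/

section Growth

variable {Λ : Type*}

lemma tendsto_rpow_one_div_of_exponential {C ρ : ℝ} (hC : 0 < C) (hρ : 0 < ρ) :
    Tendsto (fun n : ℕ => ((n + 1) * C * ρ ^ n) ^ ((1 : ℝ) / n)) atTop (𝓝 ρ) := by
  have hlin : Tendsto (fun n : ℕ => ((n : ℝ) + 1) * C) atTop atTop :=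
    (tendsto_atTop_add_const_right _ 1 tendsto_natCast_atTop_atTop).atTop_mul_const hC
  have hone : Tendsto (fun n : ℕ => (((n : ℝ) + 1) * C) ^ ((1 : ℝ) / n)) atTop (𝓝 1) := by
    refine ((tendsto_rpow_div_mul_add 1 C⁻¹ (-1) (by positivity)).comp hlin).congr fun n => ?_
    simp only [Function.comp_apply]
    congr 2
    field_simp
    ring
  rw [← one_mul ρ]
  refine (hone.mul_const ρ).congr' ?_
  filter_upwards [eventually_ne_atTop 0] with n hn
  rw [one_mul, Real.mul_rpow (x := (n + 1) * C) (by positivity) (by positivity), one_div,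
    Real.pow_rpow_inv_natCast hρ.le hn]

lemma rpow_ncard_length_le_le {L : Set (List Λ)} {C ρ : ℝ} (hC : 0 ≤ C) (hρ : 1 ≤ ρ)
    (h : ∀ n, ({w ∈ L | w.length = n}.ncard : ℝ) ≤ C * ρ ^ n) (n : ℕ) :
    (Nat.card {w ∈ L | w.length ≤ n} : ℝ) ^ ((1 : ℝ) / n) ≤
      ((n + 1) * C * ρ ^ n) ^ ((1 : ℝ) / n) := by
  have hfloor : ∀ j ≤ n, {w ∈ L | w.length = j}.ncard ≤ ⌊C * ρ ^ n⌋₊ := fun j hj =>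
    Nat.le_floor ((h j).trans (by gcongr))
  refine Real.rpow_le_rpow (by positivity) ?_ (by positivity)
  calc (Nat.card {w ∈ L | w.length ≤ n} : ℝ)
      ≤ ((n + 1) * ⌊C * ρ ^ n⌋₊ : ℕ) := by exact_mod_cast ncard_length_le_le_mul hfloor
    _ ≤ (n + 1) * (C * ρ ^ n) := by
      push_cast
      gcongr
      exact Nat.floor_le (by positivity)
    _ = (n + 1) * C * ρ ^ n := by ring

lemma langGrowth_le_of_ncard_le {L : Set (List Λ)} {C ρ : ℝ} (hC : 0 < C) (hρ : 1 ≤ ρ)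
    (h : ∀ n, ({w ∈ L | w.length = n}.ncard : ℝ) ≤ C * ρ ^ n) : langGrowth L ≤ ρ := by
  have htendsto := tendsto_rpow_one_div_of_exponential hC (zero_lt_one.trans_le hρ)
  rw [← htendsto.limsup_eq]
  exact limsup_le_limsup (Eventually.of_forall (rpow_ncard_length_le_le hC.le hρ h))
    (IsCoboundedUnder.of_frequently_ge (a := 0) (Frequently.of_forall fun n => by positivity))
    htendsto.isBoundedUnder_le

section Finite

variable [Finite Λ] (L : Set (List Λ))

lemma ncard_sep_length_eq_le (n : ℕ) :
    {w ∈ L | w.length = n}.ncard ≤ Nat.card Λ ^ n :=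
  (Set.ncard_le_ncard (fun _ h => h.2) (List.finite_length_eq Λ n)).trans
    (ncard_setOf_length_eq n).le

lemma ncard_sep_length_eq_le_max_pow (n : ℕ) :
    ({w ∈ L | w.length = n}.ncard : ℝ) ≤ 1 * max (Nat.card Λ : ℝ) 1 ^ n :=
  calc ({w ∈ L | w.length = n}.ncard : ℝ) ≤ (Nat.card Λ : ℝ) ^ n := by
        exact_mod_cast ncard_sep_length_eq_le L n
    _ ≤ max (Nat.card Λ : ℝ) 1 ^ n := by gcongr; exact le_max_left _ _
    _ = 1 * max (Nat.card Λ : ℝ) 1 ^ n := (one_mul _).symm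

lemma langGrowth_le_natCard [Nonempty Λ] : langGrowth L ≤ Nat.card Λ := by
  have h := langGrowth_le_of_ncard_le one_pos (le_max_right _ _) (ncard_sep_length_eq_le_max_pow L)
  rwa [max_eq_left (by exact_mod_cast Nat.one_le_iff_ne_zero.2 Nat.card_pos.ne')] at h

lemma isBoundedUnder_rpow_ncard_length_le :
    IsBoundedUnder (· ≤ ·) atTop
      fun n : ℕ => (Nat.card {w ∈ L | w.length ≤ n} : ℝ) ^ ((1 : ℝ) / n) :=
  (tendsto_rpow_one_div_of_exponential one_pos (by positivity)).isBoundedUnder_le.mono_le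
    (Eventually.of_forall
      (rpow_ncard_length_le_le zero_le_one (le_max_right _ _) (ncard_sep_length_eq_le_max_pow L)))

lemma langGrowth_nonneg : 0 ≤ langGrowth L :=
  le_limsup_of_frequently_le (Frequently.of_forall fun n => by positivity)
    (isBoundedUnder_rpow_ncard_length_le L)

variable {L}

lemma langGrowth_pow_le {N C c : ℕ} (hN : N ≠ 0) (hC : 0 < C) (hc : 1 ≤ c)
    (h : ∀ n, {w ∈ L | w.length = n}.ncard ≤ C * c ^ (n / N)) : langGrowth L ^ N ≤ c := by
  obtain ⟨ρ, hρ, hρN⟩ : ∃ ρ : ℝ, 1 ≤ ρ ∧ ρ ^ N = c :=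
    ⟨(c : ℝ) ^ (N : ℝ)⁻¹, Real.one_le_rpow (by exact_mod_cast hc) (by positivity),
      Real.rpow_inv_natCast_pow c.cast_nonneg hN⟩
  rw [← hρN]
  refine pow_le_pow_left₀ (langGrowth_nonneg L)
    (langGrowth_le_of_ncard_le (C := C) (by exact_mod_cast hC) hρ fun n => ?_) N
  calc ({w ∈ L | w.length = n}.ncard : ℝ) ≤ C * (c : ℝ) ^ (n / N) := by exact_mod_cast h n
    _ = C * ρ ^ (N * (n / N)) := by rw [pow_mul, hρN]
    _ ≤ C * ρ ^ n := by gcongr; exact Nat.mul_div_le n N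

lemma le_langGrowth_pow {M : ℝ} (hM : 0 ≤ M) {c d : ℕ} (hd : d ≠ 0)
    (h : ∀ m, M ^ m ≤ {w ∈ L | w.length ≤ c + m * d}.ncard) : M ≤ langGrowth L ^ d := by
  have hd' : (d : ℝ) ≠ 0 := Nat.cast_ne_zero.2 hd
  have hindex : Tendsto (fun m => c + m * d) atTop atTop :=
    tendsto_atTop_mono (fun m => (Nat.le_mul_of_pos_right m (Nat.pos_of_ne_zero hd)).trans
      (Nat.le_add_left _ _)) tendsto_id
  have hexp : Tendsto (fun m : ℕ => (m : ℝ) * (1 / (c + m * d : ℕ))) atTop (𝓝 (d : ℝ)⁻¹) := by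
    have h := (tendsto_natCast_div_add_atTop (c / d : ℝ)).mul_const (d : ℝ)⁻¹
    rw [one_mul] at h
    refine h.congr fun m => ?_
    push_cast
    field_simp
    ring
  have hroot : Tendsto (fun m : ℕ => M ^ ((m : ℝ) * (1 / (c + m * d : ℕ)))) atTop
      (𝓝 (M ^ (d : ℝ)⁻¹)) := tendsto_const_nhds.rpow hexp (Or.inr (by positivity))
  have hle : M ^ (d : ℝ)⁻¹ ≤ langGrowth L := by
    refine le_of_forall_lt_imp_le_of_dense fun x hx =>
      le_limsup_of_frequently_le (hindex.frequently ?_) (isBoundedUnder_rpow_ncard_length_le L)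
    refine (hroot.eventually_const_lt hx).frequently.mono fun m hm => hm.le.trans ?_
    rw [Real.rpow_mul hM, Real.rpow_natCast]
    exact Real.rpow_le_rpow (by positivity) (h m) (by positivity)
  calc M = (M ^ (d : ℝ)⁻¹) ^ d := (Real.rpow_inv_natCast_pow hM hd).symm
    _ ≤ langGrowth L ^ d := by gcongr

lemma one_le_langGrowth (h : [] ∈ L) : 1 ≤ langGrowth L := by
  rw [← pow_one (langGrowth L)]
  refine le_langGrowth_pow zero_le_one one_ne_zero (c := 0) fun m => ?_
  rw [one_pow, Nat.one_le_cast, Nat.one_le_iff_ne_zero]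
  exact Set.ncard_ne_zero_of_mem (a := []) ⟨h, Nat.zero_le _⟩
    ((List.finite_length_le Λ _).subset fun _ h => h.2)

end Finite

end Growth

/-! ### Paths in a Markov grammar -/

namespace MarkovGrammar

variable {s : ℕ} {Λ ι : Type*} (G : MarkovGrammar s Λ)

/-- The reachability preorder: some directed path, possibly empty, leads from `a` to `b`. -/
def Reaches (a b : Fin s) : Prop := ∃ w, G.path a w b

/-- The number of states that can be reached from `a`. It never grows along paths and is the
measure that bounds how often a path can leave a strongly connected component. -/
noncomputable def reachCount (a : Fin s) : ℕ := {b | G.Reaches a b}.ncard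

/-- The set of words of length `n` read along paths from `a` to `b`. -/
def wordsBetween (n : ℕ) (a b : Fin s) : Set (List Λ) := {w | w.length = n ∧ G.path a w b}

/-- The set of words of length `n` read along paths that start at `a`. -/
def wordsFrom (n : ℕ) (a : Fin s) : Set (List Λ) := {w | w.length = n ∧ ∃ b, G.path a w b}

/-- The words of the language generated by `G` that contain none of the forbidden words `F i`
as a subword. -/
def languageAvoiding (F : ι → List Λ) : Set (List Λ) := {w ∈ G.language | ∀ i, ¬ F i <:+: w}

variable {G}

lemma path_append {a b : Fin s} {w w' : List Λ} :
    G.path a (w ++ w') b ↔ ∃ t, G.path a w t ∧ G.path t w' b := by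
  induction w generalizing a with
  | nil => simp [path]
  | cons c w ih =>
    simp only [List.cons_append, path, ih]
    tauto

lemma path_flatten {a : Fin s} {l : List (List Λ)} (h : ∀ w ∈ l, G.path a w a) :
    G.path a l.flatten a := by
  induction l with
  | nil => rfl
  | cons w l ih =>
    rw [List.forall_mem_cons] at h
    exact path_append.2 ⟨a, h.1, ih h.2⟩

lemma path_concatBlocks {a b : Fin s} {u : List Λ} {m : ℕ} {w : Fin m → List Λ}
    (hw : ∀ i, G.path a (w i) b) (hu : G.path b u a) : G.path a (concatBlocks u w) a :=
  path_flatten (List.forall_mem_ofFn_iff.2 fun i => path_append.2 ⟨b, hw i, hu⟩)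

lemma Reaches.refl (a : Fin s) : G.Reaches a a := ⟨[], rfl⟩

lemma Reaches.trans {a b c : Fin s} : G.Reaches a b → G.Reaches b c → G.Reaches a c := by
  rintro ⟨w, hw⟩ ⟨w', hw'⟩
  exact ⟨w ++ w', path_append.2 ⟨b, hw, hw'⟩⟩

lemma path.exists_shorter {a b : Fin s} {w : List Λ} (hw : G.path a w b) (hs : s ≤ w.length) :
    ∃ w', G.path a w' b ∧ w'.length < w.length := by
  have hsplit (i : Fin (w.length + 1)) : ∃ t, G.path a (w.take i) t ∧ G.path t (w.drop i) b :=
    path_append.1 (by rwa [List.take_append_drop])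
  choose state hprefix hsuffix using hsplit
  obtain ⟨i, j, hij, hstate⟩ := Fintype.exists_ne_map_eq_of_card_lt state (by simp; omega)
  wlog hlt : i < j generalizing i j
  · exact this j i hij.symm hstate.symm (lt_of_le_of_ne (not_lt.1 hlt) hij.symm)
  refine ⟨w.take i ++ w.drop j, path_append.2 ⟨state i, hprefix i, hstate ▸ hsuffix j⟩, ?_⟩
  rw [List.length_append, List.length_take, List.length_drop]
  omega

lemma Reaches.exists_path_length_lt {a b : Fin s} (h : G.Reaches a b) :
    ∃ w, G.path a w b ∧ w.length < s := by
  obtain ⟨w, hw⟩ := exists_minimalFor_of_wellFoundedLT (G.path a · b) List.length h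
  refine ⟨w, hw.prop, ?_⟩
  by_contra! hs
  obtain ⟨w', hw', hlt⟩ := hw.prop.exists_shorter hs
  exact hw.not_prop_of_lt hlt hw'

lemma Reaches.reachCount_le {a b : Fin s} (h : G.Reaches a b) : G.reachCount b ≤ G.reachCount a :=
  Set.ncard_le_ncard (fun _ hc => h.trans hc) (Set.toFinite _)

lemma Reaches.reachCount_lt {a b : Fin s} (h : G.Reaches a b) (h' : ¬ G.Reaches b a) :
    G.reachCount b < G.reachCount a :=
  Set.ncard_lt_ncard ⟨fun _ hc => h.trans hc, fun hsub => h' (hsub (Reaches.refl a))⟩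
    (Set.toFinite _)

/-! ### The upper bound for the growth rate of the language -/

/-- Leaving the component of `a` costs a factor `K` but decreases `reachCount`; staying in it costs
a factor `B`. -/
lemma ncard_wordsBetween_mul_pow_le {N B K : ℕ} (hB : 1 ≤ B) {a b : Fin s}
    (hK₁ : 1 ≤ K) (hK : (G.wordsBetween N a b).ncard ≤ K)
    (hab : G.Reaches a b) (h : G.Reaches b a → (G.wordsBetween N a b).ncard ≤ B) :
    (G.wordsBetween N a b).ncard * K ^ (G.reachCount b + 1) ≤ B * K ^ (G.reachCount a + 1) := by
  by_cases hba : G.Reaches b a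
  · gcongr
    exacts [h hba, hab.reachCount_le]
  · calc (G.wordsBetween N a b).ncard * K ^ (G.reachCount b + 1)
        ≤ K * K ^ (G.reachCount b + 1) := by gcongr
      _ = K ^ (G.reachCount b + 1 + 1) := (pow_succ' _ _).symm
      _ ≤ K ^ (G.reachCount a + 1) := by
        gcongr
        exact hab.reachCount_lt hba
      _ ≤ B * K ^ (G.reachCount a + 1) := Nat.le_mul_of_pos_left _ hB

section Finite

variable [Finite Λ]

lemma finite_wordsBetween (n : ℕ) (a b : Fin s) : (G.wordsBetween n a b).Finite :=
  (List.finite_length_eq Λ n).subset fun _ h => h.1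

lemma finite_wordsFrom (n : ℕ) (a : Fin s) : (G.wordsFrom n a).Finite :=
  (List.finite_length_eq Λ n).subset fun _ h => h.1

lemma ncard_wordsFrom_add_le (N n : ℕ) (a : Fin s) :
    (G.wordsFrom (N + n) a).ncard ≤
      ∑ b, (G.wordsBetween N a b).ncard * (G.wordsFrom n b).ncard := by
  have hsub : G.wordsFrom (N + n) a ⊆
      ⋃ b, (fun q => q.1 ++ q.2) '' (G.wordsBetween N a b ×ˢ G.wordsFrom n b) := by
    rintro w ⟨hlen, c, hw⟩
    rw [← List.take_append_drop N w] at hw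
    obtain ⟨b, hleft, hright⟩ := path_append.1 hw
    exact Set.mem_iUnion.2 ⟨b, (w.take N, w.drop N),
      ⟨⟨by simp [hlen], hleft⟩, by simp [hlen], c, hright⟩, List.take_append_drop N w⟩
  have hfin (b : Fin s) : (G.wordsBetween N a b ×ˢ G.wordsFrom n b).Finite :=
    (finite_wordsBetween N a b).prod (finite_wordsFrom n b)
  calc _ ≤ _ := Set.ncard_le_ncard hsub (Set.finite_iUnion fun b => (hfin b).image _)
    _ ≤ _ := Set.ncard_iUnion_le_of_fintype _
    _ ≤ _ := Finset.sum_le_sum fun b _ => (Set.ncard_image_le (hfin b)).trans Set.ncard_prod.le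

lemma ncard_wordsFrom_mul_add_le {N B K r : ℕ} (hB : 1 ≤ B) (hr : r ≤ N)
    (hK : ∀ n ≤ N, ∀ a, (G.wordsFrom n a).ncard ≤ K) (m : ℕ) {a : Fin s}
    (h : ∀ c d, G.Reaches a c → G.Reaches c d → G.Reaches d c →
      (G.wordsBetween N c d).ncard ≤ B) :
    (G.wordsFrom (m * N + r) a).ncard ≤ K ^ (G.reachCount a + 1) * (s * B) ^ m := by
  have hK₁ : 1 ≤ K := ((Set.ncard_pos (finite_wordsFrom 0 a)).2 ⟨[], rfl, a, rfl⟩).trans_le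
    (hK 0 N.zero_le a)
  induction m generalizing a with
  | zero => simpa using (hK r hr a).trans (Nat.le_self_pow (Nat.succ_ne_zero _) K)
  | succ m ih =>
    have hsub (b : Fin s) : G.wordsBetween N a b ⊆ G.wordsFrom N a := fun _ hw => ⟨hw.1, b, hw.2⟩
    have hterm (b : Fin s) : (G.wordsBetween N a b).ncard * (G.wordsFrom (m * N + r) b).ncard ≤
        B * K ^ (G.reachCount a + 1) * (s * B) ^ m := by
      by_cases hab : G.Reaches a b
      · calc _ ≤ (G.wordsBetween N a b).ncard * (K ^ (G.reachCount b + 1) * (s * B) ^ m) := by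
              gcongr
              exact ih fun c d hbc => h c d (hab.trans hbc)
          _ = (G.wordsBetween N a b).ncard * K ^ (G.reachCount b + 1) * (s * B) ^ m := by ring
          _ ≤ _ := by
              gcongr ?_ * _
              exact ncard_wordsBetween_mul_pow_le hB hK₁ ((Set.ncard_le_ncard (hsub b)
                (finite_wordsFrom N a)).trans (hK N le_rfl a)) hab (h a b (Reaches.refl a) hab)
      · have hempty : G.wordsBetween N a b = ∅ :=
          Set.eq_empty_of_forall_notMem fun w hw => hab ⟨w, hw.2⟩
        simp [hempty]
    calc (G.wordsFrom ((m + 1) * N + r) a).ncard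
        = (G.wordsFrom (N + (m * N + r)) a).ncard := by congr 2; ring
      _ ≤ ∑ b, (G.wordsBetween N a b).ncard * (G.wordsFrom (m * N + r) b).ncard :=
        ncard_wordsFrom_add_le N _ a
      _ ≤ ∑ _b : Fin s, B * K ^ (G.reachCount a + 1) * (s * B) ^ m :=
        Finset.sum_le_sum fun b _ => hterm b
      _ = K ^ (G.reachCount a + 1) * (s * B) ^ (m + 1) := by
        rw [Finset.sum_const, Finset.card_univ, Fintype.card_fin, smul_eq_mul]
        ring

lemma langGrowth_language_pow_le {N B : ℕ} (hN : N ≠ 0) (hB : 1 ≤ B)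
    (h : ∀ a b, G.Reaches G.init a → G.Reaches a b → G.Reaches b a →
      (G.wordsBetween N a b).ncard ≤ B) : langGrowth G.language ^ N ≤ s * B := by
  have hs : 1 ≤ s := G.init.pos
  have hK (n : ℕ) (hn : n ≤ N) (a : Fin s) :
      (G.wordsFrom n a).ncard ≤ {w : List Λ | w.length ≤ N}.ncard :=
    Set.ncard_le_ncard (fun _ hw => hw.1.trans_le hn) (List.finite_length_le Λ N)
  have hK₀ : 0 < {w : List Λ | w.length ≤ N}.ncard :=
    (Set.ncard_pos (List.finite_length_le Λ N)).2 ⟨[], N.zero_le⟩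
  exact_mod_cast langGrowth_pow_le (L := G.language) (c := s * B) hN
    (pow_pos hK₀ (G.reachCount G.init + 1)) (Nat.mul_pos hs hB) fun n => by
      have hn :=
        ncard_wordsFrom_mul_add_le hB (Nat.mod_lt n (Nat.pos_of_ne_zero hN)).le hK (n / N) h
      rw [Nat.div_add_mod'] at hn
      rwa [show {w ∈ G.language | w.length = n} = G.wordsFrom n G.init from
        Set.ext fun _ => and_comm]

variable (G) in
lemma exists_langGrowth_language_pow_le {N : ℕ} (hN : N ≠ 0) :
    ∃ a b, G.Reaches G.init a ∧ G.Reaches b a ∧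
      langGrowth G.language ^ N ≤ s * max ((G.wordsBetween N a b).ncard : ℝ) 1 := by
  obtain ⟨⟨a, b⟩, ⟨ha, -, hba⟩, hmax⟩ := Set.exists_max_image
    {q : Fin s × Fin s | G.Reaches G.init q.1 ∧ G.Reaches q.1 q.2 ∧ G.Reaches q.2 q.1}
    (fun q => (G.wordsBetween N q.1 q.2).ncard) (Set.toFinite _)
    ⟨(G.init, G.init), Reaches.refl _, Reaches.refl _, Reaches.refl _⟩
  refine ⟨a, b, ha, hba, ?_⟩
  exact_mod_cast langGrowth_language_pow_le hN (le_max_right _ 1) fun c d hc hcd hdc =>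
    (hmax (c, d) ⟨hc, hcd, hdc⟩).trans (le_max_left _ 1)

end Finite

/-! ### The lower bound for the growth rate of the language with forbidden words -/

variable {F : ι → List Λ} {N : ℕ}

lemma nil_mem_languageAvoiding (hF : ∀ i, F i ≠ []) : [] ∈ G.languageAvoiding F :=
  ⟨⟨G.init, rfl⟩, fun i h => hF i (List.infix_nil.1 h)⟩

lemma append_concatBlocks_mem_languageAvoiding (hN : 0 < N) (hF : ∀ i, (F i).length = 4 * N)
    {a b : Fin s} {x u : List Λ} (hx : G.path G.init x a) (hxN : x.length ≤ 2 * N)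
    (hu : G.path b u a) (huN : u.length ≤ N) {m : ℕ} {w : Fin m → List Λ}
    (hw : ∀ j, w j ∈ {w ∈ G.wordsBetween N a b | ∀ i, ¬ w <:+: F i}) :
    x ++ concatBlocks u w ∈ G.languageAvoiding F := by
  refine ⟨⟨a, path_append.2 ⟨a, hx, path_concatBlocks (fun j => (hw j).1.2) hu⟩⟩, fun i hi => ?_⟩
  obtain ⟨j, hj⟩ := exists_infix_of_infix_append_concatBlocks hN (hF i).ge hxN huN
    (fun j => (hw j).1.1) hi
  exact (hw j).2 i hj

variable [Finite Λ]

lemma ncard_wordsBetween_le_ncard_add [Finite ι] (hN : N ≠ 0) (hF : ∀ i, (F i).length = 4 * N)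
    (a b : Fin s) :
    (G.wordsBetween N a b).ncard ≤
      {w ∈ G.wordsBetween N a b | ∀ i, ¬ w <:+: F i}.ncard + 4 * N * Nat.card ι := by
  have hsub : G.wordsBetween N a b ⊆ {w ∈ G.wordsBetween N a b | ∀ i, ¬ w <:+: F i} ∪
      {w | w.length = N ∧ ∃ i, w <:+: F i} := by
    intro w hw
    by_cases h : ∃ i, w <:+: F i
    · exact Or.inr ⟨hw.1, h⟩
    · exact Or.inl ⟨hw, not_exists.1 h⟩
  calc _ ≤ _ := Set.ncard_le_ncard hsub (((finite_wordsBetween N a b).sep _).union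
        ((List.finite_length_eq Λ N).subset fun _ h => h.1))
    _ ≤ _ := Set.ncard_union_le _ _
    _ ≤ _ := Nat.add_le_add_left (ncard_exists_infix_length_eq_le hN hF) _

lemma ncard_avoiding_le_langGrowth_pow (hN : 0 < N) (hF : ∀ i, (F i).length = 4 * N)
    {a b : Fin s} {x u : List Λ} (hx : G.path G.init x a) (hxN : x.length ≤ 2 * N)
    (hu : G.path b u a) (huN : u.length ≤ N) :
    ({w ∈ G.wordsBetween N a b | ∀ i, ¬ w <:+: F i}.ncard : ℝ) ≤
      langGrowth (G.languageAvoiding F) ^ (N + u.length) := by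
  set S := {w ∈ G.wordsBetween N a b | ∀ i, ¬ w <:+: F i}
  refine le_langGrowth_pow (Nat.cast_nonneg _) (c := x.length) (by omega) fun m => ?_
  set T := {w ∈ G.languageAvoiding F | w.length ≤ x.length + m * (N + u.length)}
  have : Finite T := (List.finite_length_le Λ _).subset fun _ h => h.2
  have hmem (w : Fin m → S) : x ++ concatBlocks u (fun i => (w i : List Λ)) ∈ T :=
    ⟨append_concatBlocks_mem_languageAvoiding hN hF hx hxN hu huN fun i => (w i).2, by
      rw [List.length_append, length_concatBlocks u fun i => (w i).2.1.1]⟩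
  have hinj : Function.Injective fun w : Fin m → S => (⟨_, hmem w⟩ : T) := fun w w' h =>
    funext fun i => Subtype.ext <| congrFun
      (concatBlocks_injOn u m N (fun i => (w i).2.1.1) (fun i => (w' i).2.1.1)
        (List.append_cancel_left (congrArg Subtype.val h))) i
  have hcard := Nat.card_le_card_of_injective _ hinj
  rw [Nat.card_fun, Nat.card_fin] at hcard
  exact_mod_cast hcard

lemma ncard_wordsBetween_le_add_langGrowth_pow [Finite ι] [Nonempty Λ] (hsN : s ≤ N)
    (hF : ∀ i, (F i).length = 4 * N) {a b : Fin s} (ha : G.Reaches G.init a)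
    (hba : G.Reaches b a) :
    ((G.wordsBetween N a b).ncard : ℝ) ≤
      langGrowth (G.languageAvoiding F) ^ N * (Nat.card Λ : ℝ) ^ s + 4 * N * Nat.card ι := by
  have hs : 0 < s := G.init.pos
  obtain ⟨x, hx, hxs⟩ := ha.exists_path_length_lt
  obtain ⟨u, hu, hus⟩ := hba.exists_path_length_lt
  set v := langGrowth (G.languageAvoiding F)
  have hv : 0 ≤ v := langGrowth_nonneg _
  have hk : 1 ≤ (Nat.card Λ : ℝ) := by exact_mod_cast Nat.card_pos (α := Λ)
  calc ((G.wordsBetween N a b).ncard : ℝ)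
      ≤ {w ∈ G.wordsBetween N a b | ∀ i, ¬ w <:+: F i}.ncard + 4 * N * Nat.card ι := by
        exact_mod_cast ncard_wordsBetween_le_ncard_add (by omega) hF a b
    _ ≤ v ^ (N + u.length) + 4 * N * Nat.card ι := by
        gcongr
        exact ncard_avoiding_le_langGrowth_pow (by omega) hF hx (by omega) hu (by omega)
    _ = v ^ N * v ^ u.length + 4 * N * Nat.card ι := by rw [pow_add]
    _ ≤ v ^ N * (Nat.card Λ : ℝ) ^ u.length + 4 * N * Nat.card ι := by
        gcongr
        exact langGrowth_le_natCard _
    _ ≤ v ^ N * (Nat.card Λ : ℝ) ^ s + 4 * N * Nat.card ι := by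
        gcongr

end MarkovGrammar

open MarkovGrammar in
theorem langGrowth_forbidden_words_lower_bound_general {s : ℕ} {Λ ι : Type*} [Finite Λ] [Finite ι]
    (G : MarkovGrammar s Λ) {N : ℕ} (hsN : s ≤ N) (F : ι → List Λ)
    (hF : ∀ i, (F i).length = 4 * N) :
    (langGrowth G.language ^ N / s - 4 * N * Nat.card ι) / (Nat.card Λ : ℝ) ^ s ≤
      langGrowth {w ∈ G.language | ∀ i, ¬ F i <:+: w} ^ N := by
  change _ ≤ langGrowth (G.languageAvoiding F) ^ N
  have hs : 0 < s := G.init.pos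
  rcases isEmpty_or_nonempty Λ with hΛ | hΛ
  · -- There is nothing to show: division by `0 ^ s = 0` gives `0`.
    rw [Nat.card_of_isEmpty (α := Λ), Nat.cast_zero, zero_pow hs.ne', div_zero]
    exact pow_nonneg (langGrowth_nonneg _) N
  obtain ⟨a, b, ha, hba, hupper⟩ := G.exists_langGrowth_language_pow_le (N := N) (by omega)
  have hlower := ncard_wordsBetween_le_add_langGrowth_pow hsN hF ha hba
  have hnil : [] ∈ G.languageAvoiding F := nil_mem_languageAvoiding fun i =>
    List.ne_nil_of_length_pos (by rw [hF]; omega)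
  have hk : 1 ≤ (Nat.card Λ : ℝ) := by exact_mod_cast Nat.card_pos (α := Λ)
  have hone : 1 ≤ langGrowth (G.languageAvoiding F) ^ N * (Nat.card Λ : ℝ) ^ s :=
    one_le_mul_of_one_le_of_one_le (one_le_pow₀ (one_le_langGrowth hnil)) (one_le_pow₀ hk)
  rw [div_le_iff₀ (by positivity), sub_le_iff_le_add, div_le_iff₀' (by positivity)]
  refine hupper.trans ?_
  gcongr
  exact max_le hlower (le_add_of_le_of_nonneg hone (by positivity))

/-- Forbidding `p` long forbidden words of length `4N` in the language of a Markov
grammar with `s ≤ N` states and `k` labels decreases the growth rate `v` to some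
`v_new` with `v_new ^ N ≥ (v ^ N / s² - 4 N p) / k ^ s`. -/
theorem langGrowth_forbidden_words_lower_bound {s k : ℕ} (G : MarkovGrammar s (Fin k))
    (hdet : G.Deterministic) (hreach : G.Reachable)
    (N p : ℕ) (hsN : s ≤ N) (F : Fin p → List (Fin k)) (hF : ∀ i, (F i).length = 4 * N) :
    ((langGrowth G.language) ^ N / (s : ℝ) ^ 2 - 4 * (N : ℝ) * p) / (k : ℝ) ^ s ≤
      (langGrowth {w ∈ G.language | ∀ i, ¬ F i <:+: w}) ^ N := by
  have hs : 0 < s := G.init.pos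
  refine le_trans ?_ (by simpa using langGrowth_forbidden_words_lower_bound_general G hsN F hF)
  gcongr
  · exact pow_nonneg (langGrowth_nonneg _) N
  · exact_mod_cast Nat.le_self_pow two_ne_zero s
end
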